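/- Monotone composition theorem: For every η > 0 there exist c ∈ ℕ and κ > 0 such that the following holds. Let f : {0,1}^m → {0,1} and g : {0,1}^n → {0,1} be non-constant monotone functions. Suppose there exist a search problem S ⊆ {0,1}^ℓ × 𝒪 and a gadget gd : {0,1}^t × {0,1}^t → {0,1} with t ≥ c·log₂(m·ℓ) and disc(gd) ≤ 2^{−η·t}, such that the lifted search problem S◇gd reduces to mKW_g. Then log₂ L(mKW_f ◇ mKW_g) ≥ log₂ L(mKW_f) + κ·Q(S)·t. -/

import Mathlib

open Classical

noncomputable section

/-! ### Deterministic communication protocols -/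

/-- A deterministic communication protocol: a finite binary protocol tree whose
leaves are labeled by outputs in `O`.  At a `nodeA` vertex Alice sends a bit
(computed from her input), at a `nodeB` vertex Bob sends a bit. -/
inductive Protocol (X Y O : Type) : Type where
  | leaf : O → Protocol X Y O
  | nodeA : (X → Bool) → Protocol X Y O → Protocol X Y O → Protocol X Y O
  | nodeB : (Y → Bool) → Protocol X Y O → Protocol X Y O → Protocol X Y O

namespace Protocol

variable {X Y O : Type}

/-- The output of the protocol on an input pair. -/
def run : Protocol X Y O → X → Y → O
  | leaf o, _, _ => o
  | nodeA h p0 p1, x, y => if h x then run p1 x y else run p0 x y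
  | nodeB h p0 p1, x, y => if h y then run p1 x y else run p0 x y

/-- Depth (communication complexity) of a protocol tree. -/
def depth : Protocol X Y O → ℕ
  | leaf _ => 0
  | nodeA _ p0 p1 => max (depth p0) (depth p1) + 1
  | nodeB _ p0 p1 => max (depth p0) (depth p1) + 1

/-- Number of leaves (protocol size). -/
def leaves : Protocol X Y O → ℕ
  | leaf _ => 1
  | nodeA _ p0 p1 => leaves p0 + leaves p1
  | nodeB _ p0 p1 => leaves p0 + leaves p1

/-- `followsA p π x` : Alice's input `x` is consistent with the partial transcript `π`,
i.e. `x` belongs to the Alice-side `𝒳_π` of the rectangle associated with the vertex `π`. -/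
def followsA : Protocol X Y O → List Bool → X → Prop
  | _, [], _ => True
  | leaf _, _ :: _, _ => False
  | nodeA h p0 p1, b :: rest, x =>
      h x = b ∧ (if b then followsA p1 rest x else followsA p0 rest x)
  | nodeB _ p0 p1, b :: rest, x =>
      if b then followsA p1 rest x else followsA p0 rest x

/-- `followsB p π y` : Bob's input `y` is consistent with the partial transcript `π`,
i.e. `y` belongs to the Bob-side `𝒴_π` of the rectangle associated with the vertex `π`. -/
def followsB : Protocol X Y O → List Bool → Y → Prop
  | _, [], _ => True
  | leaf _, _ :: _, _ => False
  | nodeA _ p0 p1, b :: rest, y =>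
      if b then followsB p1 rest y else followsB p0 rest y
  | nodeB h p0 p1, b :: rest, y =>
      h y = b ∧ (if b then followsB p1 rest y else followsB p0 rest y)

/-- The subtree of the protocol reached by following a partial transcript. -/
def subtree : Protocol X Y O → List Bool → Option (Protocol X Y O)
  | p, [] => some p
  | leaf _, _ :: _ => none
  | nodeA _ p0 p1, b :: rest => if b then subtree p1 rest else subtree p0 rest
  | nodeB _ p0 p1, b :: rest => if b then subtree p1 rest else subtree p0 rest

/-- `π` is a (partial or full) transcript of the protocol, i.e. a vertex of the protocol tree. -/
def IsTranscript (p : Protocol X Y O) (π : List Bool) : Prop :=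
  (subtree p π).isSome = true

/-- `π` is a full transcript of the protocol, i.e. a root-to-leaf path. -/
def IsFullTranscript (p : Protocol X Y O) (π : List Bool) : Prop :=
  ∃ o : O, subtree p π = some (leaf o)

end Protocol

/-- A protocol solves a communication problem `S` if on every input pair it
outputs a valid output. -/
def Solves {X Y O : Type} (p : Protocol X Y O) (S : X → Y → O → Prop) : Prop :=
  ∀ x y, S x y (p.run x y)

/-- `L(S)`: minimal number of leaves of a protocol solving `S`. -/
def Lsize {X Y O : Type} (S : X → Y → O → Prop) : ℕ :=
  sInf {k | ∃ p : Protocol X Y O, Solves p S ∧ p.leaves = k}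

/-- `CC(S)`: the deterministic communication complexity (minimal depth) of `S`. -/
def CC {X Y O : Type} (S : X → Y → O → Prop) : ℕ :=
  sInf {k | ∃ p : Protocol X Y O, Solves p S ∧ p.depth = k}

/-! ### Decision trees and query complexity -/

inductive DTree (ι O : Type) : Type where
  | leaf : O → DTree ι O
  | node : ι → DTree ι O → DTree ι O → DTree ι O

namespace DTree

variable {ι O : Type}

def run : DTree ι O → (ι → Bool) → O
  | leaf o, _ => o
  | node i t0 t1, z => if z i then run t1 z else run t0 z

def depth : DTree ι O → ℕ
  | leaf _ => 0
  | node _ t0 t1 => max (depth t0) (depth t1) + 1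

end DTree

def DSolves {ι O : Type} (T : DTree ι O) (S : (ι → Bool) → O → Prop) : Prop :=
  ∀ z, S z (T.run z)

/-- `Q(S)`: the deterministic query complexity of the search problem `S`. -/
def Qcomplexity {ι O : Type} (S : (ι → Bool) → O → Prop) : ℕ :=
  sInf {k | ∃ T : DTree ι O, DSolves T S ∧ T.depth = k}

/-! ### Monotone Karchmer–Wigderson relations -/

/-- The monotone KW relation of a rectangle `A × B`: find `i` with `x i > y i`. -/
def mKWrect {ι : Type} (A B : Set (ι → Bool)) : ↥A → ↥B → ι → Prop :=
  fun x y i => x.val i = true ∧ y.val i = false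

/-- `mL(A × B)`: the monotone formula complexity of the rectangle `A × B`. -/
def mL {ι : Type} (A B : Set (ι → Bool)) : ℕ := Lsize (mKWrect A B)

/-- The monotone KW relation of a monotone function `f`. -/
def mKW {ι : Type} (f : (ι → Bool) → Bool) :
    {x : ι → Bool // f x = true} → {y : ι → Bool // f y = false} → ι → Prop :=
  fun x y i => x.val i = true ∧ y.val i = false

/-! ### Lifted search problems, discrepancy, reductions -/

/-- The lifted search problem `S ◇ gd`. -/
def liftSP {ι Λ O : Type} (S : (ι → Bool) → O → Prop) (gd : Λ → Λ → Bool) :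
    (ι → Λ) → (ι → Λ) → O → Prop :=
  fun x y o => S (fun i => gd (x i) (y i)) o

/-- The discrepancy of a gadget `gd : {0,1}^t × {0,1}^t → {0,1}`. -/
def disc {t : ℕ} (gd : (Fin t → Bool) → (Fin t → Bool) → Bool) : ℝ :=
  sSup {r : ℝ | ∃ A B : Finset (Fin t → Bool),
    r = |((((A ×ˢ B).filter fun uv => gd uv.1 uv.2 = false).card : ℝ) -
          (((A ×ˢ B).filter fun uv => gd uv.1 uv.2 = true).card : ℝ))| /
        ((2 ^ t : ℝ) * (2 ^ t : ℝ))}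

/-- A (rectangular) reduction between communication problems. -/
def Reduces {X Y O X' Y' O' : Type}
    (S : X → Y → O → Prop) (S' : X' → Y' → O' → Prop) : Prop :=
  ∃ (RA : X → X') (RB : Y → Y') (Rout : O' → O),
    ∀ x y o', S' (RA x) (RB y) o' → S x y (Rout o')

/-- An injective reduction between communication problems. -/
def ReducesInj {X Y O X' Y' O' : Type}
    (S : X → Y → O → Prop) (S' : X' → Y' → O' → Prop) : Prop :=
  ∃ (RA : X → X') (RB : Y → Y') (Rout : O' → O),
    Function.Injective RA ∧ Function.Injective RB ∧
    ∀ x y o', S' (RA x) (RB y) o' → S x y (Rout o')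

/-! ### Compositions -/

/-- `mKW_f ◇ mKW_g := mKW_{f ◇ g}` : Alice gets `X ∈ (f◇g)⁻¹(1)`, Bob gets
`Y ∈ (f◇g)⁻¹(0)`, and they must find an entry `(i,j)` with `X i j > Y i j`. -/
def diamondKW {m : ℕ} {ι : Type} (f : (Fin m → Bool) → Bool) (g : (ι → Bool) → Bool) :
    {X : Fin m → ι → Bool // f (fun i => g (X i)) = true} →
    {Y : Fin m → ι → Bool // f (fun i => g (Y i)) = false} →
    (Fin m × ι) → Prop :=
  fun X Y e => X.val e.1 e.2 = true ∧ Y.val e.1 e.2 = false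

/-- `mKW_f ⊛ mKW_g` : same inputs as `mKW_f ◇ mKW_g`, but valid outputs are entries
`(i,j)` with `a_i > b_i` and `X i j > Y i j`, where `a_i = g(X_i)`, `b_i = g(Y_i)`. -/
def starKW {m : ℕ} {ι : Type} (f : (Fin m → Bool) → Bool) (g : (ι → Bool) → Bool) :
    {X : Fin m → ι → Bool // f (fun i => g (X i)) = true} →
    {Y : Fin m → ι → Bool // f (fun i => g (Y i)) = false} →
    (Fin m × ι) → Prop :=
  fun X Y e => g (X.val e.1) = true ∧ g (Y.val e.1) = false ∧
    X.val e.1 e.2 = true ∧ Y.val e.1 e.2 = false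

/-- `mKW_f ⊛ (S ◇ gd)` : Alice gets `X ∈ Λ^{m×ℓ}` and `a ∈ f⁻¹(1)`, Bob gets
`Y ∈ Λ^{m×ℓ}` and `b ∈ f⁻¹(0)`; valid outputs are pairs `(i,o)` with `a_i > b_i`
and `o` a valid output of `S ◇ gd` on the rows `(X_i, Y_i)`. -/
def starLift {m ℓ : ℕ} {Λ O : Type} (f : (Fin m → Bool) → Bool)
    (S : (Fin ℓ → Bool) → O → Prop) (gd : Λ → Λ → Bool) :
    ((Fin m → Fin ℓ → Λ) × {a : Fin m → Bool // f a = true}) →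
    ((Fin m → Fin ℓ → Λ) × {b : Fin m → Bool // f b = false}) →
    (Fin m × O) → Prop :=
  fun Xa Yb io =>
    Xa.2.val io.1 = true ∧ Yb.2.val io.1 = false ∧
      liftSP S gd (Xa.1 io.1) (Yb.1 io.1) io.2

/-! ### Live transcripts -/

/-- `𝒜_{π,W}` : the vectors `a ∈ f⁻¹(1)` such that `(W,a)` is consistent with `π`. -/
def Aset {m ℓ : ℕ} {Λ O : Type} (f : (Fin m → Bool) → Bool)
    (Pr : Protocol ((Fin m → Fin ℓ → Λ) × {a : Fin m → Bool // f a = true})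
                   ((Fin m → Fin ℓ → Λ) × {b : Fin m → Bool // f b = false}) (Fin m × O))
    (π : List Bool) (W : Fin m → Fin ℓ → Λ) : Set (Fin m → Bool) :=
  {a | ∃ h : f a = true, Protocol.followsA Pr π (W, ⟨a, h⟩)}

/-- `ℬ_{π,W}` : the vectors `b ∈ f⁻¹(0)` such that `(W,b)` is consistent with `π`. -/
def Bset {m ℓ : ℕ} {Λ O : Type} (f : (Fin m → Bool) → Bool)
    (Pr : Protocol ((Fin m → Fin ℓ → Λ) × {a : Fin m → Bool // f a = true})
                   ((Fin m → Fin ℓ → Λ) × {b : Fin m → Bool // f b = false}) (Fin m × O))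
    (π : List Bool) (W : Fin m → Fin ℓ → Λ) : Set (Fin m → Bool) :=
  {b | ∃ h : f b = false, Protocol.followsB Pr π (W, ⟨b, h⟩)}

/-- `γ(π)` : the average over uniform `W ∈ Λ^{m×ℓ}` of `mL(𝒜_{π,W} × ℬ_{π,W})`. -/
def gammaM {m ℓ : ℕ} {Λ O : Type} [Fintype Λ] [DecidableEq Λ] (f : (Fin m → Bool) → Bool)
    (Pr : Protocol ((Fin m → Fin ℓ → Λ) × {a : Fin m → Bool // f a = true})
                   ((Fin m → Fin ℓ → Λ) × {b : Fin m → Bool // f b = false}) (Fin m × O))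
    (π : List Bool) : ℝ :=
  (∑ W : Fin m → Fin ℓ → Λ, (mL (Aset f Pr π W) (Bset f Pr π W) : ℝ)) /
    (Fintype.card (Fin m → Fin ℓ → Λ) : ℝ)

/-- A transcript is live (alive) if it is a vertex of the protocol tree and `γ(π) ≥ 4m²`. -/
def LiveT {m ℓ : ℕ} {Λ O : Type} [Fintype Λ] [DecidableEq Λ] (f : (Fin m → Bool) → Bool)
    (Pr : Protocol ((Fin m → Fin ℓ → Λ) × {a : Fin m → Bool // f a = true})
                   ((Fin m → Fin ℓ → Λ) × {b : Fin m → Bool // f b = false}) (Fin m × O))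
    (π : List Bool) : Prop :=
  Protocol.IsTranscript Pr π ∧ 4 * (m : ℝ) ^ 2 ≤ gammaM f Pr π

/-! ### Average degree -/

/-- Projection of a set of strings to the coordinates in `J`. -/
def projSet {N Λ : Type} (W : Set (N → Λ)) (J : Set N) : Set (↥J → Λ) :=
  (fun w (j : ↥J) => w j.val) '' W

/-- Relative average degree: `rAvgDeg_I(W) = (|W| / |W|_{N−I}|) / |Λ|^{|I|}`. -/
def rAvgDeg {N Λ : Type} [Fintype Λ] (W : Set (N → Λ)) (I : Set N) : ℝ :=
  ((W.ncard : ℝ) / ((projSet W Iᶜ).ncard : ℝ)) / ((Fintype.card Λ : ℝ) ^ I.ncard)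

/-- View a set of `m × ℓ` matrices as a set of strings indexed by `Fin m × Fin ℓ`. -/
def matSet {m ℓ : ℕ} {Λ : Type} (WW : Set (Fin m → Fin ℓ → Λ)) : Set (Fin m × Fin ℓ → Λ) :=
  (fun W p => W p.1 p.2) '' WW

/-! ### Hard collections -/

/-- A transcript `π` supports the collection `(𝒲, a^W, b^W)` if for every `W ∈ 𝒲`,
`(W, a^W) ∈ 𝒳_π` and `(W, b^W) ∈ 𝒴_π`. -/
def SupportsCollection {m ℓ : ℕ} {Λ O : Type} (f : (Fin m → Bool) → Bool)
    (Pr : Protocol ((Fin m → Fin ℓ → Λ) × {a : Fin m → Bool // f a = true})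
                   ((Fin m → Fin ℓ → Λ) × {b : Fin m → Bool // f b = false}) (Fin m × O))
    (π : List Bool) (WW : Set (Fin m → Fin ℓ → Λ))
    (aW bW : (Fin m → Fin ℓ → Λ) → (Fin m → Bool)) : Prop :=
  ∀ W ∈ WW, aW W ∈ Aset f Pr π W ∧ bW W ∈ Bset f Pr π W

/-- The collection `(𝒲, a^W, b^W)` is hard: there is a set `R` of revealed rows such that
(i) every set `I` of unrevealed rows has relative average degree at least `4^{-|I|}` in the
restriction of `𝒲` to the unrevealed rows, and (ii) `a^W|_R ≤ b^{W'}|_R` for all `W, W' ∈ 𝒲`. -/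
def HardCollection {m ℓ : ℕ} {Λ : Type} [Fintype Λ] (f : (Fin m → Bool) → Bool)
    (WW : Set (Fin m → Fin ℓ → Λ))
    (aW bW : (Fin m → Fin ℓ → Λ) → (Fin m → Bool)) : Prop :=
  ∃ R : Set (Fin m),
    (∀ I : Set (Fin m), I ⊆ Rᶜ →
      ((1 : ℝ) / 4) ^ I.ncard ≤
        rAvgDeg (projSet (matSet WW) {p : Fin m × Fin ℓ | p.1 ∉ R})
          {q : ↥{p : Fin m × Fin ℓ | p.1 ∉ R} | q.val.1 ∈ I}) ∧
    (∀ W ∈ WW, ∀ W' ∈ WW, ∀ i ∈ R, aW W i ≤ bW W' i)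

/-! ### CNF formulas, Nullstellensatz degree -/

/-- A clause over `ℓ` variables: a set of literals; `(i, true)` is the positive
literal `x_i`, `(i, false)` is the negative literal `¬x_i`. -/
abbrev CnfClause (ℓ : ℕ) := Finset (Fin ℓ × Bool)

/-- An assignment satisfies a clause if some literal is satisfied. -/
def clauseSat {ℓ : ℕ} (z : Fin ℓ → Bool) (C : CnfClause ℓ) : Prop :=
  ∃ lit ∈ C, z lit.1 = lit.2

/-- The search problem `S_φ` : given an assignment, find a violated clause of `φ`. -/
def searchCNF {ℓ : ℕ} (φ : Finset (CnfClause ℓ)) :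
    (Fin ℓ → Bool) → CnfClause ℓ → Prop :=
  fun z C => C ∈ φ ∧ ¬ clauseSat z C

/-- The standard polynomial encoding of a clause. -/
def clausePoly {ℓ : ℕ} (C : CnfClause ℓ) : MvPolynomial (Fin ℓ) (ZMod 2) :=
  ∏ lit ∈ C, (if lit.2 then 1 - MvPolynomial.X lit.1 else MvPolynomial.X lit.1)

/-- The Nullstellensatz degree of a CNF contradiction `φ` over `F₂`. -/
def NSdeg {ℓ : ℕ} (φ : Finset (CnfClause ℓ)) : ℕ :=
  sInf {d : ℕ | ∃ (q : CnfClause ℓ → MvPolynomial (Fin ℓ) (ZMod 2))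
      (r : Fin ℓ → MvPolynomial (Fin ℓ) (ZMod 2)),
      ((∑ C ∈ φ, clausePoly C * q C) +
        ∑ i : Fin ℓ, (MvPolynomial.X i ^ 2 - MvPolynomial.X i) * r i) = 1 ∧
      (∀ C ∈ φ, (clausePoly C * q C).totalDegree ≤ d) ∧
      (∀ i : Fin ℓ, ((MvPolynomial.X i ^ 2 - MvPolynomial.X i) * r i).totalDegree ≤ d)}

/-- The equality gadget. -/
def eqGadget {Λ : Type} [DecidableEq Λ] : Λ → Λ → Bool := fun u v => decide (u = v)

/-! ### Semi-monotone composition -/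

/-- `U_m ◇ mKW_g` : Alice gets `X`, Bob gets `Y`; with `a_i = g(X_i)`, `b_i = g(Y_i)`,
valid outputs are entries `(i,j)` with (`a_i > b_i` and `X i j > Y i j`), or
(`a_i < b_i` and `X i j < Y i j`), or (`a_i = b_i` and `X i j ≠ Y i j`); if `a = b`
the players may output the failure symbol `⊥` (here `none`). -/
def semiU {m : ℕ} {ι : Type} (g : (ι → Bool) → Bool) :
    (Fin m → ι → Bool) → (Fin m → ι → Bool) → Option (Fin m × ι) → Prop :=
  fun X Y o =>
    match o with
    | none => ∀ i, g (X i) = g (Y i)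
    | some e =>
        (g (X e.1) = true ∧ g (Y e.1) = false ∧ X e.1 e.2 = true ∧ Y e.1 e.2 = false) ∨
        (g (X e.1) = false ∧ g (Y e.1) = true ∧ X e.1 e.2 = false ∧ Y e.1 e.2 = true) ∨
        (g (X e.1) = g (Y e.1) ∧ X e.1 e.2 ≠ Y e.1 e.2)

/-! ### Razborov rank measure over F₂ -/

/-- The maximal `F₂`-rank of the restriction of `A` to an `S`-monochromatic rectangle. -/
def monoMaxRank {X Y O : Type} [Fintype X] [Fintype Y]
    (S : X → Y → O → Prop) (A : Matrix X Y (ZMod 2)) : ℕ :=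
  sSup {r : ℕ | ∃ (U : Finset X) (V : Finset Y) (o : O),
    (∀ x ∈ U, ∀ y ∈ V, S x y o) ∧
    r = (A.submatrix (Subtype.val : {x // x ∈ U} → X)
          (Subtype.val : {y // y ∈ V} → Y)).rank}

/-- The Razborov rank measure `μ_{F₂}(S, A)`. -/
def muF2 {X Y O : Type} [Fintype X] [Fintype Y]
    (S : X → Y → O → Prop) (A : Matrix X Y (ZMod 2)) : ℝ :=
  (A.rank : ℝ) / (monoMaxRank S A : ℝ)

/-! ### Kronecker powers, pattern matrices -/

/-- The `m`-fold Kronecker power of a square matrix `B`, with index type `Fin m → ι`. -/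
def kronPow {ι R : Type} [CommMonoid R] (m : ℕ) (B : Matrix ι ι R) :
    Matrix (Fin m → ι) (Fin m → ι) R :=
  Matrix.of fun x y => ∏ i, B (x i) (y i)

/-- The pattern matrix `A_{x,y} = p(eq(x₁,y₁),…,eq(x_ℓ,y_ℓ))` of a multilinear
polynomial `p` with coefficients `phat` over `F₂`. -/
def patternMatrix {Λ : Type} [DecidableEq Λ] (ℓ : ℕ)
    (phat : Finset (Fin ℓ) → ZMod 2) : Matrix (Fin ℓ → Λ) (Fin ℓ → Λ) (ZMod 2) :=
  Matrix.of fun x y =>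
    ∑ T : Finset (Fin ℓ), phat T * ∏ i ∈ T, (if x i = y i then (1 : ZMod 2) else 0)

/-! ### s-t-connectivity -/

/-- The `s`-`t`-connectivity function: the input is the adjacency matrix of a directed
graph on `n` vertices, `s = 0`, `t = n-1`; output is whether `t` is reachable from `s`. -/
def stConn (n : ℕ) : ((Fin n × Fin n) → Bool) → Bool :=
  fun E =>
    if ∀ h : 0 < n,
        Relation.ReflTransGen (fun u v : Fin n => E (u, v) = true)
          ⟨0, h⟩ ⟨n - 1, Nat.sub_lt h Nat.one_pos⟩
      then true else false

/-! ### The matrix M of the semi-monotone composition theorem -/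

/-- The matrix `M` used in the semi-monotone composition theorem, built from a matrix
`A ∈ F₂^{𝒳×𝒴}` (with `𝒳 = range xs`, `𝒴 = range ys` identified with `Fin K` via the
left inverses `ix`, `iy`). -/
def semiM {m n K : ℕ} (g : (Fin n → Bool) → Bool) (xs ys : Fin K → (Fin n → Bool))
    (ix iy : (Fin n → Bool) → Fin K) (A : Matrix (Fin K) (Fin K) (ZMod 2)) :
    Matrix (Fin m → Fin n → Bool) (Fin m → Fin n → Bool) (ZMod 2) :=
  Matrix.of fun X Y =>
    if (fun i => g (X i)) = (fun i => g (Y i)) then 0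
    else ∏ i : Fin m,
      (if g (X i) = true ∧ g (Y i) = false then A (ix (X i)) (iy (Y i))
       else if g (X i) = false ∧ g (Y i) = true then A (ix (Y i)) (iy (X i))
       else if X i = Y i then 1 else 0)

end

/-!
Fixing the rows of `mKW_f ◇ mKW_g` on which the players agree to constant strings reduces it to the
problem in which they hold matrices together with `a ∈ f⁻¹(1)`, `b ∈ f⁻¹(0)`, and must find a row
`i` with `a i > b i` and a solution of the lifted search problem in that row. For a rectangle of
that problem let `γ` be the average, over the matrices `W`, of the monotone formula complexity of
the pairs `(a, b)` for which both players holding `W` is consistent with the rectangle; at the root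
of a protocol tree this is `L(mKW_f)`.

A rectangle with `γ` at least of order `m` requires `2 ^ Ω(Q(S) * t)` leaves. Indeed, it supports
many matrices `W` with pairs `(a W, b W)` of sizeable complexity. Rows in which these matrices are
too concentrated are fixed one after the other, keeping `a W i ≤ b W i` there at the cost of half of
the complexity, so the remaining rows are nearly uniform. On them a simulation plays against an
adversary for `S`: by the discrepancy of the gadget, the parities of gadget values on two dense sets
are almost unbiased, so that every answer of the adversary is attained in the current rectangle
until `Q(S)` queries are made in one row.

Finally, `γ` is subadditive. Walking down the protocol tree to the child with larger `γ`, whatever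
is lost on the way is found either in subtrees to which induction applies, or in drops of order `m`,
each of which forces `2 ^ Ω(Q(S) * t)` leaves off the path. The number of leaves is therefore at
least `L(mKW_f) * 2 ^ Ω(Q(S) * t) / m`, and `t ≥ c * log₂ (m * ℓ)` absorbs the factor `m`.
-/

namespace MonotoneComposition

/-! ### Rectangle protocols -/

section Rectangles

variable {X Y O : Type} {rel : X → Y → O → Prop}

/-- One bit of communication: the side of one player is divided between the rectangles `A₀ × B₀`
and `A₁ × B₁`, while the side of the other player is contained in both. -/
def IsSplit (A : Set X) (B : Set Y) (A₀ : Set X) (B₀ : Set Y) (A₁ : Set X) (B₁ : Set Y) : Prop :=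
  (A ⊆ A₀ ∪ A₁ ∧ B ⊆ B₀ ∧ B ⊆ B₁) ∨ (A ⊆ A₀ ∧ A ⊆ A₁ ∧ B ⊆ B₀ ∪ B₁)

namespace IsSplit

variable {A A' A₀ A₁ : Set X} {B B' B₀ B₁ : Set Y}

theorem anti (h : IsSplit A B A₀ B₀ A₁ B₁) (hA : A' ⊆ A) (hB : B' ⊆ B) :
    IsSplit A' B' A₀ B₀ A₁ B₁ :=
  h.imp (fun ⟨h₁, h₂, h₃⟩ => ⟨hA.trans h₁, hB.trans h₂, hB.trans h₃⟩)
    fun ⟨h₁, h₂, h₃⟩ => ⟨hA.trans h₁, hA.trans h₂, hB.trans h₃⟩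

theorem symm (h : IsSplit A B A₀ B₀ A₁ B₁) : IsSplit A B A₁ B₁ A₀ B₀ :=
  h.imp (fun ⟨h₁, h₂, h₃⟩ => ⟨Set.union_comm A₀ A₁ ▸ h₁, h₃, h₂⟩)
    fun ⟨h₁, h₂, h₃⟩ => ⟨h₂, h₁, Set.union_comm B₀ B₁ ▸ h₃⟩

theorem preimage {X' Y' : Type} (h : IsSplit A B A₀ B₀ A₁ B₁) (φ : X' → X) (ψ : Y' → Y) :
    IsSplit (φ ⁻¹' A) (ψ ⁻¹' B) (φ ⁻¹' A₀) (ψ ⁻¹' B₀) (φ ⁻¹' A₁) (ψ ⁻¹' B₁) :=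
  h.imp (fun ⟨h₁, h₂, h₃⟩ => ⟨fun _ hx => h₁ hx, fun _ hy => h₂ hy, fun _ hy => h₃ hy⟩)
    fun ⟨h₁, h₂, h₃⟩ => ⟨fun _ hx => h₁ hx, fun _ hx => h₂ hx, fun _ hy => h₃ hy⟩

theorem sdiff_left (h : IsSplit A B A₀ B₀ A₁ B₁) (C : Set X) :
    IsSplit (A \ C) B (A₀ \ C) B₀ A₁ B₁ :=
  h.imp (fun ⟨h₁, h₂, h₃⟩ => ⟨fun _ hx => (h₁ hx.1).imp_left fun h₀ => ⟨h₀, hx.2⟩, h₂, h₃⟩)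
    fun ⟨h₁, h₂, h₃⟩ => ⟨Set.sdiff_subset_sdiff_left h₁, Set.sdiff_subset.trans h₂, h₃⟩

theorem sdiff_right (h : IsSplit A B A₀ B₀ A₁ B₁) (D : Set Y) :
    IsSplit A (B \ D) A₀ (B₀ \ D) A₁ B₁ :=
  h.imp (fun ⟨h₁, h₂, h₃⟩ => ⟨h₁, Set.sdiff_subset_sdiff_left h₂, Set.sdiff_subset.trans h₃⟩)
    fun ⟨h₁, h₂, h₃⟩ => ⟨h₁, h₂, fun _ hy => (h₃ hy.1).imp_left fun h₀ => ⟨h₀, hy.2⟩⟩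

theorem prod_subset (h : IsSplit A B A₀ B₀ A₁ B₁) : A ×ˢ B ⊆ A₀ ×ˢ B₀ ∪ A₁ ×ˢ B₁ := by
  rintro ⟨x, y⟩ ⟨hx, hy⟩
  rcases h with ⟨h₁, h₂, h₃⟩ | ⟨h₁, h₂, h₃⟩
  · exact (h₁ hx).imp (fun h₀ => ⟨h₀, h₂ hy⟩) fun h₀ => ⟨h₀, h₃ hy⟩
  · exact (h₃ hy).imp (fun h₀ => ⟨h₁ hx, h₀⟩) fun h₀ => ⟨h₂ hx, h₀⟩

theorem left (A A' : Set X) (B : Set Y) : IsSplit A B (A \ A') B (A ∩ A') B :=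
  .inl ⟨(Set.sdiff_union_inter A A').ge, subset_rfl, subset_rfl⟩

theorem right (A : Set X) (B B' : Set Y) : IsSplit A B A (B \ B') A (B ∩ B') :=
  .inr ⟨subset_rfl, subset_rfl, (Set.sdiff_union_inter B B').ge⟩

end IsSplit

/-- A rectangle on which a single output is valid; empty rectangles are included, as there need
not be any output. -/
def Monochromatic (rel : X → Y → O → Prop) (A : Set X) (B : Set Y) : Prop :=
  A ×ˢ B = ∅ ∨ ∃ o, ∀ p ∈ A ×ˢ B, rel p.1 p.2 o

theorem Monochromatic.anti {A A' : Set X} {B B' : Set Y} (h : Monochromatic rel A B)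
    (hsub : A' ×ˢ B' ⊆ A ×ˢ B) : Monochromatic rel A' B' :=
  h.imp (Set.subset_eq_empty hsub) fun ⟨o, ho⟩ => ⟨o, fun p hp => ho p (hsub hp)⟩

/-- `rel` can be solved on the rectangle `A × B` by a protocol with at most `k` leaves, where
empty rectangles cost nothing. -/
inductive LeafSolvable (rel : X → Y → O → Prop) : Set X → Set Y → ℕ → Prop
  | empty {A B k} : A ×ˢ B = ∅ → LeafSolvable rel A B k
  | mono {A B k} : Monochromatic rel A B → 0 < k → LeafSolvable rel A B k
  | split {A B A₀ B₀ A₁ B₁ k₀ k₁} : IsSplit A B A₀ B₀ A₁ B₁ →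
      LeafSolvable rel A₀ B₀ k₀ → LeafSolvable rel A₁ B₁ k₁ → LeafSolvable rel A B (k₀ + k₁)

/-- `rel` can be solved on the rectangle `A × B` by a protocol of depth at most `d`. -/
inductive DepthSolvable (rel : X → Y → O → Prop) : Set X → Set Y → ℕ → Prop
  | mono {A B d} : Monochromatic rel A B → DepthSolvable rel A B d
  | split {A B A₀ B₀ A₁ B₁ d} : IsSplit A B A₀ B₀ A₁ B₁ →
      DepthSolvable rel A₀ B₀ d → DepthSolvable rel A₁ B₁ d → DepthSolvable rel A B (d + 1)

theorem DepthSolvable.anti {A A' : Set X} {B B' : Set Y} {d d' : ℕ} (h : DepthSolvable rel A B d)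
    (hA : A' ⊆ A) (hB : B' ⊆ B) (hd : d ≤ d') : DepthSolvable rel A' B' d' := by
  induction h generalizing A' B' d' with
  | mono h => exact .mono (h.anti (Set.prod_mono hA hB))
  | split hs _ _ ih₀ ih₁ =>
    obtain ⟨e, rfl⟩ := Nat.exists_eq_add_of_le' hd
    exact .split (hs.anti hA hB) (ih₀ subset_rfl subset_rfl (Nat.le_add_left ..))
      (ih₁ subset_rfl subset_rfl (Nat.le_add_left ..))

theorem DepthSolvable.comap {X' Y' : Type} {A : Set X} {B : Set Y} {d : ℕ}
    (h : DepthSolvable rel A B d) (φ : X' → X) (ψ : Y' → Y) :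
    DepthSolvable (fun x y o => rel (φ x) (ψ y) o) (φ ⁻¹' A) (ψ ⁻¹' B) d := by
  induction h with
  | mono h =>
    refine .mono (h.imp (fun h => ?_) fun ⟨o, ho⟩ => ⟨o, fun p hp => ho (φ p.1, ψ p.2) hp⟩)
    rw [← Set.preimage_prod_map_prod, h, Set.preimage_empty]
  | split hs _ _ ih₀ ih₁ => exact .split (hs.preimage φ ψ) ih₀ ih₁

namespace LeafSolvable

variable {A A' A₀ A₁ : Set X} {B B' B₀ B₁ : Set Y} {k k' k₀ k₁ : ℕ}

theorem anti (h : LeafSolvable rel A B k) (hA : A' ⊆ A) (hB : B' ⊆ B) (hk : k ≤ k') :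
    LeafSolvable rel A' B' k' := by
  induction h generalizing A' B' k' with
  | empty h => exact .empty (Set.subset_eq_empty (Set.prod_mono hA hB) h)
  | mono h hpos => exact .mono (h.anti (Set.prod_mono hA hB)) (hpos.trans_le hk)
  | split hs h₀ _ _ ih₁ =>
    obtain ⟨c, rfl⟩ := Nat.exists_eq_add_of_le hk
    rw [Nat.add_assoc]
    exact .split (hs.anti hA hB) h₀ (ih₁ subset_rfl subset_rfl (Nat.le_add_right _ c))

theorem reduce {X' Y' O' : Type} {rel' : X' → Y' → O' → Prop} (h : LeafSolvable rel A B k)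
    (φ : X' → X) (ψ : Y' → Y) (π : O → O')
    (hrel : ∀ x y o, rel (φ x) (ψ y) o → rel' x y (π o)) :
    LeafSolvable rel' (φ ⁻¹' A) (ψ ⁻¹' B) k := by
  have prod_empty {A : Set X} {B : Set Y} (h : A ×ˢ B = ∅) : (φ ⁻¹' A) ×ˢ (ψ ⁻¹' B) = ∅ := by
    rw [← Set.preimage_prod_map_prod, h, Set.preimage_empty]
  induction h with
  | empty h => exact .empty (prod_empty h)
  | mono h hpos =>
    exact .mono (h.imp prod_empty fun ⟨o, ho⟩ =>
      ⟨π o, fun p hp => hrel _ _ _ (ho (φ p.1, ψ p.2) hp)⟩) hpos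
  | split hs _ _ ih₀ ih₁ => exact .split (hs.preimage φ ψ) ih₀ ih₁

theorem prod_eq_empty (h : LeafSolvable rel A B 0) : A ×ˢ B = ∅ := by
  obtain ⟨k, hk⟩ : ∃ k, k = 0 := ⟨0, rfl⟩
  rw [← hk] at h
  induction h with
  | empty h => exact h
  | mono _ hpos => omega
  | split hs _ _ ih₀ ih₁ =>
    exact Set.subset_eq_empty hs.prod_subset
      (by rw [ih₀ (by omega), ih₁ (by omega), Set.union_empty])

theorem pos (h : LeafSolvable rel A B k) (hne : (A ×ˢ B).Nonempty) : 0 < k := by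
  rcases k.eq_zero_or_pos with rfl | hk
  · exact absurd h.prod_eq_empty hne.ne_empty
  · exact hk

theorem monochromatic (h : LeafSolvable rel A B k) (hk : k ≤ 1) : Monochromatic rel A B := by
  induction h with
  | empty h => exact .inl h
  | mono h _ => exact h
  | @split A B A₀ B₀ A₁ B₁ k₀ k₁ hs h₀ h₁ ih₀ ih₁ =>
    have hsub := hs.prod_subset
    obtain rfl | rfl : k₀ = 0 ∨ k₁ = 0 := by omega
    · rw [h₀.prod_eq_empty, Set.empty_union] at hsub
      exact (ih₁ (by omega)).anti hsub
    · rw [h₁.prod_eq_empty, Set.union_empty] at hsub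
      exact (ih₀ (by omega)).anti hsub

end LeafSolvable

/-- `A' × B'` behaves like a node, with `k'` leaves below it, of a protocol tree with `k` leaves
for `A × B`: deleting the subtree below it leaves protocols for what is outside of `A'` and of
`B'`. -/
structure IsNode (rel : X → Y → O → Prop) (A : Set X) (B : Set Y) (k : ℕ) (A' : Set X) (B' : Set Y)
    (k' : ℕ) : Prop where
  solvable : LeafSolvable rel A' B' k'
  remainder : ∃ r, k' + r ≤ k ∧ LeafSolvable rel (A \ A') B r ∧ LeafSolvable rel A (B \ B') r

theorem LeafSolvable.isNode {A : Set X} {B : Set Y} {k : ℕ} (h : LeafSolvable rel A B k) :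
    IsNode rel A B k A B k :=
  ⟨h, 0, le_rfl, .empty (by simp), .empty (by simp)⟩

theorem IsNode.of_split {A A₀ A₁ A' : Set X} {B B₀ B₁ B' : Set Y} {k₀ k₁ k' : ℕ}
    (h : IsNode rel A₀ B₀ k₀ A' B' k') (hs : IsSplit A B A₀ B₀ A₁ B₁)
    (h₁ : LeafSolvable rel A₁ B₁ k₁) : IsNode rel A B (k₀ + k₁) A' B' k' := by
  obtain ⟨hsol, r, hr, hA, hB⟩ := h
  exact ⟨hsol, r + k₁, by omega, .split (hs.sdiff_left A') hA h₁, .split (hs.sdiff_right B') hB h₁⟩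

/-- A protocol tree for `A × B` with `k` leaves has a deepest node satisfying `Big`: it is a leaf,
or it is an inner node neither of whose children satisfies `Big`. -/
def HasCriticalNode (rel : X → Y → O → Prop) (Big : Set X → Set Y → ℕ → Prop) (A : Set X)
    (B : Set Y) (k : ℕ) : Prop :=
  (∃ A' B' k', IsNode rel A B k A' B' k' ∧ Monochromatic rel A' B' ∧ Big A' B' k') ∨
  ∃ A₀ B₀ k₀ A₁ B₁ k₁, IsNode rel A B k A₀ B₀ k₀ ∧ IsNode rel A B k A₁ B₁ k₁ ∧ k₀ + k₁ ≤ k ∧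
    ¬ Big A₀ B₀ k₀ ∧ ¬ Big A₁ B₁ k₁ ∧ ∃ A' B', IsSplit A' B' A₀ B₀ A₁ B₁ ∧ Big A' B' (k₀ + k₁)

theorem HasCriticalNode.of_split {Big : Set X → Set Y → ℕ → Prop} {A A₀ A₁ : Set X}
    {B B₀ B₁ : Set Y} {k₀ k₁ : ℕ} (h : HasCriticalNode rel Big A₀ B₀ k₀)
    (hs : IsSplit A B A₀ B₀ A₁ B₁) (h₁ : LeafSolvable rel A₁ B₁ k₁) :
    HasCriticalNode rel Big A B (k₀ + k₁) := by
  obtain ⟨A', B', k', hn, hm⟩ | ⟨C₀, D₀, l₀, C₁, D₁, l₁, hn₀, hn₁, hl, hrest⟩ := h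
  · exact .inl ⟨A', B', k', hn.of_split hs h₁, hm⟩
  · exact .inr ⟨C₀, D₀, l₀, C₁, D₁, l₁, hn₀.of_split hs h₁, hn₁.of_split hs h₁, by omega, hrest⟩

theorem LeafSolvable.hasCriticalNode {Big : Set X → Set Y → ℕ → Prop} {A : Set X} {B : Set Y}
    {k : ℕ} (h : LeafSolvable rel A B k) (hbig : Big A B k) : HasCriticalNode rel Big A B k := by
  induction h with
  | empty h => exact .inl ⟨_, _, _, (empty h).isNode, .inl h, hbig⟩
  | mono h hpos => exact .inl ⟨_, _, _, (mono h hpos).isNode, h, hbig⟩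
  | @split A B A₀ B₀ A₁ B₁ k₀ k₁ hs h₀ h₁ ih₀ ih₁ =>
    by_cases b₀ : Big A₀ B₀ k₀
    · exact (ih₀ b₀).of_split hs h₁
    by_cases b₁ : Big A₁ B₁ k₁
    · exact Nat.add_comm k₁ k₀ ▸ (ih₁ b₁).of_split hs.symm h₀
    exact .inr ⟨A₀, B₀, k₀, A₁, B₁, k₁, h₀.isNode.of_split hs h₁,
      Nat.add_comm k₁ k₀ ▸ h₁.isNode.of_split hs.symm h₀, le_rfl, b₀, b₁, A, B, hs, hbig⟩

theorem IsNode.depthSolvable {A A' : Set X} {B B' : Set Y} {k k' d : ℕ}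
    (hn : IsNode rel A B k A' B' k') (hnode : DepthSolvable rel A' B' d)
    (hbal : ∀ A B r, k' + r ≤ k → LeafSolvable rel A B r → DepthSolvable rel A B d) :
    DepthSolvable rel A B (d + 2) := by
  obtain ⟨-, r, hr, hA, hB⟩ := hn
  exact .split (.left A A' B)
    ((hbal _ _ r hr hA).anti subset_rfl subset_rfl d.le_succ)
    (.split (.right _ B B') ((hbal _ _ r hr hB).anti Set.inter_subset_left subset_rfl le_rfl)
      (hnode.anti Set.inter_subset_right Set.inter_subset_right le_rfl))

theorem LeafSolvable.depthSolvable {A : Set X} {B : Set Y} {k : ℕ} (j : ℕ)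
    (h : LeafSolvable rel A B k) (hk : k * 2 ^ j ≤ 3 ^ j) : DepthSolvable rel A B (2 * j) := by
  induction j generalizing A B k with
  | zero => exact .mono (h.monochromatic (by simpa using hk))
  | succ j ih =>
    have two_thirds {r : ℕ} (hr : 3 * r ≤ 2 * k) : r * 2 ^ j ≤ 3 ^ j := by
      have := Nat.mul_le_mul_right (2 ^ j) hr
      rw [pow_succ, pow_succ] at hk
      nlinarith
    rcases le_or_gt k 1 with hk₁ | hk₁
    · exact .mono (h.monochromatic hk₁)
    have attach {A' B' k'} (hn : IsNode rel A B k A' B' k') (hk' : k ≤ 3 * k')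
        (hd : DepthSolvable rel A' B' (2 * j)) : DepthSolvable rel A B (2 * (j + 1)) :=
      hn.depthSolvable hd fun _ _ r hr hsol => ih hsol (two_thirds (by omega))
    obtain ⟨A', B', k', hn, hm, hbig⟩ |
      ⟨A₀, B₀, k₀, A₁, B₁, k₁, hn₀, hn₁, -, h₀, h₁, -, -, -, hbig⟩ :=
      h.hasCriticalNode (Big := fun _ _ k' => 2 * k < 3 * k') (by omega)
    · exact attach hn (by omega) (.mono hm)
    rcases le_total k₁ k₀ with hle | hle
    · exact attach hn₀ (by omega) (ih hn₀.solvable (two_thirds (by omega)))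
    · exact attach hn₁ (by omega) (ih hn₁.solvable (two_thirds (by omega)))

end Rectangles

section ComplexityMeasures

variable {X Y O : Type} {rel : X → Y → O → Prop}

/-- A formal complexity measure on rectangles: it is monotone, subadditive under splitting a
rectangle in two, and at most `1` on monochromatic rectangles. -/
structure IsComplexityMeasure (rel : X → Y → O → Prop) (μ : Set X → Set Y → ℝ) : Prop where
  mono {A A' B B'} : A ⊆ A' → B ⊆ B' → μ A B ≤ μ A' B'
  split {A B A₀ B₀ A₁ B₁} : IsSplit A B A₀ B₀ A₁ B₁ → μ A B ≤ μ A₀ B₀ + μ A₁ B₁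
  monochromatic {A B} : Monochromatic rel A B → μ A B ≤ 1

namespace IsComplexityMeasure

variable {μ : Set X → Set Y → ℝ} {A A' A₀ A₁ : Set X} {B B' B₀ B₁ : Set Y} {k k' k₀ k₁ K : ℕ}
  {G : ℝ}

theorem le_add_add (hμ : IsComplexityMeasure rel μ) (A A' : Set X) (B B' : Set Y) :
    μ A B ≤ μ (A \ A') B + μ A (B \ B') + μ A' B' := by
  have hsplit := hμ.split (.left A A' B)
  have hsplit' := hμ.split (.right (A ∩ A') B B')
  have hdiff := hμ.mono (Set.inter_subset_left (s := A) (t := A')) (subset_refl (B \ B'))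
  have hinter := hμ.mono (Set.inter_subset_right (s := A) (t := A'))
    (Set.inter_subset_right (s := B) (t := B'))
  linarith

theorem add_le_of_isNode (hμ : IsComplexityMeasure rel μ)
    (hbase : ∀ {A B k}, LeafSolvable rel A B k → G ≤ μ A B → K ≤ k)
    (hn : IsNode rel A B k A' B' k') (hle : μ A' B' ≤ μ A B - 2 * G) : k' + K ≤ k := by
  obtain ⟨-, r, hr, hA, hB⟩ := hn
  suffices K ≤ r by omega
  rcases le_or_gt G (μ (A \ A') B) with hG | hG
  · exact hbase hA hG
  · exact hbase hB (by linarith [hμ.le_add_add A A' B B'])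

theorem caterpillar_step (hμ : IsComplexityMeasure rel μ)
    (hbase : ∀ {A B k}, LeafSolvable rel A B k → G ≤ μ A B → K ≤ k) (hG : 0 ≤ G)
    (hbig : 4 * G < μ A B) (hn₀ : IsNode rel A B k A₀ B₀ k₀)
    (hk : k₀ + k₁ ≤ k) (h₀ : μ A₀ B₀ ≤ μ A B - 2 * G) (hle : μ A₁ B₁ ≤ μ A₀ B₀)
    (hsum : μ A B - 2 * G < μ A₀ B₀ + μ A₁ B₁)
    (ih₀ : G ≤ μ A₀ B₀ → K * (μ A₀ B₀ + 2 * G) ≤ 6 * G * k₀)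
    (ih₁ : G ≤ μ A₁ B₁ → K * (μ A₁ B₁ + 2 * G) ≤ 6 * G * k₁) :
    K * (μ A B + 2 * G) ≤ 6 * G * k := by
  have hK : (0 : ℝ) ≤ K := K.cast_nonneg
  rcases le_or_gt G (μ A₁ B₁) with hG₁ | hG₁
  · have hcast : (k₀ + k₁ : ℝ) ≤ k := mod_cast hk
    calc K * (μ A B + 2 * G)
        ≤ K * (μ A₀ B₀ + 2 * G) + K * (μ A₁ B₁ + 2 * G) := by
          rw [← mul_add]; exact mul_le_mul_of_nonneg_left (by linarith) hK
      _ ≤ 6 * G * k₀ + 6 * G * k₁ := add_le_add (ih₀ (hG₁.trans hle)) (ih₁ hG₁)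
      _ ≤ 6 * G * k := by rw [← mul_add]; gcongr
  · have hcast : (k₀ + K : ℝ) ≤ k := mod_cast hμ.add_le_of_isNode hbase hn₀ h₀
    calc K * (μ A B + 2 * G) ≤ K * (μ A₀ B₀ + 2 * G) + 6 * G * K := by
          nlinarith
      _ ≤ 6 * G * k₀ + 6 * G * K := by gcongr ?_ + _; exact ih₀ (by linarith)
      _ ≤ 6 * G * k := by rw [← mul_add]; gcongr

/-- Walking down from the root, the measure only drops substantially where `K` leaves branch
off. -/
theorem caterpillar (hμ : IsComplexityMeasure rel μ) (hG : 1 ≤ G) (hK : 0 < K)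
    (hbase : ∀ {A B k}, LeafSolvable rel A B k → G ≤ μ A B → K ≤ k)
    (h : LeafSolvable rel A B k) (hGμ : G ≤ μ A B) : K * (μ A B + 2 * G) ≤ 6 * G * k := by
  induction k using Nat.strong_induction_on generalizing A B with
  | _ k ih =>
  rcases le_or_gt (μ A B) (4 * G) with hsmall | hbig
  · have hKk : (K : ℝ) ≤ k := mod_cast hbase h hGμ
    calc K * (μ A B + 2 * G) ≤ K * (6 * G) := by gcongr; linarith
      _ ≤ 6 * G * k := by rw [mul_comm]; gcongr
  have hcrit := h.hasCriticalNode (Big := fun A' B' _ => μ A B - 2 * G < μ A' B') (by linarith)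
  obtain ⟨A', B', k', -, hm, hlarge⟩ | ⟨A₀, B₀, k₀, A₁, B₁, k₁, hn₀, hn₁, hk, h₀, h₁, A', B', hs,
    hlarge⟩ := hcrit
  · linarith [hμ.monochromatic hm]
  have hsum : μ A B - 2 * G < μ A₀ B₀ + μ A₁ B₁ := hlarge.trans_le (hμ.split hs)
  have lt_of_isNode {A'' B'' k''} (hn : IsNode rel A B k A'' B'' k'')
      (hle : ¬ μ A B - 2 * G < μ A'' B'') : k'' < k := by
    have := hμ.add_le_of_isNode hbase hn (not_lt.mp hle)
    omega
  have ih₀ := ih k₀ (lt_of_isNode hn₀ h₀) hn₀.solvable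
  have ih₁ := ih k₁ (lt_of_isNode hn₁ h₁) hn₁.solvable
  rcases le_total (μ A₁ B₁) (μ A₀ B₀) with hle | hle
  · exact hμ.caterpillar_step hbase (by linarith) hbig hn₀ hk (not_lt.mp h₀) hle hsum ih₀ ih₁
  · exact hμ.caterpillar_step hbase (by linarith) hbig hn₁ (by omega) (not_lt.mp h₁) hle
      (by linarith) ih₁ ih₀

theorem average {W O' : Type} [Fintype W] {rel' : W × X → W × Y → O' → Prop} {π : O' → O}
    (hμ : IsComplexityMeasure rel μ) (hrel : ∀ w x y o, rel' (w, x) (w, y) o → rel x y (π o)) :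
    IsComplexityMeasure rel' fun A B =>
      (∑ w, μ (Prod.mk w ⁻¹' A) (Prod.mk w ⁻¹' B)) / Fintype.card W where
  mono hA hB := by
    gcongr with w
    exact hμ.mono (Set.preimage_mono hA) (Set.preimage_mono hB)
  split hs := by
    rw [← add_div, ← Finset.sum_add_distrib]
    gcongr with w
    exact hμ.split (hs.preimage _ _)
  monochromatic {A B} hm := by
    refine div_le_one_of_le₀ ?_ (Nat.cast_nonneg _)
    have hle (w : W) : μ (Prod.mk w ⁻¹' A) (Prod.mk w ⁻¹' B) ≤ 1 :=
      hμ.monochromatic <| hm.imp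
        (fun h => by rw [← Set.preimage_prod_map_prod, h, Set.preimage_empty])
        fun ⟨o, ho⟩ => ⟨π o, fun p hp => hrel w _ _ _ (ho ((w, p.1), (w, p.2)) hp)⟩
    calc ∑ w, μ (Prod.mk w ⁻¹' A) (Prod.mk w ⁻¹' B) ≤ ∑ _w : W, (1 : ℝ) :=
          Finset.sum_le_sum fun w _ => hle w
      _ = Fintype.card W := by simp

end IsComplexityMeasure

/-- The least number of leaves of a protocol for `rel` on the rectangle `A × B`; it is `0` for
empty rectangles. -/
noncomputable def minLeaves (rel : X → Y → O → Prop) (A : Set X) (B : Set Y) : ℕ :=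
  sInf {k | LeafSolvable rel A B k}

theorem LeafSolvable.minLeaves_le {A : Set X} {B : Set Y} {k : ℕ} (h : LeafSolvable rel A B k) :
    minLeaves rel A B ≤ k :=
  Nat.sInf_le h

theorem LeafSolvable.of_finset (htot : ∀ x y, ∃ o, rel x y o) (A : Finset X) (B : Finset Y) :
    LeafSolvable rel A B (A.card * B.card) := by
  have singleton (x : X) : LeafSolvable rel {x} B B.card := by
    induction B using Finset.induction_on with
    | empty => exact .empty (by simp)
    | insert y B hy ih =>
      obtain ⟨o, ho⟩ := htot x y
      rw [Finset.card_insert_of_notMem hy, Finset.coe_insert, Set.insert_eq, Set.union_comm]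
      exact .split (.inr ⟨subset_rfl, subset_rfl, subset_rfl⟩) ih
        (.mono (.inr ⟨o, by rintro ⟨_, _⟩ ⟨rfl, rfl⟩; exact ho⟩) one_pos)
  induction A using Finset.induction_on with
  | empty => exact .empty (by simp)
  | insert x A hx ih =>
    rw [Finset.card_insert_of_notMem hx, Nat.add_mul, one_mul, Finset.coe_insert, Set.insert_eq,
      Set.union_comm]
    exact .split (.inl ⟨subset_rfl, subset_rfl, subset_rfl⟩) ih (singleton x)

theorem LeafSolvable.of_fintype [Fintype X] [Fintype Y] (htot : ∀ x y, ∃ o, rel x y o) (A : Set X)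
    (B : Set Y) : LeafSolvable rel A B (Fintype.card X * Fintype.card Y) := by
  have h := LeafSolvable.of_finset htot Finset.univ Finset.univ
  exact h.anti (by simp) (by simp) le_rfl

theorem leafSolvable_minLeaves [Finite X] [Finite Y] (htot : ∀ x y, ∃ o, rel x y o) (A : Set X)
    (B : Set Y) : LeafSolvable rel A B (minLeaves rel A B) := by
  have := Fintype.ofFinite X
  have := Fintype.ofFinite Y
  exact Nat.sInf_mem (s := {k | LeafSolvable rel A B k}) ⟨_, .of_fintype htot A B⟩

theorem isComplexityMeasure_minLeaves [Finite X] [Finite Y] (htot : ∀ x y, ∃ o, rel x y o) :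
    IsComplexityMeasure rel fun A B => minLeaves rel A B where
  mono hA hB := mod_cast ((leafSolvable_minLeaves htot _ _).anti hA hB le_rfl).minLeaves_le
  split hs := mod_cast (LeafSolvable.split hs (leafSolvable_minLeaves htot _ _)
    (leafSolvable_minLeaves htot _ _)).minLeaves_le
  monochromatic hm := mod_cast (LeafSolvable.mono hm one_pos).minLeaves_le

theorem LeafSolvable.of_protocol (p : Protocol X Y O) {A : Set X} {B : Set Y}
    (h : ∀ z ∈ A ×ˢ B, rel z.1 z.2 (p.run z.1 z.2)) : LeafSolvable rel A B p.leaves := by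
  induction p generalizing A B with
  | leaf o => exact .mono (.inr ⟨o, h⟩) one_pos
  | nodeA q p₀ p₁ ih₀ ih₁ =>
    refine .split (.left A {x | q x = true} B) (ih₀ ?_) (ih₁ ?_)
    · rintro z ⟨⟨hx, hq⟩, hy⟩
      simpa [Protocol.run, show q z.1 = false from eq_false_of_ne_true hq] using h z ⟨hx, hy⟩
    · rintro z ⟨⟨hx, hq⟩, hy⟩
      simpa [Protocol.run, show q z.1 = true from hq] using h z ⟨hx, hy⟩
  | nodeB q p₀ p₁ ih₀ ih₁ =>
    refine .split (.right A B {y | q y = true}) (ih₀ ?_) (ih₁ ?_)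
    · rintro z ⟨hx, hy, hq⟩
      simpa [Protocol.run, show q z.2 = false from eq_false_of_ne_true hq] using h z ⟨hx, hy⟩
    · rintro z ⟨hx, hy, hq⟩
      simpa [Protocol.run, show q z.2 = true from hq] using h z ⟨hx, hy⟩

theorem IsSplit.exists_protocol {A A₀ A₁ : Set X} {B B₀ B₁ : Set Y} (hs : IsSplit A B A₀ B₀ A₁ B₁)
    {p₀ p₁ : Protocol X Y O} (h₀ : ∀ z ∈ A₀ ×ˢ B₀, rel z.1 z.2 (p₀.run z.1 z.2))
    (h₁ : ∀ z ∈ A₁ ×ˢ B₁, rel z.1 z.2 (p₁.run z.1 z.2)) :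
    ∃ p : Protocol X Y O, p.leaves = p₀.leaves + p₁.leaves ∧
      ∀ z ∈ A ×ˢ B, rel z.1 z.2 (p.run z.1 z.2) := by
  rcases hs with ⟨hA, hB₀, hB₁⟩ | ⟨hA₀, hA₁, hB⟩
  · refine ⟨.nodeA (fun x => decide (x ∈ A₁)) p₀ p₁, rfl, fun z hz => ?_⟩
    by_cases hx : z.1 ∈ A₁
    · simpa [Protocol.run, hx] using h₁ z ⟨hx, hB₁ hz.2⟩
    · simpa [Protocol.run, hx] using h₀ z ⟨(hA hz.1).resolve_right hx, hB₀ hz.2⟩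
  · refine ⟨.nodeB (fun y => decide (y ∈ B₁)) p₀ p₁, rfl, fun z hz => ?_⟩
    by_cases hy : z.2 ∈ B₁
    · simpa [Protocol.run, hy] using h₁ z ⟨hA₁ hz.1, hy⟩
    · simpa [Protocol.run, hy] using h₀ z ⟨hA₀ hz.1, (hB hz.2).resolve_right hy⟩

theorem LeafSolvable.exists_protocol {A : Set X} {B : Set Y} {k : ℕ} (h : LeafSolvable rel A B k)
    (hne : A ×ˢ B ≠ ∅) :
    ∃ p : Protocol X Y O, p.leaves ≤ k ∧ ∀ z ∈ A ×ˢ B, rel z.1 z.2 (p.run z.1 z.2) := by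
  induction h with
  | empty h => exact absurd h hne
  | mono h hpos =>
    obtain ⟨o, ho⟩ := h.resolve_left hne
    exact ⟨.leaf o, hpos, ho⟩
  | @split A B A₀ B₀ A₁ B₁ k₀ k₁ hs _ _ ih₀ ih₁ =>
    have hsub := hs.prod_subset
    by_cases he₀ : A₀ ×ˢ B₀ = ∅
    · rw [he₀, Set.empty_union] at hsub
      obtain ⟨p, hp, hrun⟩ := ih₁ fun he => hne (Set.subset_eq_empty hsub he)
      exact ⟨p, hp.trans (Nat.le_add_left ..), fun z hz => hrun z (hsub hz)⟩
    obtain ⟨p₀, hp₀, hrun₀⟩ := ih₀ he₀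
    by_cases he₁ : A₁ ×ˢ B₁ = ∅
    · rw [he₁, Set.union_empty] at hsub
      exact ⟨p₀, hp₀.trans (Nat.le_add_right ..), fun z hz => hrun₀ z (hsub hz)⟩
    obtain ⟨p₁, hp₁, hrun₁⟩ := ih₁ he₁
    obtain ⟨p, hp, hrun⟩ := hs.exists_protocol hrun₀ hrun₁
    exact ⟨p, hp.trans_le (add_le_add hp₀ hp₁), hrun⟩

theorem Lsize_eq_minLeaves [Finite X] [Finite Y] [Nonempty X] [Nonempty Y]
    (htot : ∀ x y, ∃ o, rel x y o) : Lsize rel = minLeaves rel Set.univ Set.univ := by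
  obtain ⟨p, hp, hrun⟩ := (leafSolvable_minLeaves htot .univ .univ).exists_protocol
    (Set.univ_nonempty.prod Set.univ_nonempty).ne_empty
  have hmem : p.leaves ∈ {k | ∃ p : Protocol X Y O, Solves p rel ∧ p.leaves = k} :=
    ⟨p, fun x y => hrun (x, y) ⟨trivial, trivial⟩, rfl⟩
  refine le_antisymm ((Nat.sInf_le hmem).trans hp) ?_
  obtain ⟨q, hq, hleaves⟩ := Nat.sInf_mem ⟨_, hmem⟩
  calc minLeaves rel Set.univ Set.univ ≤ q.leaves :=
        (LeafSolvable.of_protocol q fun z _ => hq z.1 z.2).minLeaves_le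
    _ = Lsize rel := hleaves

end ComplexityMeasures

/-! ### Discrepancy and spectral bounds -/

section Spectral

variable {α β : Type}

/-- Every combinatorial rectangle of the matrix `M` has entries adding up to at most `C` in
absolute value, i.e. the cut norm of `M` is at most `C`. -/
def CutBound (M : α → β → ℝ) (C : ℝ) : Prop :=
  ∀ (P : Finset α) (Q : Finset β), |∑ u ∈ P, ∑ v ∈ Q, M u v| ≤ C

theorem CutBound.swap {M : α → β → ℝ} {C : ℝ} (h : CutBound M C) :
    CutBound (Function.swap M) C := by
  intro P Q
  rw [Finset.sum_comm]
  exact h Q P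

theorem sum_mul_eq_sum_sub_sum [Fintype α] {r : α → ℝ} (hr : ∀ u, r u = 1 ∨ r u = -1)
    (F : α → ℝ) : ∑ u, F u * r u = (∑ u with r u = 1, F u) - ∑ u with ¬ r u = 1, F u := by
  rw [Finset.sum_filter, Finset.sum_filter, ← Finset.sum_sub_distrib]
  refine Finset.sum_congr rfl fun u _ => ?_
  rcases hr u with h | h <;> norm_num [h]

variable [Fintype α] [Fintype β]

theorem CutBound.sum_mul_mul_le {M : α → β → ℝ} {C : ℝ} (h : CutBound M C) {p : α → ℝ}
    {q : β → ℝ} (hp : ∀ u, p u = 1 ∨ p u = -1) (hq : ∀ v, q v = 1 ∨ q v = -1) :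
    ∑ u, ∑ v, M u v * q v * p u ≤ 4 * C := by
  simp_rw [← Finset.sum_mul, sum_mul_eq_sum_sub_sum hp, sum_mul_eq_sum_sub_sum hq,
    Finset.sum_sub_distrib]
  have hpp := abs_le.mp (h {u | p u = 1} {v | q v = 1})
  have hpn := abs_le.mp (h {u | p u = 1} {v | ¬ q v = 1})
  have hnp := abs_le.mp (h {u | ¬ p u = 1} {v | q v = 1})
  have hnn := abs_le.mp (h {u | ¬ p u = 1} {v | ¬ q v = 1})
  linarith [hpp.2, hpn.1, hnp.1, hnn.2]

/-- The squared Frobenius norm of `Mᵀ M`, an upper bound for the fourth power of the operator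
norm of `M`. -/
noncomputable def gramSq (M : α → β → ℝ) : ℝ :=
  ∑ a, ∑ a', (∑ u, M u a * M u a') ^ 2

theorem gramSq_nonneg (M : α → β → ℝ) : 0 ≤ gramSq M :=
  Finset.sum_nonneg fun _ _ => Finset.sum_nonneg fun _ _ => sq_nonneg _

theorem CutBound.gramSq_le {M : α → β → ℝ} {C : ℝ} (h : CutBound M C)
    (hM : ∀ u v, M u v = 1 ∨ M u v = -1) :
    gramSq M ≤ 4 * C * (Fintype.card α * Fintype.card β) := by
  have expand : gramSq M = ∑ a', ∑ u', ∑ u, ∑ a, M u a * M u' a * (M u a' * M u' a') := by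
    have inner (a a' : β) : (∑ u, M u a * M u a') ^ 2 =
        ∑ u', ∑ u, M u a * M u' a * (M u a' * M u' a') := by
      rw [sq, Finset.sum_mul_sum, Finset.sum_comm]
      exact Finset.sum_congr rfl fun _ _ => Finset.sum_congr rfl fun _ _ => by ring
    unfold gramSq
    simp_rw [inner]
    rw [Finset.sum_comm]
    refine Finset.sum_congr rfl fun _ _ => ?_
    rw [Finset.sum_comm]
    exact Finset.sum_congr rfl fun _ _ => Finset.sum_comm
  have sign_mul (u u' : α) (a' : β) : M u a' * M u' a' = 1 ∨ M u a' * M u' a' = -1 := by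
    rcases hM u a' with h | h <;> rcases hM u' a' with h' | h' <;> norm_num [h, h']
  calc gramSq M ≤ ∑ _a' : β, ∑ _u' : α, 4 * C := by
        rw [expand]
        exact Finset.sum_le_sum fun a' _ => Finset.sum_le_sum fun u' _ =>
          h.sum_mul_mul_le (fun u => sign_mul u u' a') (hM u')
    _ = 4 * C * (Fintype.card α * Fintype.card β) := by
        simp only [Finset.sum_const, Finset.card_univ, nsmul_eq_mul]; ring

variable {κ : Type} [Fintype κ] [DecidableEq κ]

theorem sum_sq_prod_gram (M : α → β → ℝ) :
    ∑ v : κ → β, ∑ v' : κ → β, (∏ i, ∑ u, M u (v i) * M u (v' i)) ^ 2 =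
      gramSq M ^ Fintype.card κ := by
  simp_rw [← Finset.prod_pow]
  calc ∑ v : κ → β, ∑ v' : κ → β, ∏ i, (∑ u, M u (v i) * M u (v' i)) ^ 2
      = ∑ v : κ → β, ∏ i, ∑ a', (∑ u, M u (v i) * M u a') ^ 2 :=
        Finset.sum_congr rfl fun v _ =>
          (Fintype.prod_sum fun i a' => (∑ u, M u (v i) * M u a') ^ 2).symm
    _ = ∏ _i : κ, gramSq M := (Fintype.prod_sum fun _ a => ∑ a', (∑ u, M u a * M u a') ^ 2).symm
    _ = gramSq M ^ Fintype.card κ := by rw [Finset.prod_const, Finset.card_univ]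

theorem sum_sq_sum_prod_mul (M : α → β → ℝ) (c : (κ → β) → ℝ) :
    ∑ u : κ → α, (∑ v, (∏ i, M (u i) (v i)) * c v) ^ 2 =
      ∑ v, ∑ v', c v * c v' * ∏ i, ∑ a, M a (v i) * M a (v' i) := by
  have expand (u : κ → α) : (∑ v, (∏ i, M (u i) (v i)) * c v) ^ 2 =
      ∑ v, ∑ v', c v * c v' * ∏ i, M (u i) (v i) * M (u i) (v' i) := by
    rw [sq, Finset.sum_mul_sum]
    refine Finset.sum_congr rfl fun v _ => Finset.sum_congr rfl fun v' _ => ?_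
    rw [Finset.prod_mul_distrib]
    ring
  simp_rw [expand]
  rw [Finset.sum_comm]
  refine Finset.sum_congr rfl fun v _ => ?_
  rw [Finset.sum_comm]
  refine Finset.sum_congr rfl fun v' _ => ?_
  rw [← Finset.mul_sum, Fintype.prod_sum fun i a => M a (v i) * M a (v' i)]

theorem sum_sq_tensor_le {M : α → β → ℝ} {D : ℝ} (hD : 0 ≤ D) (hM : gramSq M ≤ D ^ 2)
    (c : (κ → β) → ℝ) :
    ∑ u : κ → α, (∑ v, (∏ i, M (u i) (v i)) * c v) ^ 2 ≤ D ^ Fintype.card κ * ∑ v, c v ^ 2 := by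
  have cauchy_schwarz : (∑ v, ∑ v', c v * c v' * ∏ i, ∑ a, M a (v i) * M a (v' i)) ^ 2 ≤
      (∑ v, c v ^ 2) ^ 2 * gramSq M ^ Fintype.card κ := by
    have h := Finset.sum_mul_sq_le_sq_mul_sq (Finset.univ : Finset ((κ → β) × (κ → β)))
      (fun p => c p.1 * c p.2) (fun p => ∏ i, ∑ a, M a (p.1 i) * M a (p.2 i))
    simp only [Fintype.sum_prod_type, mul_pow, ← Finset.sum_mul_sum] at h
    rwa [sum_sq_prod_gram, ← sq] at h
  rw [sum_sq_sum_prod_mul]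
  refine (abs_le_of_sq_le_sq' ?_ (by positivity)).2
  calc _ ≤ (∑ v, c v ^ 2) ^ 2 * gramSq M ^ Fintype.card κ := cauchy_schwarz
    _ ≤ (∑ v, c v ^ 2) ^ 2 * (D ^ 2) ^ Fintype.card κ := by
        gcongr
        exact gramSq_nonneg M
    _ = (D ^ Fintype.card κ * ∑ v, c v ^ 2) ^ 2 := by ring

end Spectral

section Fibers

theorem sum_sq_card_fiber_le {α β : Type} [Fintype β] [DecidableEq β] {s : Finset α} {f : α → β}
    {F : ℝ} (hF : ∀ a ∈ s, (Finset.card {x ∈ s | f x = f a} : ℝ) ≤ F) :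
    ∑ b, (Finset.card {x ∈ s | f x = b} : ℝ) ^ 2 ≤ s.card * F := by
  calc ∑ b, (Finset.card {x ∈ s | f x = b} : ℝ) ^ 2
      = ∑ a ∈ s, (Finset.card {x ∈ s | f x = f a} : ℝ) := by
        rw [← Finset.sum_fiberwise' s f fun b => (Finset.card {x ∈ s | f x = b} : ℝ)]
        simp only [Finset.sum_const, nsmul_eq_mul, sq]
    _ ≤ s.card * F := by
        rw [← nsmul_eq_mul]
        exact Finset.sum_le_card_nsmul s _ F hF

theorem sum_comp_le_mul_sum {α β : Type} [Fintype β] [DecidableEq β] {s : Finset α} {f : α → β}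
    {F : ℝ} (hF : ∀ b, (Finset.card {x ∈ s | f x = b} : ℝ) ≤ F) {h : β → ℝ} (hh : ∀ b, 0 ≤ h b) :
    ∑ a ∈ s, h (f a) ≤ F * ∑ b, h b := by
  rw [← Finset.sum_fiberwise' s f h, Finset.mul_sum]
  refine Finset.sum_le_sum fun b _ => ?_
  rw [Finset.sum_const, nsmul_eq_mul]
  exact mul_le_mul_of_nonneg_right (hF b) (hh b)

variable {Λ ι : Type}

/-- The fiber of `X` over the values of `w` on the coordinates in `K`. -/
noncomputable def fiber (X : Finset (ι → Λ)) (K : Finset ι) (w : ι → Λ) : Finset (ι → Λ) :=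
  {x ∈ X | ∀ i ∈ K, x i = w i}

theorem mem_fiber {X : Finset (ι → Λ)} {K : Finset ι} {w x : ι → Λ} :
    x ∈ fiber X K w ↔ x ∈ X ∧ ∀ i ∈ K, x i = w i :=
  Finset.mem_filter

theorem filter_restrict_eq_fiber (X : Finset (ι → Λ)) (K : Finset ι) (w : ι → Λ) :
    {x ∈ X | K.restrict x = K.restrict w} = fiber X K w := by
  ext x
  simp [mem_fiber, funext_iff]

/-- The sign `±1` of a bit. -/
noncomputable def bitSign (b : Bool) : ℝ := if b then -1 else 1

theorem bitSign_eq_or (b : Bool) : bitSign b = 1 ∨ bitSign b = -1 := by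
  cases b <;> simp [bitSign]

/-- The sign of the parity of the gadget values in the coordinates of `K`. -/
noncomputable def paritySign (gd : Λ → Λ → Bool) (K : Finset ι) (x y : ι → Λ) : ℝ :=
  ∏ i ∈ K, bitSign (gd (x i) (y i))

theorem abs_paritySign (gd : Λ → Λ → Bool) (K : Finset ι) (x y : ι → Λ) :
    |paritySign gd K x y| = 1 := by
  rw [paritySign, Finset.abs_prod]
  exact Finset.prod_eq_one fun i _ => by
    rcases bitSign_eq_or (gd (x i) (y i)) with h | h <;> simp [h]

theorem paritySign_eq_prod_restrict (gd : Λ → Λ → Bool) (K : Finset ι) (x y : ι → Λ) :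
    paritySign gd K x y = ∏ i, bitSign (gd (K.restrict x i) (K.restrict y i)) :=
  (Finset.prod_coe_sort K fun i => bitSign (gd (x i) (y i))).symm

theorem card_filter_restrict_le {X : Finset (ι → Λ)} {K : Finset ι} {F : ℝ} (hF : 0 ≤ F)
    (h : ∀ w, ((fiber X K w).card : ℝ) ≤ F) (u : K → Λ) :
    (Finset.card {x ∈ X | K.restrict x = u} : ℝ) ≤ F := by
  rcases Finset.eq_empty_or_nonempty {x ∈ X | K.restrict x = u} with hu | ⟨x, hx⟩
  · simpa [hu] using hF
  · rw [← (Finset.mem_filter.mp hx).2, filter_restrict_eq_fiber]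
    exact h x

theorem sum_sq_sum_paritySign_le [Fintype Λ] [DecidableEq ι] {gd : Λ → Λ → Bool} {D : ℝ}
    (hD : 0 ≤ D) (hgd : gramSq (fun u v => bitSign (gd u v)) ≤ D ^ 2) {X Y : Finset (ι → Λ)}
    {K₁ K₂ : Finset ι} {FX FY : ℝ} (hFX : 0 ≤ FX) (hX : ∀ w, ((fiber X K₁ w).card : ℝ) ≤ FX)
    (hY : ∀ w, ((fiber Y (K₁ ∪ K₂) w).card : ℝ) ≤ FY) :
    ∑ x ∈ X, ∑ γ : K₂ → Λ, (∑ y ∈ Y with K₂.restrict y = γ, paritySign gd K₁ x y) ^ 2 ≤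
      FX * D ^ K₁.card * (Y.card * FY) := by
  set c : (K₂ → Λ) → (K₁ → Λ) → ℝ := fun γ v =>
    (Finset.card {y ∈ {y ∈ Y | K₂.restrict y = γ} | K₁.restrict y = v} : ℝ) with hc
  have group (x : ι → Λ) (γ : K₂ → Λ) :
      ∑ y ∈ Y with K₂.restrict y = γ, paritySign gd K₁ x y =
        ∑ v, (∏ i, bitSign (gd (K₁.restrict x i) (v i))) * c γ v := by
    simp_rw [paritySign_eq_prod_restrict]
    rw [← Finset.sum_fiberwise' _ (fun y : ι → Λ => K₁.restrict y)
      fun v => ∏ i, bitSign (gd (K₁.restrict x i) (v i))]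
    simp only [hc, Finset.sum_const, nsmul_eq_mul, mul_comm]
  have slice (γ : K₂ → Λ) :
      ∑ x ∈ X, (∑ v, (∏ i, bitSign (gd (K₁.restrict x i) (v i))) * c γ v) ^ 2 ≤
        FX * (D ^ K₁.card * ∑ v, c γ v ^ 2) := by
    refine (sum_comp_le_mul_sum (card_filter_restrict_le hFX hX) fun u => sq_nonneg
      (∑ v, (∏ i, bitSign (gd (u i) (v i))) * c γ v)).trans ?_
    gcongr
    simpa only [Fintype.card_coe] using sum_sq_tensor_le (κ := K₁) hD hgd (c γ)
  have collisions : ∑ γ, ∑ v, c γ v ^ 2 ≤ Y.card * FY := by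
    rw [← Fintype.sum_prod_type']
    simp only [hc, Finset.filter_filter]
    have h := sum_sq_card_fiber_le (s := Y) (f := fun y => (K₂.restrict y, K₁.restrict y))
      (F := FY) fun y _ => ?_
    · simpa only [Prod.ext_iff] using h
    · refine le_trans (Nat.cast_le.mpr (Finset.card_le_card fun z hz => ?_)) (hY y)
      simp only [Finset.mem_filter, Prod.ext_iff, funext_iff, Finset.restrict, Subtype.forall] at hz
      exact mem_fiber.mpr ⟨hz.1, fun i hi => (Finset.mem_union.mp hi).elim (hz.2.2 i) (hz.2.1 i)⟩
  calc _ = ∑ γ, ∑ x ∈ X, (∑ v, (∏ i, bitSign (gd (K₁.restrict x i) (v i))) * c γ v) ^ 2 := by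
        rw [Finset.sum_comm]
        simp_rw [group]
    _ ≤ ∑ γ, FX * (D ^ K₁.card * ∑ v, c γ v ^ 2) := Finset.sum_le_sum fun γ _ => slice γ
    _ = FX * D ^ K₁.card * ∑ γ, ∑ v, c γ v ^ 2 := by
        rw [← Finset.mul_sum, ← Finset.mul_sum, mul_assoc]
    _ ≤ FX * D ^ K₁.card * (Y.card * FY) := by gcongr

end Fibers

/-! ### Dense sets and balanced points -/

section Density

theorem one_add_pow_le {n : ℕ} {q : ℝ} (hq : 0 ≤ q) (h : 4 * n * q ≤ 1) :
    (1 + q) ^ n ≤ 4 / 3 := by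
  calc (1 + q) ^ n ≤ Real.exp q ^ n := by
        gcongr
        linarith [Real.add_one_le_exp q]
    _ = Real.exp (n * q) := (Real.exp_nat_mul q n).symm
    _ ≤ Real.exp (1 / 4) := Real.exp_le_exp.mpr (by linarith)
    _ ≤ 1 / (1 - 1 / 4) := Real.exp_bound_div_one_sub_of_interval (by norm_num) (by norm_num)
    _ = 4 / 3 := by norm_num

theorem sum_powerset_pow_card_le {ι : Type} {J : Finset ι} {q : ℝ} (hq : 0 ≤ q)
    (h : 4 * J.card * q ≤ 1) : ∑ K ∈ J.powerset, q ^ K.card ≤ 4 / 3 := by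
  have binomial := Finset.sum_pow_mul_eq_add_pow q 1 J
  simp only [one_pow, mul_one] at binomial
  rw [binomial, add_comm]
  exact one_add_pow_le hq h

theorem sum_powerset_erase_empty_pow_card_le {ι : Type} [DecidableEq ι] {J : Finset ι} {q : ℝ}
    (hq : 0 ≤ q) (h : 4 * J.card * q ≤ 1) :
    ∑ K ∈ J.powerset.erase ∅, q ^ K.card ≤ 1 / 3 := by
  have hsum := sum_powerset_pow_card_le hq h
  rw [Finset.sum_erase_eq_sub (Finset.empty_mem_powerset J), Finset.card_empty, pow_zero]
  linarith

variable {Λ ι : Type}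

/-- Fixing any `k` of the coordinates in `J` shrinks `X` by a factor of at least `b ^ (p * k)`,
i.e. `X` has blockwise min-entropy rate at least `p` over the alphabet size `b`. -/
def BlockDense (b : ℝ) (X : Finset (ι → Λ)) (J : Finset ι) (p : ℕ) : Prop :=
  ∀ K ⊆ J, ∀ w, ((fiber X K w).card : ℝ) * (b ^ K.card) ^ p ≤ X.card

/-- The gadget has small enough spectral norm, compared to the density scale `b`, for pruning to
work with correlations below `N⁻¹` per coordinate. -/
structure LiftingParameters (ι : Type) [Fintype ι] [Fintype Λ] (b N D : ℝ) (r : ℕ)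
    (gd : Λ → Λ → Bool) : Prop where
  four_mul_card_le : 4 * (Fintype.card ι : ℝ) ≤ N
  four_le : 4 ≤ N
  two_mul_pow_le : 2 * N ^ (r + 4) ≤ b
  sixtyFour_le : 64 ≤ b
  norm_nonneg : 0 ≤ D
  norm_mul_le : D * b ^ 2 ≤ 2 * (b ^ r) ^ 2
  gramSq_le : gramSq (fun u v => bitSign (gd u v)) ≤ D ^ 2
  gramSq_swap_le : gramSq (fun u v => bitSign (gd v u)) ≤ D ^ 2
  card_eq : (Fintype.card Λ : ℝ) = b ^ (r + 3)

namespace LiftingParameters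

variable [Fintype Λ] [Fintype ι] {b N D : ℝ} {r : ℕ} {gd : Λ → Λ → Bool}

theorem swap (h : LiftingParameters ι b N D r gd) :
    LiftingParameters ι b N D r (Function.swap gd) :=
  { h with gramSq_le := h.gramSq_swap_le, gramSq_swap_le := h.gramSq_le }

theorem pos (h : LiftingParameters ι b N D r gd) : 0 < b := by linarith [h.sixtyFour_le]

theorem pos_correlation (h : LiftingParameters ι b N D r gd) : 0 < N := by linarith [h.four_le]

theorem four_mul_card_mul_le (h : LiftingParameters ι b N D r gd) (J : Finset ι) {q : ℝ}
    (hq : 0 ≤ q) (hNq : N * q ≤ 1) : 4 * (J.card : ℝ) * q ≤ 1 := by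
  have hJ : (J.card : ℝ) ≤ Fintype.card ι := Nat.cast_le.mpr J.card_le_univ
  exact (mul_le_mul_of_nonneg_right (by linarith [h.four_mul_card_le]) hq).trans hNq

end LiftingParameters

/-- No nontrivial parity of gadget values at `x` is noticeably correlated with `y ∈ Y`, even after
fixing further coordinates of `y`. -/
def IsBalanced (b N : ℝ) (r : ℕ) (gd : Λ → Λ → Bool) (Y : Finset (ι → Λ)) (J : Finset ι)
    (x : ι → Λ) : Prop :=
  ∀ K₁ ⊆ J, K₁.Nonempty → ∀ K₂ ⊆ J, Disjoint K₁ K₂ → ∀ w,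
    |∑ y ∈ fiber Y K₂ w, paritySign gd K₁ x y| * ((b ^ K₂.card) ^ (r + 1) * N ^ K₁.card) ≤ Y.card

/-- The points of `X` at which `IsBalanced` fails for the pair `K₁`, `K₂`. -/
noncomputable def unbalanced (b N : ℝ) (r : ℕ) (gd : Λ → Λ → Bool) (X Y : Finset (ι → Λ))
    (K₁ K₂ : Finset ι) : Finset (ι → Λ) :=
  {x ∈ X | ∃ w, (Y.card : ℝ) <
    |∑ y ∈ fiber Y K₂ w, paritySign gd K₁ x y| * ((b ^ K₂.card) ^ (r + 1) * N ^ K₁.card)}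

theorem mem_unbalanced {b N : ℝ} {r : ℕ} {gd : Λ → Λ → Bool} {X Y : Finset (ι → Λ)}
    {K₁ K₂ : Finset ι} {x : ι → Λ} : x ∈ unbalanced b N r gd X Y K₁ K₂ ↔ x ∈ X ∧ ∃ w,
      (Y.card : ℝ) <
        |∑ y ∈ fiber Y K₂ w, paritySign gd K₁ x y| * ((b ^ K₂.card) ^ (r + 1) * N ^ K₁.card) :=
  Finset.mem_filter

theorem filter_not_isBalanced_subset {b N : ℝ} {r : ℕ} {gd : Λ → Λ → Bool} {X Y : Finset (ι → Λ)}
    {J : Finset ι} [DecidableEq (ι → Λ)] :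
    {x ∈ X | ¬ IsBalanced b N r gd Y J x} ⊆
      {K ∈ J.powerset.erase ∅ ×ˢ J.powerset | Disjoint K.1 K.2}.biUnion
        fun K => unbalanced b N r gd X Y K.1 K.2 := by
  intro x hx
  obtain ⟨hxX, hx⟩ := Finset.mem_filter.mp hx
  unfold IsBalanced at hx
  push Not at hx
  obtain ⟨K₁, hK₁, hne, K₂, hK₂, hdisj, w, hw⟩ := hx
  refine Finset.mem_biUnion.mpr ⟨(K₁, K₂), ?_, mem_unbalanced.mpr ⟨hxX, w, hw⟩⟩
  simp [hne.ne_empty, hK₁, hK₂, hdisj]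

theorem abs_sum_paritySign_le (gd : Λ → Λ → Bool) (Y : Finset (ι → Λ)) (K : Finset ι)
    (x : ι → Λ) : |∑ y ∈ Y, paritySign gd K x y| ≤ Y.card := by
  refine (Finset.abs_sum_le_sum_abs _ _).trans ?_
  simp [abs_paritySign]

theorem unbalanced_eq_empty {b N : ℝ} {r : ℕ} {gd : Λ → Λ → Bool} {X Y : Finset (ι → Λ)}
    {J K₁ K₂ : Finset ι} (hb : 0 ≤ b) (hN : 0 ≤ N) (hY : BlockDense b Y J (r + 2)) (hK₂ : K₂ ⊆ J)
    (hNb : N ^ K₁.card ≤ b ^ K₂.card) : unbalanced b N r gd X Y K₁ K₂ = ∅ := by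
  refine Finset.filter_eq_empty_iff.mpr fun x _ ⟨w, hw⟩ => hw.not_ge ?_
  calc |∑ y ∈ fiber Y K₂ w, paritySign gd K₁ x y| * ((b ^ K₂.card) ^ (r + 1) * N ^ K₁.card)
      ≤ (fiber Y K₂ w).card * ((b ^ K₂.card) ^ (r + 1) * b ^ K₂.card) := by
        gcongr
        exact abs_sum_paritySign_le gd _ K₁ x
    _ = (fiber Y K₂ w).card * (b ^ K₂.card) ^ (r + 2) := by ring
    _ ≤ Y.card := hY K₂ hK₂ w

theorem card_unbalanced_mul_sq_le [Fintype Λ] [DecidableEq ι] {b N : ℝ} {r : ℕ} {gd : Λ → Λ → Bool}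
    (hb : 0 < b) (hN : 0 < N) (X Y : Finset (ι → Λ)) (K₁ K₂ : Finset ι) :
    (unbalanced b N r gd X Y K₁ K₂).card *
        ((Y.card : ℝ) / ((b ^ K₂.card) ^ (r + 1) * N ^ K₁.card)) ^ 2 ≤
      ∑ x ∈ X, ∑ γ : K₂ → Λ, (∑ y ∈ Y with K₂.restrict y = γ, paritySign gd K₁ x y) ^ 2 := by
  have subset : unbalanced b N r gd X Y K₁ K₂ ⊆ X := Finset.filter_subset _ X
  refine le_trans ?_ (Finset.sum_le_sum_of_subset_of_nonneg subset
    fun _ _ _ => Finset.sum_nonneg fun _ _ => sq_nonneg _)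
  rw [← nsmul_eq_mul]
  refine Finset.card_nsmul_le_sum _ _ _ fun x hx => ?_
  obtain ⟨-, w, hw⟩ := mem_unbalanced.mp hx
  have large := (div_lt_iff₀ (by positivity)).mpr hw
  calc _ ≤ (∑ y ∈ Y with K₂.restrict y = K₂.restrict w, paritySign gd K₁ x y) ^ 2 := by
        rw [filter_restrict_eq_fiber, ← sq_abs (∑ y ∈ fiber Y K₂ w, _)]
        gcongr
    _ ≤ _ := Finset.single_le_sum
        (f := fun γ => (∑ y ∈ Y with K₂.restrict y = γ, paritySign gd K₁ x y) ^ 2)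
        (fun _ _ => sq_nonneg _) (Finset.mem_univ (K₂.restrict w))

/-- The arithmetic of Chebyshev's inequality for `unbalanced`, with `u = b ^ #K₁`, `v = b ^ #K₂`,
`M = N ^ #K₁`, `E = D ^ #K₁` and `T = 2 ^ #K₁`. -/
theorem le_of_second_moment_le {n a y u v M E T : ℝ} {r : ℕ} (ha : 0 ≤ a) (hy : 0 < y)
    (hu : 0 < u) (hv : 0 < v) (hM : 0 < M) (hT : 0 ≤ T)
    (h : n * (y / (v ^ (r + 1) * M)) ^ 2 ≤ a / u ^ r * E * (y * (y / (u * v) ^ (r + 2))))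
    (hE : E * u ^ 2 ≤ T * (u ^ r) ^ 2) (hvM : v ≤ M) :
    n ≤ a * (T * M ^ (r + 3) / (u ^ 4 * v)) := by
  calc n = n * (y / (v ^ (r + 1) * M)) ^ 2 * (v ^ (r + 1) * M / y) ^ 2 := by field_simp
    _ ≤ a / u ^ r * E * (y * (y / (u * v) ^ (r + 2))) * (v ^ (r + 1) * M / y) ^ 2 := by gcongr
    _ = a * (E * u ^ 2 * (M ^ 2 * v ^ (r + 1))) / ((u ^ r) ^ 2 * u ^ 4 * v) := by
        field_simp
        ring
    _ ≤ a * (T * (u ^ r) ^ 2 * (M ^ 2 * M ^ (r + 1))) / ((u ^ r) ^ 2 * u ^ 4 * v) := by gcongr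
    _ = a * (T * M ^ (r + 3) / (u ^ 4 * v)) := by
        field_simp
        ring

section Pruning

variable [Fintype Λ] [Fintype ι] {b N D : ℝ} {r : ℕ} {gd : Λ → Λ → Bool}
  {X Y : Finset (ι → Λ)} {J : Finset ι}

theorem card_unbalanced_le (hP : LiftingParameters ι b N D r gd) (hX : BlockDense b X J r)
    (hY : BlockDense b Y J (r + 2)) {K₁ K₂ : Finset ι} (hK₁ : K₁ ⊆ J) (hK₂ : K₂ ⊆ J)
    (hdisj : Disjoint K₁ K₂) :
    ((unbalanced b N r gd X Y K₁ K₂).card : ℝ) ≤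
      X.card * ((2 * N ^ (r + 3) / b ^ 4) ^ K₁.card * (1 / b) ^ K₂.card) := by
  have hb := hP.pos
  have hN := hP.pos_correlation
  rcases (unbalanced b N r gd X Y K₁ K₂).eq_empty_or_nonempty with hempty | ⟨x, hx⟩
  · rw [hempty, Finset.card_empty, Nat.cast_zero]
    positivity
  have hNb : b ^ K₂.card ≤ N ^ K₁.card := by
    by_contra! hlt
    rw [unbalanced_eq_empty hb.le hN.le hY hK₂ hlt.le] at hx
    exact Finset.notMem_empty x hx
  have hYpos : (0 : ℝ) < Y.card := by
    obtain ⟨-, w, hw⟩ := mem_unbalanced.mp hx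
    rcases Y.eq_empty_or_nonempty with rfl | hne
    · simp [fiber] at hw
    · exact Nat.cast_pos.mpr hne.card_pos
  have moment := (card_unbalanced_mul_sq_le (r := r) hb hN X Y K₁ K₂).trans
    (sum_sq_sum_paritySign_le hP.norm_nonneg hP.gramSq_le
      (FX := X.card / (b ^ K₁.card) ^ r) (FY := Y.card / (b ^ K₁.card * b ^ K₂.card) ^ (r + 2))
      (by positivity)
      (fun w => (le_div_iff₀ (by positivity)).mpr (hX K₁ hK₁ w))
      (fun w => (le_div_iff₀ (by positivity)).mpr <| by
        simpa only [Finset.card_union_of_disjoint hdisj, pow_add]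
          using hY (K₁ ∪ K₂) (Finset.union_subset hK₁ hK₂) w))
  have hD : D ^ K₁.card * (b ^ K₁.card) ^ 2 ≤ 2 ^ K₁.card * ((b ^ K₁.card) ^ r) ^ 2 := by
    have := hP.norm_nonneg
    have h := pow_le_pow_left₀ (by positivity) hP.norm_mul_le K₁.card
    calc _ = (D * b ^ 2) ^ K₁.card := by ring
      _ ≤ _ := h
      _ = _ := by ring
  refine (le_of_second_moment_le (Nat.cast_nonneg _) hYpos (by positivity) (by positivity)
    (by positivity) (by positivity) moment hD hNb).trans_eq ?_
  simp only [div_pow, mul_pow, one_pow]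
  field_simp
  ring

theorem card_le_two_mul_card_filter_isBalanced (hP : LiftingParameters ι b N D r gd)
    (hX : BlockDense b X J r) (hY : BlockDense b Y J (r + 2)) :
    (X.card : ℝ) ≤ 2 * (Finset.card {x ∈ X | IsBalanced b N r gd Y J x} : ℝ) := by
  have hb := hP.pos
  have hN := hP.pos_correlation
  have one_le_N : 1 ≤ N := by linarith [hP.four_le]
  have one_le_b : 1 ≤ b := by linarith [hP.sixtyFour_le]
  set q₁ := 2 * N ^ (r + 3) / b ^ 4
  have hq₁ : N * q₁ ≤ 1 := by
    calc N * q₁ = 2 * N ^ (r + 4) / b ^ 4 := by ring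
      _ ≤ b / b ^ 4 := by gcongr; exact hP.two_mul_pow_le
      _ ≤ 1 := div_le_one_of_le₀ (le_self_pow₀ one_le_b (by norm_num)) (by positivity)
  have hq₂ : N * (1 / b) ≤ 1 := by
    rw [mul_one_div, div_le_one hb]
    linarith [hP.two_mul_pow_le, le_self_pow₀ one_le_N (by omega : r + 4 ≠ 0)]
  set pairs := {K ∈ J.powerset.erase ∅ ×ˢ J.powerset | Disjoint K.1 K.2} with hpairs
  have few : (Finset.card {x ∈ X | ¬ IsBalanced b N r gd Y J x} : ℝ) ≤
      X.card * (1 / 3 * (4 / 3)) := by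
    calc _ ≤ ∑ K ∈ pairs, ((unbalanced b N r gd X Y K.1 K.2).card : ℝ) := by
          exact_mod_cast (Finset.card_le_card filter_not_isBalanced_subset).trans
            Finset.card_biUnion_le
      _ ≤ ∑ K ∈ pairs, X.card * (q₁ ^ K.1.card * (1 / b) ^ K.2.card) := by
          refine Finset.sum_le_sum fun K hK => ?_
          simp only [hpairs, Finset.mem_filter, Finset.mem_product, Finset.mem_erase,
            Finset.mem_powerset] at hK
          exact card_unbalanced_le hP hX hY hK.1.1.2 hK.1.2 hK.2
      _ ≤ ∑ K ∈ J.powerset.erase ∅ ×ˢ J.powerset, X.card * (q₁ ^ K.1.card * (1 / b) ^ K.2.card) :=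
          Finset.sum_le_sum_of_subset_of_nonneg (Finset.filter_subset _ _)
            fun _ _ _ => by positivity
      _ = X.card * ((∑ K ∈ J.powerset.erase ∅, q₁ ^ K.card) *
            ∑ K ∈ J.powerset, (1 / b) ^ K.card) := by
          rw [← Finset.mul_sum, Finset.sum_product, Finset.sum_mul_sum]
      _ ≤ X.card * (1 / 3 * (4 / 3)) := by
          gcongr
          · exact sum_powerset_erase_empty_pow_card_le (by positivity)
              (hP.four_mul_card_mul_le J (by positivity) hq₁)
          · exact sum_powerset_pow_card_le (by positivity)
              (hP.four_mul_card_mul_le J (by positivity) hq₂)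
  have total : (Finset.card {x ∈ X | IsBalanced b N r gd Y J x} : ℝ) +
      Finset.card {x ∈ X | ¬ IsBalanced b N r gd Y J x} = X.card := by
    exact_mod_cast Finset.card_filter_add_card_filter_not (IsBalanced b N r gd Y J)
  linarith [Nat.cast_nonneg (α := ℝ) X.card]

end Pruning

end Density

section Consistency

variable {Λ ι : Type}

/-- The points of `Y` whose gadget values with `x` agree with `z` on `K`. -/
noncomputable def consistent (gd : Λ → Λ → Bool) (Y : Finset (ι → Λ)) (K : Finset ι) (x : ι → Λ)
    (z : ι → Bool) : Finset (ι → Λ) :=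
  {y ∈ Y | ∀ i ∈ K, gd (x i) (y i) = z i}

theorem mem_consistent {gd : Λ → Λ → Bool} {Y : Finset (ι → Λ)} {K : Finset ι} {x y : ι → Λ}
    {z : ι → Bool} : y ∈ consistent gd Y K x z ↔ y ∈ Y ∧ ∀ i ∈ K, gd (x i) (y i) = z i :=
  Finset.mem_filter

theorem consistent_fiber (gd : Λ → Λ → Bool) (Y : Finset (ι → Λ)) (K K' : Finset ι) (x w : ι → Λ)
    (z : ι → Bool) :
    consistent gd (fiber Y K' w) K x z = fiber (consistent gd Y K x z) K' w :=
  Finset.filter_comm _ _ _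

theorem one_add_bitSign_mul (a c : Bool) :
    1 + bitSign a * bitSign c = if c = a then (2 : ℝ) else 0 := by
  cases a <;> cases c <;> norm_num [bitSign]

theorem two_pow_mul_card_consistent (gd : Λ → Λ → Bool) (Y : Finset (ι → Λ)) (K : Finset ι)
    (x : ι → Λ) (z : ι → Bool) : (2 : ℝ) ^ K.card * (consistent gd Y K x z).card =
      ∑ K' ∈ K.powerset, (∏ i ∈ K', bitSign (z i)) * ∑ y ∈ Y, paritySign gd K' x y := by
  have indicator (y : ι → Λ) : ∑ K' ∈ K.powerset, (∏ i ∈ K', bitSign (z i)) * paritySign gd K' x y =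
      if ∀ i ∈ K, gd (x i) (y i) = z i then (2 : ℝ) ^ K.card else 0 := by
    simp_rw [paritySign, ← Finset.prod_mul_distrib, ← Finset.prod_one_add, one_add_bitSign_mul]
    rw [Finset.prod_ite_zero, Finset.prod_const]
  calc (2 : ℝ) ^ K.card * (consistent gd Y K x z).card
      = ∑ y ∈ Y, if ∀ i ∈ K, gd (x i) (y i) = z i then (2 : ℝ) ^ K.card else 0 := by
        rw [← Finset.sum_filter, Finset.sum_const, nsmul_eq_mul, mul_comm]
        rfl
    _ = _ := by
        simp_rw [← indicator, Finset.mul_sum]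
        exact Finset.sum_comm

variable [Fintype Λ] [Fintype ι] {b N D : ℝ} {r : ℕ} {gd : Λ → Λ → Bool}
  {X Y : Finset (ι → Λ)} {J K : Finset ι} {x : ι → Λ}

namespace IsBalanced

theorem abs_sub_card_fiber_le (hP : LiftingParameters ι b N D r gd)
    (hx : IsBalanced b N r gd Y J x) {K' : Finset ι} (hK : K ⊆ J) (hK' : K' ⊆ J)
    (hdisj : Disjoint K K') (z : ι → Bool) (w : ι → Λ) :
    |(2 : ℝ) ^ K.card * (consistent gd (fiber Y K' w) K x z).card - (fiber Y K' w).card| *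
      (b ^ K'.card) ^ (r + 1) ≤ 1 / 3 * Y.card := by
  have hb := hP.pos
  have hN := hP.pos_correlation
  have nonconstant : (2 : ℝ) ^ K.card * (consistent gd (fiber Y K' w) K x z).card -
      (fiber Y K' w).card = ∑ K₁ ∈ K.powerset.erase ∅,
        (∏ i ∈ K₁, bitSign (z i)) * ∑ y ∈ fiber Y K' w, paritySign gd K₁ x y := by
    rw [two_pow_mul_card_consistent, Finset.sum_erase_eq_sub (Finset.empty_mem_powerset K)]
    simp [paritySign]
  have correlation {K₁ : Finset ι} (hK₁ : K₁ ∈ K.powerset.erase ∅) :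
      |(∏ i ∈ K₁, bitSign (z i)) * ∑ y ∈ fiber Y K' w, paritySign gd K₁ x y| *
        (b ^ K'.card) ^ (r + 1) ≤ (1 / N) ^ K₁.card * Y.card := by
    obtain ⟨hne, hsub⟩ := Finset.mem_erase.mp hK₁
    rw [Finset.mem_powerset] at hsub
    have sign : |∏ i ∈ K₁, bitSign (z i)| = 1 := by
      rw [Finset.abs_prod]
      exact Finset.prod_eq_one fun i _ => by rcases bitSign_eq_or (z i) with h | h <;> simp [h]
    have h := hx K₁ (hsub.trans hK) (Finset.nonempty_iff_ne_empty.mpr hne) K' hK'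
      (Finset.disjoint_of_subset_left hsub hdisj) w
    rw [abs_mul, sign, one_mul, one_div_pow, one_div_mul_eq_div, le_div_iff₀ (by positivity)]
    linarith
  rw [nonconstant]
  calc _ ≤ ∑ K₁ ∈ K.powerset.erase ∅, |(∏ i ∈ K₁, bitSign (z i)) *
          ∑ y ∈ fiber Y K' w, paritySign gd K₁ x y| * (b ^ K'.card) ^ (r + 1) := by
        rw [← Finset.sum_mul]
        gcongr
        exact Finset.abs_sum_le_sum_abs _ _
    _ ≤ (∑ K₁ ∈ K.powerset.erase ∅, (1 / N) ^ K₁.card) * Y.card := by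
        rw [Finset.sum_mul]
        exact Finset.sum_le_sum fun K₁ => correlation
    _ ≤ 1 / 3 * Y.card := by
        gcongr
        exact sum_powerset_erase_empty_pow_card_le (by positivity)
          (hP.four_mul_card_mul_le K (by positivity) (mul_one_div_cancel hN.ne').le)

theorem card_le (hP : LiftingParameters ι b N D r gd) (hx : IsBalanced b N r gd Y J x)
    (hK : K ⊆ J) (z : ι → Bool) :
    (Y.card : ℝ) ≤ 2 ^ (K.card + 1) * (consistent gd Y K x z).card := by
  have h := hx.abs_sub_card_fiber_le hP hK (Finset.empty_subset J) (Finset.disjoint_empty_right K)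
    z x
  have fiber_empty : fiber Y ∅ x = Y := by simp [fiber]
  rw [fiber_empty, Finset.card_empty, pow_zero, one_pow, mul_one] at h
  rw [pow_succ]
  linarith [(abs_le.mp h).1, Nat.cast_nonneg (α := ℝ) Y.card]

theorem consistent_nonempty (hP : LiftingParameters ι b N D r gd) (hx : IsBalanced b N r gd Y J x)
    (hY : Y.Nonempty) (hK : K ⊆ J) (z : ι → Bool) : (consistent gd Y K x z).Nonempty := by
  rw [Finset.nonempty_iff_ne_empty]
  intro hempty
  have h := hx.card_le hP hK z
  rw [hempty, Finset.card_empty, Nat.cast_zero, mul_zero] at h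
  exact h.not_gt (Nat.cast_pos.mpr hY.card_pos)

theorem blockDense_consistent [DecidableEq ι] (hP : LiftingParameters ι b N D r gd)
    (hx : IsBalanced b N r gd Y J x) (hY : BlockDense b Y J (r + 2)) (hK : K ⊆ J) (z : ι → Bool) :
    BlockDense b (consistent gd Y K x z) (J \ K) r := by
  intro K' hK' w
  rcases K'.eq_empty_or_nonempty with rfl | hne
  · simp [fiber]
  obtain ⟨hK'J, hdisj⟩ := Finset.subset_sdiff.mp hK'
  have lower := hx.card_le hP hK z
  have deviation := hx.abs_sub_card_fiber_le hP hK hK'J hdisj.symm z w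
  have dense := hY K' hK'J w
  rw [consistent_fiber] at deviation
  have hv : 64 ≤ b ^ K'.card := hP.sixtyFour_le.trans
    (le_self_pow₀ (by linarith [hP.sixtyFour_le]) hne.card_pos.ne')
  set F := ((fiber (consistent gd Y K x z) K' w).card : ℝ)
  set v := b ^ K'.card
  have hF : 0 ≤ F := Nat.cast_nonneg _
  have upper : 2 ^ K.card * F * v ^ (r + 1) - (fiber Y K' w).card * v ^ (r + 1) ≤
      1 / 3 * Y.card := by
    rw [← sub_mul]
    exact (mul_le_mul_of_nonneg_right (le_abs_self _) (by positivity)).trans deviation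
  have fiber_small : ((fiber Y K' w).card : ℝ) * v ^ (r + 1) * 64 ≤ Y.card := by
    calc _ ≤ ((fiber Y K' w).card : ℝ) * v ^ (r + 1) * v := by gcongr
      _ = (fiber Y K' w).card * v ^ (r + 2) := by ring
      _ ≤ Y.card := dense
  have absorb : 2 ^ K.card * F * v ^ r * 64 ≤ 2 ^ K.card * F * v ^ (r + 1) := by
    rw [pow_succ v r, ← mul_assoc]
    gcongr
  refine le_of_mul_le_mul_left ?_ (by positivity : (0 : ℝ) < 2 ^ K.card)
  rw [pow_succ] at lower
  linarith [show (0 : ℝ) ≤ 2 ^ K.card * (consistent gd Y K x z).card by positivity]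

end IsBalanced

theorem exists_isBalanced_subset (hP : LiftingParameters ι b N D r gd) (hX : BlockDense b X J r)
    (hY : BlockDense b Y J (r + 2)) {A₀ A₁ : Set (ι → Λ)} (hcover : ↑X ⊆ A₀ ∪ A₁) :
    ∃ X' ⊆ X, (∀ x ∈ X', IsBalanced b N r gd Y J x) ∧ (↑X' ⊆ A₀ ∨ ↑X' ⊆ A₁) ∧
      (X.card : ℝ) ≤ 4 * X'.card := by
  have hpruned := card_le_two_mul_card_filter_isBalanced hP hX hY
  set P : Finset (ι → Λ) := {x ∈ X | IsBalanced b N r gd Y J x}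
  set U : Finset (ι → Λ) := {x ∈ P | x ∈ A₀}
  have hPX : P ⊆ X := Finset.filter_subset _ X
  have hUP : U ⊆ P := Finset.filter_subset _ P
  have balanced : ∀ x ∈ P, IsBalanced b N r gd Y J x := fun x hx => (Finset.mem_filter.mp hx).2
  have hsum : ((P \ U).card : ℝ) + U.card = P.card := by
    exact_mod_cast Finset.card_sdiff_add_card_eq_card hUP
  rcases le_total ((P \ U).card : ℝ) U.card with hle | hle
  · exact ⟨U, hUP.trans hPX, fun x hx => balanced x (hUP hx),
      .inl fun x hx => (Finset.mem_filter.mp hx).2, by linarith⟩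
  · refine ⟨P \ U, Finset.sdiff_subset.trans hPX,
      fun x hx => balanced x (Finset.sdiff_subset hx), .inr fun x hx => ?_, by linarith⟩
    obtain ⟨hxP, hxU⟩ := Finset.mem_sdiff.mp hx
    exact (hcover (hPX hxP)).resolve_left fun hxA => hxU (Finset.mem_filter.mpr ⟨hxP, hxA⟩)

theorem exists_forall_gadget_eq (hP : LiftingParameters ι b N D r gd) (hX : BlockDense b X J r)
    (hY : BlockDense b Y J (r + 2)) (hXne : X.Nonempty) (hYne : Y.Nonempty) (z : ι → Bool) :
    ∃ x ∈ X, ∃ y ∈ Y, ∀ i ∈ J, gd (x i) (y i) = z i := by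
  have hcard := card_le_two_mul_card_filter_isBalanced hP hX hY
  obtain ⟨x, hx⟩ : Finset.Nonempty {x ∈ X | IsBalanced b N r gd Y J x} := by
    rw [Finset.nonempty_iff_ne_empty]
    intro hempty
    rw [hempty, Finset.card_empty, Nat.cast_zero, mul_zero] at hcard
    exact hcard.not_gt (Nat.cast_pos.mpr hXne.card_pos)
  obtain ⟨hxX, hbal⟩ := Finset.mem_filter.mp hx
  obtain ⟨y, hy⟩ := hbal.consistent_nonempty hP hYne subset_rfl z
  exact ⟨x, hxX, y, mem_consistent.mp hy⟩

end Consistency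

/-! ### Simulation of decision trees -/

section Lifting

variable {Λ ι : Type} {b : ℝ}

theorem BlockDense.anti_exponent (hb : 1 ≤ b) {X : Finset (ι → Λ)} {J : Finset ι} {p q : ℕ}
    (hpq : p ≤ q) (h : BlockDense b X J q) : BlockDense b X J p := by
  intro K hK w
  refine le_trans ?_ (h K hK w)
  gcongr
  exact one_le_pow₀ hb

/-- Fixing `k` of the coordinates in `J` shrinks `𝒲` by as much as it would shrink `Λ ^ J`, up to a
factor of `4 ^ k`. -/
def NearlyUniform [Fintype Λ] (𝒲 : Finset (ι → Λ)) (J : Finset ι) : Prop :=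
  ∀ K ⊆ J, ∀ w, (fiber 𝒲 K w).card * Fintype.card Λ ^ K.card ≤ 4 ^ K.card * 𝒲.card

theorem NearlyUniform.card_mul_pow_le [Fintype Λ] {𝒲 X : Finset (ι → Λ)} {I J : Finset ι}
    (h : NearlyUniform 𝒲 J) (hX : X ⊆ 𝒲) (hI : I ⊆ J)
    (hconst : ∀ x ∈ X, ∀ x' ∈ X, ∀ i ∈ I, x i = x' i) :
    X.card * Fintype.card Λ ^ I.card ≤ 4 ^ I.card * 𝒲.card := by
  rcases X.eq_empty_or_nonempty with rfl | ⟨x, hx⟩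
  · simp
  · have subset : X ⊆ fiber 𝒲 I x := fun x' hx' => mem_fiber.mpr ⟨hX hx', hconst x' hx' x hx⟩
    exact (Nat.mul_le_mul_right _ (Finset.card_le_card subset)).trans (h I hI x)

theorem NearlyUniform.blockDense [Fintype Λ] [Fintype ι] {N D : ℝ} {r : ℕ} {gd : Λ → Λ → Bool}
    {𝒲 : Finset (ι → Λ)} {J : Finset ι} (hP : LiftingParameters ι b N D r gd)
    (h : NearlyUniform 𝒲 J) : BlockDense b 𝒲 J (r + 2) := by
  intro K hK w
  have hb := hP.pos
  have uniform : ((fiber 𝒲 K w).card : ℝ) * (b ^ (r + 3)) ^ K.card ≤ 4 ^ K.card * 𝒲.card := by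
    rw [← hP.card_eq]
    exact_mod_cast h K hK w
  refine le_of_mul_le_mul_left ?_ (by positivity : 0 < b ^ K.card)
  calc _ = ((fiber 𝒲 K w).card : ℝ) * (b ^ (r + 3)) ^ K.card := by ring
    _ ≤ 4 ^ K.card * 𝒲.card := uniform
    _ ≤ b ^ K.card * 𝒲.card := by
        gcongr
        linarith [hP.sixtyFour_le]

variable [DecidableEq ι]

theorem fiber_fiber_of_disjoint (X : Finset (ι → Λ)) {K K' : Finset ι} (h : Disjoint K K')
    (v w : ι → Λ) : fiber (fiber X K v) K' w = fiber X (K ∪ K') (K.piecewise v w) := by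
  ext x
  have agree : (∀ i ∈ K ∪ K', x i = K.piecewise v w i) ↔
      (∀ i ∈ K, x i = v i) ∧ ∀ i ∈ K', x i = w i := by
    rw [Finset.forall_mem_union]
    refine and_congr (forall₂_congr fun i hi => ?_) (forall₂_congr fun i hi => ?_)
    · rw [Finset.piecewise_eq_of_mem _ _ _ hi]
    · rw [Finset.piecewise_eq_of_notMem _ _ _ (Finset.disjoint_right.mp h hi)]
  rw [mem_fiber, mem_fiber, mem_fiber, agree, and_assoc]

theorem exists_blockDense_fiber (hb : 1 ≤ b) {X : Finset (ι → Λ)} (hne : X.Nonempty)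
    (J : Finset ι) (p : ℕ) :
    ∃ K ⊆ J, ∃ w, (fiber X K w).Nonempty ∧
      (X.card : ℝ) ≤ (fiber X K w).card * (b ^ K.card) ^ p ∧
      BlockDense b (fiber X K w) (J \ K) p := by
  set heavy : Finset (Finset ι) :=
    {K ∈ J.powerset | ∃ w, (X.card : ℝ) ≤ (fiber X K w).card * (b ^ K.card) ^ p} with heavy_def
  have mem_heavy {K : Finset ι} : K ∈ heavy ↔
      K ⊆ J ∧ ∃ w, (X.card : ℝ) ≤ (fiber X K w).card * (b ^ K.card) ^ p := by
    rw [heavy_def, Finset.mem_filter, Finset.mem_powerset]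
  obtain ⟨x, -⟩ := id hne
  have empty_heavy : ∅ ∈ heavy := mem_heavy.mpr ⟨J.empty_subset, x, by simp [fiber]⟩
  obtain ⟨K, hK, hmax⟩ := heavy.exists_maximal ⟨∅, empty_heavy⟩
  obtain ⟨hKJ, w, hw⟩ := mem_heavy.mp hK
  refine ⟨K, hKJ, w, ?_, hw, fun K' hK' w' => ?_⟩
  · rw [Finset.nonempty_iff_ne_empty]
    intro hempty
    rw [hempty, Finset.card_empty, Nat.cast_zero, zero_mul] at hw
    exact hw.not_gt (Nat.cast_pos.mpr hne.card_pos)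
  · obtain ⟨hK'J, hdisj⟩ := Finset.subset_sdiff.mp hK'
    by_contra! hlarge
    have union_heavy : K ∪ K' ∈ heavy := by
      refine mem_heavy.mpr ⟨Finset.union_subset hKJ hK'J, K.piecewise w w', hw.trans ?_⟩
      rw [← fiber_fiber_of_disjoint X hdisj.symm, Finset.card_union_of_disjoint hdisj.symm, pow_add,
        mul_pow, mul_comm ((b ^ K.card) ^ p), ← mul_assoc]
      gcongr
    have hK'K : K' ⊆ K :=
      Finset.subset_union_right.trans (hmax union_heavy Finset.subset_union_left)
    rw [hdisj.eq_bot_of_le hK'K] at hlarge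
    simp [fiber] at hlarge

/-- An adversary against query algorithms with fewer than `Q` queries: a family `Adv` of partial
assignments, `Adv I z` meaning that the queries in `I` may have been answered according to `z`,
which can answer any further query and, while there are fewer than `Q` of them, can refute every
output for the lifted relation on `𝒲`. -/
structure IsAdversary {O : Type} (rel : (ι → Λ) → (ι → Λ) → O → Prop) (gd : Λ → Λ → Bool)
    (𝒲 : Finset (ι → Λ)) (J : Finset ι) (Q : ℕ) (Adv : Finset ι → (ι → Bool) → Prop) : Prop where
  start : ∃ z, Adv ∅ z
  extend : ∀ I z, Adv I z → ∀ j ∈ J, j ∉ I → ∃ z', (∀ i ∈ I, z' i = z i) ∧ Adv (insert j I) z'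
  refute : ∀ I z, Adv I z → I.card < Q → ∀ o, ∃ z' : ι → Bool, (∀ i ∈ I, z' i = z i) ∧
    ∀ x ∈ 𝒲, ∀ y ∈ 𝒲, (∀ i ∈ J, gd (x i) (y i) = z' i) → ¬ rel x y o

theorem IsAdversary.extend_union {O : Type} {rel : (ι → Λ) → (ι → Λ) → O → Prop}
    {gd : Λ → Λ → Bool} {𝒲 : Finset (ι → Λ)} {J : Finset ι} {Q : ℕ}
    {Adv : Finset ι → (ι → Bool) → Prop} (h : IsAdversary rel gd 𝒲 J Q Adv) {I : Finset ι}
    {z : ι → Bool} (hz : Adv I z) {K : Finset ι} (hK : K ⊆ J) :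
    ∃ z', (∀ i ∈ I, z' i = z i) ∧ Adv (I ∪ K) z' := by
  induction K using Finset.induction_on with
  | empty => exact ⟨z, fun _ _ => rfl, by rwa [Finset.union_empty]⟩
  | insert j K _ ih =>
    obtain ⟨hj, hKJ⟩ := Finset.insert_subset_iff.mp hK
    obtain ⟨z₁, agree, hz₁⟩ := ih hKJ
    rw [Finset.union_insert]
    by_cases hmem : j ∈ I ∪ K
    · exact ⟨z₁, agree, by rwa [Finset.insert_eq_of_mem hmem]⟩
    · obtain ⟨z₂, agree', hz₂⟩ := h.extend _ _ hz₁ j hj hmem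
      exact ⟨z₂, fun i hi => (agree' i (Finset.mem_union_left K hi)).trans (agree i hi), hz₂⟩

/-- The invariant of the simulation: inside the rectangle `X × Y`, the coordinates in `I₁` and `I₂`
have been queried by fixing them on Alice's, respectively Bob's side; the remaining coordinates are
block-dense with exponents `p` and `q`; and `e` bits of density have been spent besides those
paying for the queries. -/
structure IsLiftingState (b : ℝ) (r : ℕ) (gd : Λ → Λ → Bool) (𝒲 : Finset (ι → Λ)) (J : Finset ι)
    (Adv : Finset ι → (ι → Bool) → Prop) (p q : ℕ) (X Y : Finset (ι → Λ)) (I₁ I₂ : Finset ι)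
    (z : ι → Bool) (e : ℕ) : Prop where
  left_subset : X ⊆ 𝒲
  right_subset : Y ⊆ 𝒲
  left_nonempty : X.Nonempty
  right_nonempty : Y.Nonempty
  left_const : ∀ x ∈ X, ∀ x' ∈ X, ∀ i ∈ I₁, x i = x' i
  right_const : ∀ y ∈ Y, ∀ y' ∈ Y, ∀ i ∈ I₂, y i = y' i
  left_queries_subset : I₁ ⊆ J
  right_queries_subset : I₂ ⊆ J
  disjoint : Disjoint I₁ I₂
  gadget_eq : ∀ x ∈ X, ∀ y ∈ Y, ∀ i ∈ I₁ ∪ I₂, gd (x i) (y i) = z i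
  adv : Adv (I₁ ∪ I₂) z
  left_dense : BlockDense b X (J \ (I₁ ∪ I₂)) p
  right_dense : BlockDense b Y (J \ (I₁ ∪ I₂)) q
  card_sq_le : (𝒲.card : ℝ) ^ 2 ≤
    X.card * Y.card * ((2 * b ^ (r + 2)) ^ (I₁.card + I₂.card) * 2 ^ e)

namespace IsLiftingState

variable {O : Type} {rel : (ι → Λ) → (ι → Λ) → O → Prop} {N D : ℝ} {r p q e Q : ℕ}
  {gd : Λ → Λ → Bool} {𝒲 X Y : Finset (ι → Λ)} {J I₁ I₂ : Finset ι}
  {Adv : Finset ι → (ι → Bool) → Prop} {z : ι → Bool}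

theorem swap (h : IsLiftingState b r gd 𝒲 J Adv p q X Y I₁ I₂ z e) :
    IsLiftingState b r (Function.swap gd) 𝒲 J Adv q p Y X I₂ I₁ z e where
  left_subset := h.right_subset
  right_subset := h.left_subset
  left_nonempty := h.right_nonempty
  right_nonempty := h.left_nonempty
  left_const := h.right_const
  right_const := h.left_const
  left_queries_subset := h.right_queries_subset
  right_queries_subset := h.left_queries_subset
  disjoint := h.disjoint.symm
  gadget_eq y hy x hx i hi := h.gadget_eq x hx y hy i (by rwa [Finset.union_comm])
  adv := by rw [Finset.union_comm]; exact h.adv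
  left_dense := by rw [Finset.union_comm]; exact h.right_dense
  right_dense := by rw [Finset.union_comm]; exact h.left_dense
  card_sq_le := by rw [mul_comm (Y.card : ℝ), add_comm I₂.card]; exact h.card_sq_le

variable [Fintype Λ]

theorem pow_card_le (h : IsLiftingState b r gd 𝒲 J Adv p q X Y I₁ I₂ z e) (hb : 0 < b)
    (hcard : (Fintype.card Λ : ℝ) = b ^ (r + 3)) (hW : NearlyUniform 𝒲 J) :
    (b / 8) ^ (I₁ ∪ I₂).card ≤ 2 ^ e := by
  have left : (X.card : ℝ) * (b ^ (r + 3)) ^ I₁.card ≤ 4 ^ I₁.card * 𝒲.card := by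
    rw [← hcard]
    exact_mod_cast hW.card_mul_pow_le h.left_subset h.left_queries_subset h.left_const
  have right : (Y.card : ℝ) * (b ^ (r + 3)) ^ I₂.card ≤ 4 ^ I₂.card * 𝒲.card := by
    rw [← hcard]
    exact_mod_cast hW.card_mul_pow_le h.right_subset h.right_queries_subset h.right_const
  have hX : (0 : ℝ) < X.card := Nat.cast_pos.mpr h.left_nonempty.card_pos
  have hY : (0 : ℝ) < Y.card := Nat.cast_pos.mpr h.right_nonempty.card_pos
  rw [Finset.card_union_of_disjoint h.disjoint, div_pow, div_le_iff₀ (by positivity)]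
  refine le_of_mul_le_mul_left ?_
    (by positivity : 0 < X.card * Y.card * (b ^ (r + 2)) ^ (I₁.card + I₂.card))
  calc X.card * Y.card * (b ^ (r + 2)) ^ (I₁.card + I₂.card) * b ^ (I₁.card + I₂.card)
      = X.card * (b ^ (r + 3)) ^ I₁.card * (Y.card * (b ^ (r + 3)) ^ I₂.card) := by ring
    _ ≤ 4 ^ I₁.card * 𝒲.card * (4 ^ I₂.card * 𝒲.card) := by gcongr
    _ = 4 ^ (I₁.card + I₂.card) * (𝒲.card : ℝ) ^ 2 := by ring
    _ ≤ 4 ^ (I₁.card + I₂.card) *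
          (X.card * Y.card * ((2 * b ^ (r + 2)) ^ (I₁.card + I₂.card) * 2 ^ e)) := by
        gcongr
        exact h.card_sq_le
    _ = _ := by
        rw [show (8 : ℝ) = 4 * 2 by norm_num, mul_pow 4, mul_pow 2]
        ring

variable [Fintype ι]

/-- Alice fixes the coordinates in `K`, and Bob restricts to the points that give them the gadget
values `z'`. -/
theorem query (hP : LiftingParameters ι b N D r gd)
    (h : IsLiftingState b r gd 𝒲 J Adv r (r + 2) X Y I₁ I₂ z e) {X' : Finset (ι → Λ)}
    {K : Finset ι} {x : ι → Λ} {z' : ι → Bool} (hX' : X' ⊆ X) (hx : x ∈ X')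
    (hK : K ⊆ J \ (I₁ ∪ I₂)) (hconst : ∀ x' ∈ X', ∀ i ∈ K, x' i = x i)
    (hbal : IsBalanced b N r gd Y (J \ (I₁ ∪ I₂)) x)
    (hdense : BlockDense b X' ((J \ (I₁ ∪ I₂)) \ K) (r + 2)) (hz' : ∀ i ∈ I₁ ∪ I₂, z' i = z i)
    (hadv : Adv (I₁ ∪ I₂ ∪ K) z') (hcard : (X.card : ℝ) ≤ 4 * (X'.card * (b ^ K.card) ^ (r + 2))) :
    IsLiftingState b r gd 𝒲 J Adv (r + 2) r X' (consistent gd Y K x z') (I₁ ∪ K) I₂ z' (e + 3) := by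
  have hb := hP.pos
  obtain ⟨hKJ, hdisj⟩ := Finset.subset_sdiff.mp hK
  obtain ⟨hKI₁, hKI₂⟩ := Finset.disjoint_union_right.mp hdisj
  have hY' : consistent gd Y K x z' ⊆ Y := fun y hy => (mem_consistent.mp hy).1
  have union_eq : I₁ ∪ K ∪ I₂ = I₁ ∪ I₂ ∪ K := Finset.union_right_comm I₁ K I₂
  have sdiff_eq : J \ (I₁ ∪ I₂ ∪ K) = (J \ (I₁ ∪ I₂)) \ K := sdiff_sdiff_left.symm
  exact
    { left_subset := hX'.trans h.left_subset
      right_subset := hY'.trans h.right_subset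
      left_nonempty := ⟨x, hx⟩
      right_nonempty := hbal.consistent_nonempty hP h.right_nonempty hK z'
      left_const := fun x₁ hx₁ x₂ hx₂ i hi => (Finset.mem_union.mp hi).elim
        (h.left_const x₁ (hX' hx₁) x₂ (hX' hx₂) i)
        fun hi => (hconst x₁ hx₁ i hi).trans (hconst x₂ hx₂ i hi).symm
      right_const := fun y hy y' hy' => h.right_const y (hY' hy) y' (hY' hy')
      left_queries_subset := Finset.union_subset h.left_queries_subset hKJ
      right_queries_subset := h.right_queries_subset
      disjoint := Finset.disjoint_union_left.mpr ⟨h.disjoint, hKI₂⟩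
      gadget_eq := fun x' hx' y hy i hi => by
        rw [union_eq, Finset.mem_union] at hi
        rcases hi with hi | hi
        · rw [hz' i hi]
          exact h.gadget_eq x' (hX' hx') y (hY' hy) i hi
        · rw [hconst x' hx' i hi]
          exact (mem_consistent.mp hy).2 i hi
      adv := by rwa [union_eq]
      left_dense := by rwa [union_eq, sdiff_eq]
      right_dense := by
        rw [union_eq, sdiff_eq]
        exact hbal.blockDense_consistent hP h.right_dense hK z'
      card_sq_le := by
        rw [Finset.card_union_of_disjoint hKI₁.symm]
        calc (𝒲.card : ℝ) ^ 2
            ≤ X.card * Y.card * ((2 * b ^ (r + 2)) ^ (I₁.card + I₂.card) * 2 ^ e) := h.card_sq_le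
          _ ≤ 4 * (X'.card * (b ^ K.card) ^ (r + 2)) *
                (2 ^ (K.card + 1) * (consistent gd Y K x z').card) *
                ((2 * b ^ (r + 2)) ^ (I₁.card + I₂.card) * 2 ^ e) := by
              gcongr
              exact hbal.card_le hP hK z'
          _ = _ := by ring }

theorem restore {gd' : Λ → Λ → Bool} (hP : LiftingParameters ι b N D r gd)
    (hAdv : IsAdversary rel gd' 𝒲 J Q Adv)
    (h : IsLiftingState b r gd 𝒲 J Adv r (r + 2) X Y I₁ I₂ z e) {A₀ A₁ : Set (ι → Λ)}
    (hcover : ↑X ⊆ A₀ ∪ A₁) :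
    ∃ X' ⊆ X, ∃ Y' ⊆ Y, ∃ I₁' z', (↑X' ⊆ A₀ ∨ ↑X' ⊆ A₁) ∧
      IsLiftingState b r gd 𝒲 J Adv (r + 2) r X' Y' I₁' I₂ z' (e + 3) := by
  obtain ⟨X₁, hX₁, balanced, hpart, hcard⟩ :=
    exists_isBalanced_subset hP h.left_dense h.right_dense hcover
  have hne : X₁.Nonempty := by
    have hX : (0 : ℝ) < X.card := Nat.cast_pos.mpr h.left_nonempty.card_pos
    have hX₁ : (0 : ℝ) < X₁.card := by linarith
    exact Finset.card_pos.mp (Nat.cast_pos.mp hX₁)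
  obtain ⟨K, hK, w, ⟨x, hx⟩, hfiber, hdense⟩ := exists_blockDense_fiber
    (b := b) (by linarith [hP.sixtyFour_le]) hne (J \ (I₁ ∪ I₂)) (r + 2)
  obtain ⟨z', hz', hadv⟩ := hAdv.extend_union h.adv (hK.trans Finset.sdiff_subset)
  have fiber_subset : fiber X₁ K w ⊆ X₁ := fun x' hx' => (mem_fiber.mp hx').1
  have hconst : ∀ x' ∈ fiber X₁ K w, ∀ i ∈ K, x' i = x i := fun x' hx' i hi =>
    ((mem_fiber.mp hx').2 i hi).trans ((mem_fiber.mp hx).2 i hi).symm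
  refine ⟨_, fiber_subset.trans hX₁, _, fun y hy => (mem_consistent.mp hy).1, _, _,
    hpart.imp ?_ ?_, h.query hP (fiber_subset.trans hX₁) hx hK hconst (balanced x (fiber_subset hx))
      hdense hz' hadv (by linarith)⟩ <;>
  exact (Finset.coe_subset.mpr fiber_subset).trans

theorem restore_both (hP : LiftingParameters ι b N D r gd) (hAdv : IsAdversary rel gd 𝒲 J Q Adv)
    (h : IsLiftingState b r gd 𝒲 J Adv r (r + 2) X Y I₁ I₂ z e) {A₀ A₁ B₀ B₁ : Set (ι → Λ)}
    (hA : ↑X ⊆ A₀ ∪ A₁) (hB : ↑Y ⊆ B₀ ∪ B₁) :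
    ∃ X' ⊆ X, ∃ Y' ⊆ Y, ∃ I₁' I₂' z', (↑X' ⊆ A₀ ∨ ↑X' ⊆ A₁) ∧ (↑Y' ⊆ B₀ ∨ ↑Y' ⊆ B₁) ∧
      IsLiftingState b r gd 𝒲 J Adv r (r + 2) X' Y' I₁' I₂' z' (e + 6) := by
  obtain ⟨X₁, hX₁, Y₁, hY₁, I₁', z₁, hpartA, h₁⟩ := h.restore hP hAdv hA
  obtain ⟨Y₂, hY₂, X₂, hX₂, I₂', z₂, hpartB, h₂⟩ := h₁.swap.restore hP.swap hAdv
    ((Finset.coe_subset.mpr hY₁).trans hB)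
  exact ⟨X₂, hX₂.trans hX₁, Y₂, hY₂.trans hY₁, I₁', I₂', z₂,
    hpartA.imp (Finset.coe_subset.mpr hX₂).trans (Finset.coe_subset.mpr hX₂).trans, hpartB, h₂.swap⟩

theorem descend (hP : LiftingParameters ι b N D r gd) (hAdv : IsAdversary rel gd 𝒲 J Q Adv)
    (h : IsLiftingState b r gd 𝒲 J Adv r (r + 2) X Y I₁ I₂ z e) {A B A₀ B₀ A₁ B₁ : Set (ι → Λ)}
    (hs : IsSplit A B A₀ B₀ A₁ B₁) (hA : ↑X ⊆ A) (hB : ↑Y ⊆ B) :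
    ∃ (X' Y' : Finset (ι → Λ)) (I₁' I₂' : Finset ι) (z' : ι → Bool),
      (↑X' ⊆ A₀ ∧ ↑Y' ⊆ B₀ ∨ ↑X' ⊆ A₁ ∧ ↑Y' ⊆ B₁) ∧
        IsLiftingState b r gd 𝒲 J Adv r (r + 2) X' Y' I₁' I₂' z' (e + 6) := by
  rcases hs with ⟨hcover, hB₀, hB₁⟩ | ⟨hA₀, hA₁, hcover⟩
  · obtain ⟨X', -, Y', hY', I₁', I₂', z', hpart, -, h'⟩ := h.restore_both hP hAdv
      (hA.trans hcover) (Set.subset_union_left : (Y : Set (ι → Λ)) ⊆ Y ∪ Y)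
    have hY'B : ↑Y' ⊆ B := (Finset.coe_subset.mpr hY').trans hB
    exact ⟨X', Y', I₁', I₂', z', hpart.imp (⟨·, hY'B.trans hB₀⟩) (⟨·, hY'B.trans hB₁⟩), h'⟩
  · obtain ⟨X', hX', Y', -, I₁', I₂', z', -, hpart, h'⟩ := h.restore_both hP hAdv
      (Set.subset_union_left : (X : Set (ι → Λ)) ⊆ X ∪ X) (hB.trans hcover)
    have hX'A : ↑X' ⊆ A := (Finset.coe_subset.mpr hX').trans hA
    exact ⟨X', Y', I₁', I₂', z', hpart.imp (⟨hX'A.trans hA₀, ·⟩) (⟨hX'A.trans hA₁, ·⟩), h'⟩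

theorem le_card_of_monochromatic (hP : LiftingParameters ι b N D r gd)
    (hAdv : IsAdversary rel gd 𝒲 J Q Adv)
    (h : IsLiftingState b r gd 𝒲 J Adv r (r + 2) X Y I₁ I₂ z e) {A B : Set (ι → Λ)}
    (hmono : Monochromatic rel A B) (hA : ↑X ⊆ A) (hB : ↑Y ⊆ B) : Q ≤ (I₁ ∪ I₂).card := by
  by_contra! hlt
  obtain ⟨x₀, hx₀⟩ := h.left_nonempty
  obtain ⟨y₀, hy₀⟩ := h.right_nonempty
  rcases hmono with hempty | ⟨o, ho⟩
  · exact Set.eq_empty_iff_forall_notMem.mp hempty (x₀, y₀) ⟨hA hx₀, hB hy₀⟩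
  · obtain ⟨z', hz', hrefute⟩ := hAdv.refute _ _ h.adv hlt o
    obtain ⟨x, hx, y, hy, hxy⟩ := exists_forall_gadget_eq hP h.left_dense h.right_dense
      h.left_nonempty h.right_nonempty z'
    refine hrefute x (h.left_subset hx) y (h.right_subset hy) (fun i hi => ?_)
      (ho (x, y) ⟨hA hx, hB hy⟩)
    by_cases hqueried : i ∈ I₁ ∪ I₂
    · rw [h.gadget_eq x hx y hy i hqueried, hz' i hqueried]
    · exact hxy i (Finset.mem_sdiff.mpr ⟨hi, hqueried⟩)

theorem pow_le_of_depthSolvable (hP : LiftingParameters ι b N D r gd) (hW : NearlyUniform 𝒲 J)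
    (hAdv : IsAdversary rel gd 𝒲 J Q Adv) {A B : Set (ι → Λ)} {d : ℕ}
    (hd : DepthSolvable rel A B d) (h : IsLiftingState b r gd 𝒲 J Adv r (r + 2) X Y I₁ I₂ z e)
    (hA : ↑X ⊆ A) (hB : ↑Y ⊆ B) : (b / 8) ^ Q ≤ 2 ^ (e + 6 * d) := by
  induction hd generalizing X Y I₁ I₂ z e with
  | mono hmono =>
    calc (b / 8) ^ Q ≤ (b / 8) ^ (I₁ ∪ I₂).card := pow_le_pow_right₀
          (by linarith [hP.sixtyFour_le]) (h.le_card_of_monochromatic hP hAdv hmono hA hB)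
      _ ≤ 2 ^ e := h.pow_card_le hP.pos hP.card_eq hW
      _ ≤ _ := pow_le_pow_right₀ one_le_two (Nat.le_add_right e _)
  | split hs _ _ ih₀ ih₁ =>
    obtain ⟨X', Y', I₁', I₂', z', ⟨hA', hB'⟩ | ⟨hA', hB'⟩, h'⟩ := h.descend hP hAdv hs hA hB
    · exact (ih₀ h' hA' hB').trans_eq (by ring)
    · exact (ih₁ h' hA' hB').trans_eq (by ring)

end IsLiftingState

variable [Fintype Λ] [Fintype ι] {N D : ℝ} {r : ℕ} {gd : Λ → Λ → Bool} {𝒲 : Finset (ι → Λ)}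
  {J : Finset ι}

theorem pow_le_two_pow_of_depthSolvable {O : Type} {rel : (ι → Λ) → (ι → Λ) → O → Prop} {Q : ℕ}
    {Adv : Finset ι → (ι → Bool) → Prop} (hP : LiftingParameters ι b N D r gd)
    (hAdv : IsAdversary rel gd 𝒲 J Q Adv) (hne : 𝒲.Nonempty) (hW : NearlyUniform 𝒲 J)
    {A B : Set (ι → Λ)} {d : ℕ} (hd : DepthSolvable rel A B d) (hA : ↑𝒲 ⊆ A) (hB : ↑𝒲 ⊆ B) :
    (b / 8) ^ Q ≤ 2 ^ (6 * d) := by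
  obtain ⟨z, hz⟩ := hAdv.start
  have hdense := hW.blockDense hP
  have initial : IsLiftingState b r gd 𝒲 J Adv r (r + 2) 𝒲 𝒲 ∅ ∅ z 0 :=
    { left_subset := subset_rfl
      right_subset := subset_rfl
      left_nonempty := hne
      right_nonempty := hne
      left_const := by simp
      right_const := by simp
      left_queries_subset := J.empty_subset
      right_queries_subset := J.empty_subset
      disjoint := Finset.disjoint_empty_left ∅
      gadget_eq := by simp
      adv := by rwa [Finset.union_empty]
      left_dense := by
        simpa using hdense.anti_exponent (by linarith [hP.sixtyFour_le]) (Nat.le_add_right r 2)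
      right_dense := by simpa using hdense
      card_sq_le := by simp [sq] }
  simpa using initial.pow_le_of_depthSolvable hP hW hAdv hd hA hB

end Lifting

/-! ### Hard collections -/

section Rows

variable {ι Ω : Type} {f : (ι → Bool) → Bool}

theorem exists_mKW (hf : Monotone f) (x : {a // f a = true}) (y : {b // f b = false}) :
    ∃ i, mKW f x y i := by
  by_contra! h
  have hle : x.1 ≤ y.1 := fun i =>
    Bool.le_iff_imp.mpr fun hx => Bool.eq_true_of_not_eq_false fun hy => h i ⟨hx, hy⟩
  exact absurd (hf hle) (by rw [x.2, y.2]; decide)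

theorem minLeaves_mKW_le [Finite ι] (hf : Monotone f) (A : Set {a // f a = true})
    (B : Set {b // f b = false}) (i : ι) :
    minLeaves (mKW f) A B ≤ minLeaves (mKW f) (A ∩ {a | a.1 i = false}) B +
      (minLeaves (mKW f) A (B ∩ {b | b.1 i = true}) + 1) := by
  have solvable := leafSolvable_minLeaves (exists_mKW hf)
  have output : LeafSolvable (mKW f) (A ∩ {a | a.1 i = true}) (B \ {b | b.1 i = true}) 1 :=
    .mono (.inr ⟨i, fun p hp => ⟨hp.1.2, eq_false_of_ne_true hp.2.2⟩⟩) one_pos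
  have cover : A ⊆ (A ∩ {a | a.1 i = false}) ∪ (A ∩ {a | a.1 i = true}) := fun a ha => by
    cases h : a.1 i <;> simp [ha, h]
  refine (LeafSolvable.split (.inl ⟨cover, subset_rfl, subset_rfl⟩) (solvable _ B) ?_).minLeaves_le
  rw [add_comm (minLeaves _ _ _) 1]
  exact .split (.right _ B {b | b.1 i = true}) output
    ((solvable A _).anti Set.inter_subset_left subset_rfl le_rfl)

/-- Rectangles `A W × B W ⊆ FA W × FB W`, for `W ∈ 𝒲`, on each of which `mKW f` still requires
`h - 1` leaves, although no coordinate in `R` is a valid output on any `A W × B W'`. -/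
structure IsHardCollection (f : (ι → Bool) → Bool) (FA : Ω → Set {a // f a = true})
    (FB : Ω → Set {b // f b = false}) (R : Finset ι) (𝒲 : Finset Ω)
    (A : Ω → Set {a // f a = true}) (B : Ω → Set {b // f b = false}) (h : ℝ) : Prop where
  subset_left : ∀ W, A W ⊆ FA W
  subset_right : ∀ W, B W ⊆ FB W
  le_minLeaves : ∀ W ∈ 𝒲, h ≤ minLeaves (mKW f) (A W) (B W) + 1
  decided : ∀ i ∈ R, (∀ W ∈ 𝒲, ∀ a ∈ A W, a.1 i = false) ∨ ∀ W ∈ 𝒲, ∀ b ∈ B W, b.1 i = true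

namespace IsHardCollection

variable {FA A : Ω → Set {a // f a = true}} {FB B : Ω → Set {b // f b = false}} {R : Finset ι}
  {𝒲 𝒲' : Finset Ω} {h : ℝ}

theorem anti (hc : IsHardCollection f FA FB R 𝒲 A B h) (hsub : 𝒲' ⊆ 𝒲) :
    IsHardCollection f FA FB R 𝒲' A B h where
  subset_left := hc.subset_left
  subset_right := hc.subset_right
  le_minLeaves W hW := hc.le_minLeaves W (hsub hW)
  decided i hi := (hc.decided i hi).imp (fun hd W hW => hd W (hsub hW))
    fun hd W hW => hd W (hsub hW)

theorem nonempty (hc : IsHardCollection f FA FB R 𝒲 A B h) (hh : 2 ≤ h) {W : Ω} (hW : W ∈ 𝒲) :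
    (A W).Nonempty ∧ (B W).Nonempty := by
  rw [← Set.prod_nonempty_iff, Set.nonempty_iff_ne_empty]
  intro hempty
  have zero : minLeaves (mKW f) (A W) (B W) ≤ 0 := (LeafSolvable.empty hempty).minLeaves_le
  have large := hc.le_minLeaves W hW
  rw [Nat.le_zero.mp zero, Nat.cast_zero] at large
  linarith

theorem not_mKW (hc : IsHardCollection f FA FB R 𝒲 A B h) {i : ι} (hi : i ∈ R) {W W' : Ω}
    (hW : W ∈ 𝒲) (hW' : W' ∈ 𝒲) {a : {a // f a = true}} {b : {b // f b = false}} (ha : a ∈ A W)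
    (hb : b ∈ B W') : ¬ mKW f a b i := by
  rintro ⟨htrue, hfalse⟩
  rcases hc.decided i hi with hd | hd
  · exact Bool.false_ne_true ((hd W hW a ha).symm.trans htrue)
  · exact Bool.false_ne_true (hfalse.symm.trans (hd W' hW' b hb))

theorem exists_points (hc : IsHardCollection f FA FB R 𝒲 A B h) (hh : 2 ≤ h)
    (hne : 𝒲.Nonempty) :
    ∃ (a : Ω → {a // f a = true}) (b : Ω → {b // f b = false}),
      (∀ W ∈ 𝒲, a W ∈ FA W ∧ b W ∈ FB W) ∧
        ∀ i ∈ R, ∀ W ∈ 𝒲, ∀ W' ∈ 𝒲, ¬ mKW f (a W) (b W') i := by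
  obtain ⟨W₀, hW₀⟩ := hne
  obtain ⟨⟨a₀, -⟩, b₀, -⟩ := hc.nonempty hh hW₀
  have (W : Ω) : ∃ p : _ × _, W ∈ 𝒲 → p.1 ∈ A W ∧ p.2 ∈ B W := by
    by_cases hW : W ∈ 𝒲
    · obtain ⟨⟨a, ha⟩, b, hb⟩ := hc.nonempty hh hW
      exact ⟨(a, b), fun _ => ⟨ha, hb⟩⟩
    · exact ⟨(a₀, b₀), fun h => absurd h hW⟩
  choose p hp using this
  exact ⟨fun W => (p W).1, fun W => (p W).2,
    fun W hW => ⟨hc.subset_left W (hp W hW).1, hc.subset_right W (hp W hW).2⟩,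
    fun i hi W hW W' hW' => hc.not_mKW hi hW hW' (hp W hW).1 (hp W' hW').2⟩

variable [DecidableEq ι]

theorem restrict_left (hc : IsHardCollection f FA FB R 𝒲 A B h) {i : ι}
    (hbig : ∀ W ∈ 𝒲, h / 2 ≤ minLeaves (mKW f) (A W ∩ {a | a.1 i = false}) (B W) + 1) :
    IsHardCollection f FA FB (insert i R) 𝒲 (fun W => A W ∩ {a | a.1 i = false}) B (h / 2) where
  subset_left W := Set.inter_subset_left.trans (hc.subset_left W)
  subset_right := hc.subset_right
  le_minLeaves := hbig
  decided := by
    rw [Finset.forall_mem_insert]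
    exact ⟨.inl fun W _ a ha => ha.2, fun j hj =>
      (hc.decided j hj).imp_left fun hd W hW a ha => hd W hW a ha.1⟩

theorem restrict_right (hc : IsHardCollection f FA FB R 𝒲 A B h) {i : ι}
    (hbig : ∀ W ∈ 𝒲, h / 2 ≤ minLeaves (mKW f) (A W) (B W ∩ {b | b.1 i = true}) + 1) :
    IsHardCollection f FA FB (insert i R) 𝒲 A (fun W => B W ∩ {b | b.1 i = true}) (h / 2) where
  subset_left := hc.subset_left
  subset_right W := Set.inter_subset_left.trans (hc.subset_right W)
  le_minLeaves := hbig
  decided := by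
    rw [Finset.forall_mem_insert]
    exact ⟨.inr fun W _ b hb => hb.2, fun j hj =>
      (hc.decided j hj).imp_right fun hd W hW b hb => hd W hW b hb.1⟩

variable [Finite ι]

theorem exists_decided_insert (hf : Monotone f) (hc : IsHardCollection f FA FB R 𝒲 A B h)
    (i : ι) :
    ∃ (𝒲' : Finset Ω) (A' : _) (B' : _), IsHardCollection f FA FB (insert i R) 𝒲' A' B' (h / 2) ∧
      𝒲' ⊆ 𝒲 ∧ 𝒲.card ≤ 2 * 𝒲'.card := by
  let large (W : Ω) : Prop :=
    h / 2 ≤ minLeaves (mKW f) (A W ∩ {a | a.1 i = false}) (B W) + 1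
  have hsum := Finset.card_filter_add_card_filter_not (s := 𝒲) large
  rcases le_total (𝒲.filter fun W => ¬ large W).card (𝒲.filter large).card with hle | hle
  · refine ⟨𝒲.filter large, _, _, (hc.anti (Finset.filter_subset ..)).restrict_left (i := i)
      fun W hW => (Finset.mem_filter.mp hW).2, Finset.filter_subset .., by omega⟩
  · refine ⟨𝒲.filter fun W => ¬ large W, _, _,
      (hc.anti (Finset.filter_subset ..)).restrict_right (i := i) fun W hW => ?_,
      Finset.filter_subset .., by omega⟩
    obtain ⟨hW, hsmall⟩ := Finset.mem_filter.mp hW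
    have hrow := minLeaves_mKW_le hf (A W) (B W) i
    rify at hrow
    linarith [hc.le_minLeaves W hW, not_le.mp hsmall]

theorem exists_decided_union (hf : Monotone f) (hc : IsHardCollection f FA FB R 𝒲 A B h)
    (I : Finset ι) :
    ∃ (𝒲' : Finset Ω) (A' : _) (B' : _),
      IsHardCollection f FA FB (R ∪ I) 𝒲' A' B' (h / 2 ^ I.card) ∧ 𝒲' ⊆ 𝒲 ∧
        𝒲.card ≤ 2 ^ I.card * 𝒲'.card := by
  induction I using Finset.induction_on with
  | empty => exact ⟨𝒲, A, B, by simpa using hc, subset_rfl, by simp⟩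
  | insert i I hi ih =>
    obtain ⟨𝒲₁, A₁, B₁, hc₁, hsub₁, hcard₁⟩ := ih
    obtain ⟨𝒲₂, A₂, B₂, hc₂, hsub₂, hcard₂⟩ := hc₁.exists_decided_insert hf i
    rw [Finset.union_insert, Finset.card_insert_of_notMem hi, pow_succ, ← div_div]
    refine ⟨𝒲₂, A₂, B₂, hc₂, hsub₂.trans hsub₁, ?_⟩
    rw [pow_succ, mul_assoc]
    exact hcard₁.trans (Nat.mul_le_mul_left _ hcard₂)

end IsHardCollection

end Rows

section HardCollections

variable {ι Λ : Type} [Fintype Λ]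

theorem card_le_of_forall_eq {X : Finset (ι → Λ)} {J : Finset ι}
    (h : ∀ x ∈ X, ∀ x' ∈ X, ∀ i ∉ J, x i = x' i) : X.card ≤ Fintype.card Λ ^ J.card := by
  have injOn : Set.InjOn J.restrict (X : Set (ι → Λ)) := fun x hx x' hx' he => by
    funext i
    by_cases hi : i ∈ J
    · exact congrFun he ⟨i, hi⟩
    · exact h x hx x' hx' i hi
  simpa using Finset.card_le_card_of_injOn (t := Finset.univ) _ (fun _ _ => Finset.mem_univ _) injOn

theorem exists_card_le_fiber_mul_pow [Finite ι] [Nonempty Λ] (X : Finset (ι → Λ)) (T : Finset ι) :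
    ∃ w, X.card ≤ (fiber X T w).card * Fintype.card Λ ^ T.card := by
  obtain ⟨w, hw⟩ := Finite.exists_max fun w => (fiber X T w).card
  refine ⟨w, ?_⟩
  have bound (u : T → Λ) : (X.filter fun x => T.restrict x = u).card ≤ (fiber X T w).card := by
    rcases (X.filter fun x => T.restrict x = u).eq_empty_or_nonempty with he | ⟨x, hx⟩
    · simp [he]
    · rw [← (Finset.mem_filter.mp hx).2, filter_restrict_eq_fiber]
      exact hw x
  simpa using Finset.card_le_mul_card_image_of_maps_to (f := T.restrict) (s := X) (t := .univ)
    (fun _ _ => Finset.mem_univ _) _ fun u _ => bound u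

variable {m ℓ : ℕ}

/-- The entries of an `m × ℓ` matrix in the rows `R`. -/
def rowEntries (ℓ : ℕ) (R : Finset (Fin m)) : Finset (Fin m × Fin ℓ) := R ×ˢ Finset.univ

theorem mem_rowEntries {R : Finset (Fin m)} {p : Fin m × Fin ℓ} :
    p ∈ rowEntries ℓ R ↔ p.1 ∈ R := by
  simp [rowEntries]

theorem card_rowEntries (R : Finset (Fin m)) : (rowEntries ℓ R).card = R.card * ℓ := by
  simp [rowEntries]

theorem exists_large_fiber_rowEntries [Nonempty Λ] {𝒲 : Finset (Fin m × Fin ℓ → Λ)}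
    {R : Finset (Fin m)} (h : ¬ NearlyUniform 𝒲 (rowEntries ℓ Rᶜ)) :
    ∃ I : Finset (Fin m), I.Nonempty ∧ Disjoint R I ∧
      ∃ w, 4 ^ I.card * 𝒲.card ≤
        (fiber 𝒲 (rowEntries ℓ I) w).card * Fintype.card Λ ^ (I.card * ℓ) := by
  simp only [NearlyUniform, not_forall, not_le] at h
  obtain ⟨K, hK, w, hlt⟩ := h
  have hKI : K ⊆ rowEntries ℓ (K.image Prod.fst) := fun p hp =>
    mem_rowEntries.mpr (Finset.mem_image_of_mem _ hp)
  refine ⟨K.image Prod.fst, ?_, ?_, ?_⟩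
  · rw [Finset.image_nonempty, Finset.nonempty_iff_ne_empty]
    rintro rfl
    rw [Finset.card_empty, pow_zero, pow_zero, mul_one, one_mul] at hlt
    exact hlt.not_ge (Finset.card_le_card fun x hx => (mem_fiber.mp hx).1)
  · rw [Finset.disjoint_right, Finset.forall_mem_image]
    exact fun p hp => Finset.mem_compl.mp (mem_rowEntries.mp (hK hp))
  · obtain ⟨w', hw'⟩ := exists_card_le_fiber_mul_pow (fiber 𝒲 K w) (rowEntries ℓ _ \ K)
    rw [fiber_fiber_of_disjoint _ Finset.disjoint_sdiff, Finset.union_sdiff_of_subset hKI] at hw'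
    refine ⟨K.piecewise w w', ?_⟩
    calc 4 ^ (K.image Prod.fst).card * 𝒲.card ≤ 4 ^ K.card * 𝒲.card := by
          gcongr
          · norm_num
          · exact Finset.card_image_le
      _ ≤ (fiber 𝒲 K w).card * Fintype.card Λ ^ K.card := hlt.le
      _ ≤ _ * Fintype.card Λ ^ (rowEntries ℓ _ \ K).card * Fintype.card Λ ^ K.card :=
          Nat.mul_le_mul_right _ hw'
      _ = _ := by
          rw [mul_assoc, ← pow_add, Finset.card_sdiff_add_card_eq_card hKI, card_rowEntries]

variable {f : (Fin m → Bool) → Bool}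

/-- Some hard collection with decided rows `R` is constant on these rows, and the matrices in it
are so many that their number is at least `2 / h` times that of all choices of the other rows. -/
def HasLargeHardCollection (f : (Fin m → Bool) → Bool)
    (FA : (Fin m × Fin ℓ → Λ) → Set {a // f a = true})
    (FB : (Fin m × Fin ℓ → Λ) → Set {b // f b = false}) (R : Finset (Fin m)) : Prop :=
  ∃ 𝒲 A B h, IsHardCollection f FA FB R 𝒲 A B h ∧ 0 < h ∧
    (∀ W ∈ 𝒲, ∀ W' ∈ 𝒲, ∀ p ∈ rowEntries ℓ R, W p = W' p) ∧
    2 * (Fintype.card Λ : ℝ) ^ (Rᶜ.card * ℓ) ≤ 𝒲.card * h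

variable {FA A : (Fin m × Fin ℓ → Λ) → Set {a // f a = true}}
  {FB B : (Fin m × Fin ℓ → Λ) → Set {b // f b = false}} {R I : Finset (Fin m)}
  {𝒲 : Finset (Fin m × Fin ℓ → Λ)} {h : ℝ}

theorem IsHardCollection.hasLarge_union [Nonempty Λ] (hf : Monotone f)
    (hc : IsHardCollection f FA FB R 𝒲 A B h) (hh : 0 < h)
    (hconst : ∀ W ∈ 𝒲, ∀ W' ∈ 𝒲, ∀ p ∈ rowEntries ℓ R, W p = W' p)
    (hlarge : 2 * (Fintype.card Λ : ℝ) ^ (Rᶜ.card * ℓ) ≤ 𝒲.card * h) (hdisj : Disjoint R I)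
    {w : Fin m × Fin ℓ → Λ} (hw : 4 ^ I.card * 𝒲.card ≤
      (fiber 𝒲 (rowEntries ℓ I) w).card * Fintype.card Λ ^ (I.card * ℓ)) :
    HasLargeHardCollection f FA FB (R ∪ I) := by
  have hfiber : fiber 𝒲 (rowEntries ℓ I) w ⊆ 𝒲 := fun W hW => (mem_fiber.mp hW).1
  obtain ⟨𝒲', A', B', hc', hsub, hcard⟩ := (hc.anti hfiber).exists_decided_union hf I
  refine ⟨𝒲', A', B', _, hc', by positivity, fun W hW W' hW' p hp => ?_, ?_⟩
  · rw [mem_rowEntries, Finset.mem_union] at hp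
    rcases hp with hp | hp
    · exact hconst W (hfiber (hsub hW)) W' (hfiber (hsub hW')) p (mem_rowEntries.mpr hp)
    · rw [(mem_fiber.mp (hsub hW)).2 p (mem_rowEntries.mpr hp),
        (mem_fiber.mp (hsub hW')).2 p (mem_rowEntries.mpr hp)]
  · have hcompl : Rᶜ.card = (R ∪ I)ᶜ.card + I.card := by
      have hunion := Finset.card_union_of_disjoint hdisj
      have hR := Finset.card_compl_add_card R
      have hRI := Finset.card_compl_add_card (R ∪ I)
      omega
    have hpow : 0 < (Fintype.card Λ : ℝ) ^ (I.card * ℓ) := by positivity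
    have hshrink : 2 ^ I.card * 𝒲.card ≤ 𝒲'.card * Fintype.card Λ ^ (I.card * ℓ) := by
      refine le_of_mul_le_mul_left ?_ (Nat.two_pow_pos I.card)
      calc 2 ^ I.card * (2 ^ I.card * 𝒲.card) = 4 ^ I.card * 𝒲.card := by
            rw [← mul_assoc, ← mul_pow]; norm_num
        _ ≤ _ := hw
        _ ≤ 2 ^ I.card * 𝒲'.card * Fintype.card Λ ^ (I.card * ℓ) := Nat.mul_le_mul_right _ hcard
        _ = _ := mul_assoc ..
    rify at hshrink
    refine le_of_mul_le_mul_right ?_ hpow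
    calc _ = 2 * (Fintype.card Λ : ℝ) ^ (Rᶜ.card * ℓ) := by rw [hcompl]; ring
      _ ≤ 𝒲.card * h := hlarge
      _ = 2 ^ I.card * 𝒲.card * (h / 2 ^ I.card) := by field_simp
      _ ≤ 𝒲'.card * (Fintype.card Λ : ℝ) ^ (I.card * ℓ) * (h / 2 ^ I.card) := by gcongr
      _ = _ := by ring

theorem two_le_and_nonempty_of_large [Nonempty Λ] (hh : 0 < h)
    (hconst : ∀ W ∈ 𝒲, ∀ W' ∈ 𝒲, ∀ p ∈ rowEntries ℓ R, W p = W' p)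
    (hlarge : 2 * (Fintype.card Λ : ℝ) ^ (Rᶜ.card * ℓ) ≤ 𝒲.card * h) :
    2 ≤ h ∧ 𝒲.Nonempty := by
  have hpow : 0 < (Fintype.card Λ : ℝ) ^ (Rᶜ.card * ℓ) := by positivity
  have hcard : (𝒲.card : ℝ) ≤ (Fintype.card Λ : ℝ) ^ (Rᶜ.card * ℓ) := by
    rw [← card_rowEntries]
    refine mod_cast card_le_of_forall_eq fun W hW W' hW' p hp => hconst W hW W' hW' p ?_
    simpa [mem_rowEntries] using hp
  have hpos : (0 : ℝ) < 𝒲.card := pos_of_mul_pos_left ((mul_pos two_pos hpow).trans_le hlarge) hh.le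
  refine ⟨le_of_mul_le_mul_left ?_ hpos, Finset.card_pos.mp (mod_cast hpos)⟩
  linarith

theorem exists_nearlyUniform_hardCollection [Nonempty Λ] (hf : Monotone f) (hh : 0 < h)
    (hlarge : 2 * (Fintype.card Λ : ℝ) ^ (m * ℓ) ≤
      (Finset.univ.filter fun W => h ≤ minLeaves (mKW f) (FA W) (FB W) + 1).card * h) :
    ∃ (R : Finset (Fin m)) (𝒲 : Finset (Fin m × Fin ℓ → Λ))
      (a : (Fin m × Fin ℓ → Λ) → {a // f a = true}) (b : (Fin m × Fin ℓ → Λ) → {b // f b = false}),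
      𝒲.Nonempty ∧ (∀ W ∈ 𝒲, a W ∈ FA W ∧ b W ∈ FB W) ∧
      (∀ i ∈ R, ∀ W ∈ 𝒲, ∀ W' ∈ 𝒲, ¬ mKW f (a W) (b W') i) ∧
      NearlyUniform 𝒲 (rowEntries ℓ Rᶜ) := by
  have initial : HasLargeHardCollection f FA FB ∅ :=
    ⟨_, FA, FB, h, ⟨fun _ => subset_rfl, fun _ => subset_rfl,
      fun W hW => (Finset.mem_filter.mp hW).2, by simp⟩, hh, by simp [rowEntries],
      by simpa using hlarge⟩
  obtain ⟨R, ⟨𝒲, A, B, h, hc, hh, hconst, hlarge⟩, hmax⟩ :=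
    exists_maximal_of_wellFoundedGT (HasLargeHardCollection f FA FB) ⟨∅, initial⟩
  obtain ⟨htwo, hne⟩ := two_le_and_nonempty_of_large hh hconst hlarge
  obtain ⟨a, b, hmem, hdecided⟩ := hc.exists_points htwo hne
  refine ⟨R, 𝒲, a, b, hne, hmem, hdecided, ?_⟩
  by_contra hnot
  obtain ⟨I, hI, hdisj, w, hw⟩ := exists_large_fiber_rowEntries hnot
  have hle := hmax (hc.hasLarge_union hf hh hconst hlarge hdisj hw) Finset.subset_union_left
  exact hI.ne_empty (Finset.disjoint_self_iff_empty I |>.mp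
    (hdisj.mono_left (Finset.subset_union_right.trans hle)))

end HardCollections

/-! ### Composition with a lifted search problem -/

section Adversary

variable {κ O : Type} {S : (κ → Bool) → O → Prop} {I : Finset κ} {z z' : κ → Bool}

/-- After the queries `I` have been answered according to `z`, no decision tree solves `S` with
fewer than `Q(S)` queries in total. -/
def IsHardAssignment (S : (κ → Bool) → O → Prop) (I : Finset κ) (z : κ → Bool) : Prop :=
  ∀ T : DTree κ O, (∀ z', (∀ j ∈ I, z' j = z j) → S z' (T.run z')) →
    Qcomplexity S ≤ T.depth + I.card

theorem isHardAssignment_empty (S : (κ → Bool) → O → Prop) (z : κ → Bool) :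
    IsHardAssignment S ∅ z :=
  fun T hT => Nat.sInf_le ⟨T, fun z' => hT z' (by simp), rfl⟩

namespace IsHardAssignment

theorem congr (h : IsHardAssignment S I z) (hz : ∀ j ∈ I, z' j = z j) :
    IsHardAssignment S I z' :=
  fun T hT => h T fun z'' hz'' => hT z'' fun j hj => (hz'' j hj).trans (hz j hj).symm

theorem exists_not_rel (h : IsHardAssignment S I z) (hI : I.card < Qcomplexity S) (o : O) :
    ∃ z', (∀ j ∈ I, z' j = z j) ∧ ¬ S z' o := by
  by_contra! hS
  have := h (.leaf o) hS
  simp only [DTree.depth] at this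
  omega

/-- Otherwise querying `j` first would solve `S` too quickly. -/
theorem exists_insert [DecidableEq κ] (h : IsHardAssignment S I z) {j : κ} (hj : j ∉ I) :
    ∃ v, IsHardAssignment S (insert j I) (Function.update z j v) := by
  by_contra! hcon
  simp only [IsHardAssignment, not_forall, not_le, Finset.card_insert_of_notMem hj,
    Finset.forall_mem_insert, Function.update_self, exists_prop] at hcon
  have solves {v : Bool} {z' : κ → Bool} (hz' : ∀ i ∈ I, z' i = z i) :
      ∀ i ∈ I, z' i = Function.update z j v i := fun i hi => by
    rw [hz' i hi, Function.update_of_ne (ne_of_mem_of_not_mem hi hj)]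
  obtain ⟨T₀, hT₀, hlt₀⟩ := hcon false
  obtain ⟨T₁, hT₁, hlt₁⟩ := hcon true
  refine absurd (h (.node j T₀ T₁) fun z' hz' => ?_) (by simp only [DTree.depth]; omega)
  cases hv : z' j
  · simpa [DTree.run, hv] using hT₀ z' ⟨hv, solves hz'⟩
  · simpa [DTree.run, hv] using hT₁ z' ⟨hv, solves hz'⟩

end IsHardAssignment

theorem exists_isHardAssignment (S : (κ → Bool) → O → Prop) (I : Finset κ) :
    ∃ z, IsHardAssignment S I z := by
  induction I using Finset.induction_on with
  | empty => exact ⟨fun _ => false, isHardAssignment_empty S _⟩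
  | insert j I hj ih =>
    obtain ⟨z, hz⟩ := ih
    obtain ⟨v, hv⟩ := hz.exists_insert hj
    exact ⟨_, hv⟩

theorem qcomplexity_le_card [Fintype κ] (hS : ∀ z, ∃ o, S z o) :
    Qcomplexity S ≤ Fintype.card κ := by
  by_contra! hlt
  obtain ⟨z, hz⟩ := exists_isHardAssignment S Finset.univ
  obtain ⟨o, ho⟩ := hS z
  obtain ⟨z', hz', hno⟩ := hz.exists_not_rel hlt o
  rw [funext fun j => hz' j (Finset.mem_univ j)] at hno
  exact hno ho

end Adversary

section Composition

variable {m ℓ : ℕ} {Λ O : Type} {f : (Fin m → Bool) → Bool} {S : (Fin ℓ → Bool) → O → Prop}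
  {gd : Λ → Λ → Bool}

/-- The relation `mKW_f ⊛ (S ◇ gd)` with matrices viewed as strings indexed by
`Fin m × Fin ℓ`. -/
def entryLift (f : (Fin m → Bool) → Bool) (S : (Fin ℓ → Bool) → O → Prop) (gd : Λ → Λ → Bool) :
    (Fin m × Fin ℓ → Λ) × {a // f a = true} → (Fin m × Fin ℓ → Λ) × {b // f b = false} →
      Fin m × O → Prop :=
  fun x y => starLift f S gd (Function.curry x.1, x.2) (Function.curry y.1, y.2)

/-- The columns of the entries in `I` that lie in row `i`. -/
def rowPart (I : Finset (Fin m × Fin ℓ)) (i : Fin m) : Finset (Fin ℓ) :=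
  Finset.univ.filter fun j => (i, j) ∈ I

theorem mem_rowPart {I : Finset (Fin m × Fin ℓ)} {i : Fin m} {j : Fin ℓ} :
    j ∈ rowPart I i ↔ (i, j) ∈ I := by
  simp [rowPart]

theorem rowPart_empty (i : Fin m) : rowPart (∅ : Finset (Fin m × Fin ℓ)) i = ∅ := by
  ext; simp [mem_rowPart]

theorem card_rowPart_le (I : Finset (Fin m × Fin ℓ)) (i : Fin m) : (rowPart I i).card ≤ I.card :=
  Finset.card_le_card_of_injOn (Prod.mk i) (fun _ hj => mem_rowPart.mp hj)
    (Prod.mk_right_injective i).injOn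

theorem rowPart_insert_self (I : Finset (Fin m × Fin ℓ)) (i : Fin m) (j : Fin ℓ) :
    rowPart (insert (i, j) I) i = insert j (rowPart I i) := by
  ext; simp [mem_rowPart]

theorem rowPart_insert_of_ne (I : Finset (Fin m × Fin ℓ)) {i i' : Fin m} (h : i' ≠ i)
    (j : Fin ℓ) : rowPart (insert (i, j) I) i' = rowPart I i' := by
  ext; simp [mem_rowPart, h]

theorem exists_insert_hardRows {I : Finset (Fin m × Fin ℓ)} {z : Fin m × Fin ℓ → Bool}
    (h : ∀ i, IsHardAssignment S (rowPart I i) (Function.curry z i)) {p : Fin m × Fin ℓ}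
    (hp : p ∉ I) :
    ∃ z', (∀ q ∈ I, z' q = z q) ∧
      ∀ i, IsHardAssignment S (rowPart (insert p I) i) (Function.curry z' i) := by
  obtain ⟨i, j⟩ := p
  obtain ⟨v, hv⟩ := (h i).exists_insert fun hj => hp (mem_rowPart.mp hj)
  refine ⟨Function.update z (i, j) v,
    fun q hq => Function.update_of_ne (ne_of_mem_of_not_mem hq hp) .., fun i' => ?_⟩
  rcases eq_or_ne i' i with rfl | hne
  · rw [rowPart_insert_self]
    refine hv.congr fun j' _ => ?_
    simp [Function.curry, Function.update_apply]
  · rw [rowPart_insert_of_ne I hne]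
    refine (h i').congr fun j' _ => ?_
    simp [Function.curry, hne]

theorem isAdversary_hardRows {R : Finset (Fin m)} {𝒲 : Finset (Fin m × Fin ℓ → Λ)}
    {a : (Fin m × Fin ℓ → Λ) → {a // f a = true}} {b : (Fin m × Fin ℓ → Λ) → {b // f b = false}}
    (hR : ∀ i ∈ R, ∀ W ∈ 𝒲, ∀ W' ∈ 𝒲, ¬ mKW f (a W) (b W') i) :
    IsAdversary (fun x y => entryLift f S gd (x, a x) (y, b y)) gd 𝒲 (rowEntries ℓ Rᶜ)
      (Qcomplexity S)
      fun I z => ∀ i, IsHardAssignment S (rowPart I i) (Function.curry z i) where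
  start := ⟨fun _ => false, fun i => rowPart_empty (ℓ := ℓ) i ▸ isHardAssignment_empty S _⟩
  extend _ _ h _ _ hp := exists_insert_hardRows h hp
  refute I z h hI := by
    rintro ⟨i, o⟩
    by_cases hi : i ∈ R
    · exact ⟨z, fun _ _ => rfl, fun x hx y hy _ ho => hR i hi x hx y hy ⟨ho.1, ho.2.1⟩⟩
    obtain ⟨zᵢ, hzᵢ, hS⟩ := (h i).exists_not_rel ((card_rowPart_le I i).trans_lt hI) o
    refine ⟨Function.uncurry (Function.update (Function.curry z) i zᵢ), ?_, ?_⟩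
    · rintro ⟨i', j⟩ hp
      rcases eq_or_ne i' i with rfl | hne
      · simpa using hzᵢ j (mem_rowPart.mpr hp)
      · simp [hne]
    · rintro x - y - hz ⟨-, -, ho⟩
      have hrow : (fun j => gd (x (i, j)) (y (i, j))) = zᵢ := by
        funext j
        simpa using hz (i, j) (mem_rowEntries.mpr (Finset.mem_compl.mpr hi))
      exact hS (hrow ▸ ho)

theorem exists_mul_two_pow_le {k : ℕ} (hk : 0 < k) :
    ∃ j, k * 2 ^ j ≤ 3 ^ j ∧ 2 ^ j ≤ (2 * k) ^ 2 := by
  have lower := (Nat.lt_pow_succ_log_self one_lt_two k).le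
  have upper := Nat.pow_log_le_self 2 hk.ne'
  refine ⟨2 * (Nat.log 2 k + 1), ?_, ?_⟩
  · calc k * 2 ^ (2 * (Nat.log 2 k + 1))
        ≤ 2 ^ (Nat.log 2 k + 1) * 2 ^ (2 * (Nat.log 2 k + 1)) := Nat.mul_le_mul_right _ lower
      _ = 8 ^ (Nat.log 2 k + 1) := by rw [pow_mul, ← mul_pow]; norm_num
      _ ≤ 9 ^ (Nat.log 2 k + 1) := Nat.pow_le_pow_left (by norm_num) _
      _ = 3 ^ (2 * (Nat.log 2 k + 1)) := by rw [pow_mul]; norm_num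
  · rw [mul_comm 2 (_ + 1), pow_mul, pow_succ 2 (Nat.log 2 k), mul_comm _ 2]
    exact Nat.pow_le_pow_left (Nat.mul_le_mul_left 2 upper) 2

theorem LeafSolvable.pow_qcomplexity_le [Fintype Λ] (hf : Monotone f) {b N D : ℝ} {r : ℕ}
    (hP : LiftingParameters (Fin m × Fin ℓ) b N D r gd)
    {A : Set ((Fin m × Fin ℓ → Λ) × {a // f a = true})}
    {B : Set ((Fin m × Fin ℓ → Λ) × {b // f b = false})} {h : ℝ} (hh : 0 < h)
    (hlarge : 2 * (Fintype.card Λ : ℝ) ^ (m * ℓ) ≤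
      (Finset.univ.filter fun W =>
        h ≤ minLeaves (mKW f) (Prod.mk W ⁻¹' A) (Prod.mk W ⁻¹' B) + 1).card * h)
    {k : ℕ} (hk : LeafSolvable (entryLift f S gd) A B k) :
    (b / 8) ^ Qcomplexity S ≤ (2 * k : ℝ) ^ 24 := by
  have hcard : (0 : ℝ) < Fintype.card Λ := by
    rw [hP.card_eq]
    exact pow_pos hP.pos _
  have : Nonempty Λ := Fintype.card_pos_iff.mp (mod_cast hcard)
  obtain ⟨R, 𝒲, a, b', hne, hmem, hR, hW⟩ := exists_nearlyUniform_hardCollection hf hh hlarge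
  obtain ⟨W, hWmem⟩ := hne
  have hkpos : 0 < k := hk.pos ⟨((W, a W), (W, b' W)), hmem W hWmem⟩
  obtain ⟨j, hj, hjk⟩ := exists_mul_two_pow_le hkpos
  have hd := (hk.depthSolvable j hj).comap (fun W => (W, a W)) (fun W => (W, b' W))
  calc (b / 8) ^ Qcomplexity S ≤ 2 ^ (6 * (2 * j)) :=
        pow_le_two_pow_of_depthSolvable hP (isAdversary_hardRows hR) ⟨W, hWmem⟩ hW hd
          (fun W hW => (hmem W hW).1) (fun W hW => (hmem W hW).2)
    _ = ((2 : ℝ) ^ j) ^ 12 := by rw [← pow_mul]; congr 1; ring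
    _ ≤ ((2 * k) ^ 2) ^ 12 := by gcongr; exact_mod_cast hjk
    _ = (2 * k : ℝ) ^ 24 := by rw [← pow_mul]

end Composition

/-! ### From average complexity to a lower bound on the number of leaves -/

section LayerCake

variable {α : Type} [Fintype α] {v : α → ℕ} {M : ℕ}

theorem sum_eq_sum_card_lt (hv : ∀ w, v w ≤ M) :
    ∑ w, v w = ∑ i ∈ Finset.range M, (Finset.univ.filter fun w => i < v w).card := by
  refine .trans (Finset.sum_congr rfl fun w _ => ?_)
    (Finset.sum_card_bipartiteAbove_eq_sum_card_bipartiteBelow fun w i => i < v w)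
  have : (Finset.range M).bipartiteAbove (fun w i => i < v w) w = Finset.range (v w) := by
    ext i
    simpa using fun hi => hi.trans_le (hv w)
  rw [this, Finset.card_range]

theorem sum_range_inv_add_two_le_log (M : ℕ) :
    ∑ i ∈ Finset.range M, ((i : ℝ) + 2)⁻¹ ≤ Real.log (M + 1) := by
  have hle := harmonic_le_one_add_log (M + 1)
  rw [harmonic, Finset.sum_range_succ'] at hle
  push_cast at hle
  simp only [add_assoc, one_add_one_eq_two, inv_one] at hle
  linarith

/-- Markov's inequality is reversed at the cost of a logarithmic factor. -/
theorem exists_two_mul_card_le (hv : ∀ w, v w ≤ M)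
    (hsum : 2 * Fintype.card α * Real.log (M + 1) < ∑ w, (v w : ℝ)) :
    ∃ h : ℝ, 0 < h ∧
      2 * (Fintype.card α : ℝ) ≤ (Finset.univ.filter fun w => h ≤ v w + 1).card * h := by
  by_contra! hcon
  refine hsum.not_ge ?_
  calc ∑ w, (v w : ℝ)
      = ∑ i ∈ Finset.range M, ((Finset.univ.filter fun w => i < v w).card : ℝ) := by
        exact_mod_cast sum_eq_sum_card_lt hv
    _ ≤ ∑ i ∈ Finset.range M, 2 * Fintype.card α * ((i : ℝ) + 2)⁻¹ := by
        refine Finset.sum_le_sum fun i _ => ?_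
        rw [← div_eq_mul_inv, le_div_iff₀ (by positivity)]
        refine le_trans ?_ (hcon (i + 2) (by positivity)).le
        gcongr with w
        intro hi
        have : (i : ℝ) + 1 ≤ v w := mod_cast hi
        linarith
    _ ≤ 2 * Fintype.card α * Real.log (M + 1) := by
        rw [← Finset.mul_sum]
        gcongr
        exact sum_range_inv_add_two_le_log M

end LayerCake

theorem log_four_pow_add_one_lt {m : ℕ} (hm : 0 < m) : Real.log (4 ^ m + 1) < 3 * m := by
  have hpow : (4 : ℝ) ^ m + 1 ≤ 8 ^ m := by
    rw [show (8 : ℝ) = 2 * 4 by norm_num, mul_pow]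
    nlinarith [le_self_pow₀ (one_le_two (α := ℝ)) hm.ne', one_le_pow₀ (n := m)
      (show (1 : ℝ) ≤ 4 by norm_num)]
  calc Real.log (4 ^ m + 1) ≤ Real.log (8 ^ m) := Real.log_le_log (by positivity) hpow
    _ = 3 * m * Real.log 2 := by
        rw [Real.log_pow, show (8 : ℝ) = 2 ^ 3 by norm_num, Real.log_pow]
        push_cast
        ring
    _ < 3 * m := by
        have : (0 : ℝ) < 3 * m := by positivity
        nlinarith [Real.log_two_lt_d9]

section Average

variable {m ℓ : ℕ} {Λ O : Type} [Fintype Λ] {f : (Fin m → Bool) → Bool}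
  {S : (Fin ℓ → Bool) → O → Prop} {gd : Λ → Λ → Bool}
  {A : Set ((Fin m × Fin ℓ → Λ) × {a // f a = true})}
  {B : Set ((Fin m × Fin ℓ → Λ) × {b // f b = false})}

/-- The average over `W` of the monotone formula complexity of the pairs `(a, b)` for which
`((W, a), (W, b))` lies in `A × B`; this is `γ` of the protocol vertex with rectangle `A × B`. -/
noncomputable def averageLeaves (f : (Fin m → Bool) → Bool)
    (A : Set ((Fin m × Fin ℓ → Λ) × {a // f a = true}))
    (B : Set ((Fin m × Fin ℓ → Λ) × {b // f b = false})) : ℝ :=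
  (∑ W, (minLeaves (mKW f) (Prod.mk W ⁻¹' A) (Prod.mk W ⁻¹' B) : ℝ)) /
    Fintype.card (Fin m × Fin ℓ → Λ)

theorem isComplexityMeasure_averageLeaves (hf : Monotone f) :
    IsComplexityMeasure (entryLift f S gd) (averageLeaves f) :=
  (isComplexityMeasure_minLeaves (exists_mKW hf)).average (π := Prod.fst)
    fun _ _ _ _ h => ⟨h.1, h.2.1⟩

theorem averageLeaves_univ [Nonempty Λ] (f : (Fin m → Bool) → Bool) :
    averageLeaves (ℓ := ℓ) (Λ := Λ) f Set.univ Set.univ =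
      minLeaves (mKW f) Set.univ Set.univ := by
  simp only [averageLeaves, Set.preimage_univ, Finset.sum_const, nsmul_eq_mul, Finset.card_univ]
  exact mul_div_cancel_left₀ _ (Nat.cast_ne_zero.mpr Fintype.card_ne_zero)

theorem minLeaves_mKW_le_four_pow (hf : Monotone f) (A : Set {a // f a = true})
    (B : Set {b // f b = false}) : minLeaves (mKW f) A B ≤ 4 ^ m := by
  have hcard (p : (Fin m → Bool) → Prop) [DecidablePred p] : Fintype.card {a // p a} ≤ 2 ^ m :=
    (Fintype.card_subtype_le p).trans_eq (by simp)
  calc minLeaves (mKW f) A B ≤ 2 ^ m * 2 ^ m :=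
        (LeafSolvable.of_fintype (exists_mKW hf) A B).minLeaves_le.trans
          (Nat.mul_le_mul (hcard (f · = true)) (hcard (f · = false)))
    _ = 4 ^ m := by rw [← mul_pow]; norm_num

variable {b N D : ℝ} {r k : ℕ}

theorem LeafSolvable.pow_qcomplexity_le_of_averageLeaves (hm : 0 < m) (hf : Monotone f)
    (hP : LiftingParameters (Fin m × Fin ℓ) b N D r gd) (hA : 6 * (m : ℝ) ≤ averageLeaves f A B)
    (hk : LeafSolvable (entryLift f S gd) A B k) :
    (b / 8) ^ Qcomplexity S ≤ (2 * k : ℝ) ^ 24 := by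
  have hcard : (0 : ℝ) < Fintype.card (Fin m × Fin ℓ → Λ) := by
    rw [Fintype.card_fun, Nat.cast_pow, hP.card_eq]
    exact pow_pos (pow_pos hP.pos _) _
  rw [averageLeaves, le_div_iff₀ hcard] at hA
  obtain ⟨h, hh, hlarge⟩ := exists_two_mul_card_le (M := 4 ^ m)
    (fun W => minLeaves_mKW_le_four_pow hf (Prod.mk W ⁻¹' A) (Prod.mk W ⁻¹' B)) <| by
      push_cast
      nlinarith [log_four_pow_add_one_lt hm]
  exact hk.pow_qcomplexity_le hf hP hh (by simpa using hlarge)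

theorem LeafSolvable.pow_qcomplexity_le_of_univ (hf : Monotone f)
    (hP : LiftingParameters (Fin m × Fin ℓ) b N D r gd)
    (hL : 0 < minLeaves (mKW f) Set.univ Set.univ)
    (hk : LeafSolvable (entryLift f S gd) Set.univ Set.univ k) :
    (b / 8) ^ Qcomplexity S ≤ (2 * k : ℝ) ^ 24 := by
  refine hk.pow_qcomplexity_le hf hP two_pos ?_
  have hL' : (2 : ℝ) ≤ minLeaves (mKW f) Set.univ Set.univ + 1 := mod_cast Nat.succ_le_succ hL
  simp only [Set.preimage_univ, hL', Finset.filter_true, Finset.card_univ, Fintype.card_fun,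
    Fintype.card_prod, Fintype.card_fin, Nat.cast_pow]
  exact (mul_comm _ _).le

theorem LeafSolvable.mul_minLeaves_le (hm : 0 < m) (hf : Monotone f)
    (hP : LiftingParameters (Fin m × Fin ℓ) b N D r gd)
    (hL : 0 < minLeaves (mKW f) Set.univ Set.univ) {K : ℝ} (hK : 0 < K)
    (hKb : (2 * K) ^ 24 ≤ (b / 8) ^ Qcomplexity S)
    (hk : LeafSolvable (entryLift f S gd) Set.univ Set.univ k) :
    K * minLeaves (mKW f) Set.univ Set.univ ≤ 36 * m * k := by
  have le_of_pow {k : ℕ} (h : (b / 8) ^ Qcomplexity S ≤ (2 * k : ℝ) ^ 24) : K ≤ k := by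
    linarith [le_of_pow_le_pow_left₀ (by norm_num) (by positivity) (hKb.trans h)]
  have hm' : (1 : ℝ) ≤ m := mod_cast hm
  rcases le_or_gt (6 * (m : ℝ)) (minLeaves (mKW f) Set.univ Set.univ) with hbig | hsmall
  · have : Nonempty Λ := Fintype.card_pos_iff.mp <| by
      have := hP.card_eq ▸ pow_pos hP.pos (r + 3)
      exact_mod_cast this
    have huniv := averageLeaves_univ (ℓ := ℓ) (Λ := Λ) f
    have hcat := (isComplexityMeasure_averageLeaves (S := S) (gd := gd) hf).caterpillar
      (by linarith) (Nat.ceil_pos.mpr hK)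
      (fun h hA => Nat.ceil_le.mpr (le_of_pow (h.pow_qcomplexity_le_of_averageLeaves hm hf hP hA)))
      hk (hbig.trans_eq huniv.symm)
    rw [huniv] at hcat
    calc K * minLeaves (mKW f) Set.univ Set.univ
        ≤ ⌈K⌉₊ * (minLeaves (mKW f) Set.univ Set.univ + 2 * (6 * m)) := by
          gcongr
          · exact Nat.le_ceil K
          · linarith
      _ ≤ 6 * (6 * m) * k := hcat
      _ = 36 * m * k := by ring
  · calc K * minLeaves (mKW f) Set.univ Set.univ ≤ k * (6 * m) := by
          gcongr
          exact le_of_pow (hk.pow_qcomplexity_le_of_univ hf hP hL)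
      _ ≤ 36 * m * k := by nlinarith [k.cast_nonneg (α := ℝ)]

end Average

/-! ### Gadgets of small discrepancy -/

section Discrepancy

variable {t : ℕ} {gd : (Fin t → Bool) → (Fin t → Bool) → Bool}

theorem sum_bitSign_eq {α : Type} (s : Finset α) (v : α → Bool) :
    ∑ a ∈ s, bitSign (v a) =
      ((s.filter fun a => v a = false).card : ℝ) - (s.filter fun a => v a = true).card := by
  rw [Finset.card_filter, Finset.card_filter]
  push_cast
  rw [← Finset.sum_sub_distrib]
  exact Finset.sum_congr rfl fun a _ => by cases v a <;> simp [bitSign]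

theorem abs_sum_bitSign_le {α : Type} (s : Finset α) (v : α → Bool) :
    |∑ a ∈ s, bitSign (v a)| ≤ s.card := by
  refine (Finset.abs_sum_le_sum_abs _ _).trans_eq ?_
  rw [Finset.sum_congr rfl fun a _ => show |bitSign (v a)| = 1 by
    rcases bitSign_eq_or (v a) with h | h <;> simp [h]]
  simp

theorem cutBound_disc (gd : (Fin t → Bool) → (Fin t → Bool) → Bool) :
    CutBound (fun u v => bitSign (gd u v)) (disc gd * (2 ^ t * 2 ^ t)) := by
  intro P Q
  rw [← div_le_iff₀ (by positivity)]
  refine le_csSup ⟨1, ?_⟩ ⟨P, Q, by rw [← Finset.sum_product', sum_bitSign_eq]⟩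
  rintro _ ⟨A, B, rfl⟩
  rw [div_le_one (by positivity), ← sum_bitSign_eq _ fun uv : _ × _ => gd uv.1 uv.2]
  have hcard (A : Finset (Fin t → Bool)) : A.card ≤ 2 ^ t :=
    A.card_le_univ.trans_eq (by simp)
  calc _ ≤ ((A ×ˢ B).card : ℝ) := abs_sum_bitSign_le _ _
    _ ≤ 2 ^ t * 2 ^ t := by
      rw [Finset.card_product]
      exact_mod_cast Nat.mul_le_mul (hcard A) (hcard B)

theorem exists_eq_of_disc_lt_one (h : disc gd < 1) (v : Bool) : ∃ x y, gd x y = v := by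
  by_contra! hcon
  have hconst (x y) : gd x y = !v := Bool.eq_not_of_ne (hcon x y)
  have hcut := cutBound_disc gd Finset.univ Finset.univ
  have hsign : |bitSign !v| = 1 := by cases v <;> simp [bitSign]
  simp only [hconst, Finset.sum_const, Finset.card_univ, Fintype.card_fun, Fintype.card_bool,
    Fintype.card_fin, nsmul_eq_mul, abs_mul, hsign, Nat.abs_cast] at hcut
  push_cast at hcut
  have : (0 : ℝ) < 2 ^ t * 2 ^ t := by positivity
  nlinarith

theorem liftingParameters_of_disc {ι : Type} [Fintype ι] [Nonempty ι] {b : ℝ} {r : ℕ}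
    (hcard : (2 : ℝ) ^ t = b ^ (r + 3)) (hdisc : disc gd * b ^ 16 ≤ 1)
    (hb : (8 * Fintype.card ι : ℝ) ^ (r + 4) ≤ b) :
    LiftingParameters ι b (4 * Fintype.card ι) (2 * (b ^ r) ^ 2 / b ^ 2) r gd := by
  have hι : (1 : ℝ) ≤ Fintype.card ι := mod_cast Fintype.card_pos (α := ι)
  have h64 : 64 ≤ b := calc
    (64 : ℝ) = 8 ^ 2 := by norm_num
    _ ≤ 8 ^ (r + 4) := pow_le_pow_right₀ (by norm_num) (by omega)
    _ ≤ (8 * Fintype.card ι : ℝ) ^ (r + 4) := by gcongr; linarith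
    _ ≤ b := hb
  have : 0 < b := by linarith
  have card_eq : (Fintype.card (Fin t → Bool) : ℝ) = b ^ (r + 3) := by simp [← hcard]
  have gram {M : (Fin t → Bool) → (Fin t → Bool) → ℝ}
      (hM : CutBound M (disc gd * (2 ^ t * 2 ^ t))) (hsign : ∀ u v, M u v = 1 ∨ M u v = -1) :
      gramSq M ≤ (2 * (b ^ r) ^ 2 / b ^ 2) ^ 2 := by
    refine (hM.gramSq_le hsign).trans ?_
    rw [card_eq, hcard, div_pow, le_div_iff₀ (by positivity)]
    calc _ = 4 * (b ^ r) ^ 4 * (disc gd * b ^ 16) := by ring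
      _ ≤ 4 * (b ^ r) ^ 4 * 1 := by gcongr
      _ = _ := by ring
  exact
    { four_mul_card_le := le_rfl
      four_le := by linarith
      two_mul_pow_le := by
        calc 2 * (4 * Fintype.card ι : ℝ) ^ (r + 4)
            ≤ 2 ^ (r + 4) * (4 * Fintype.card ι : ℝ) ^ (r + 4) := by
              gcongr
              exact le_self_pow₀ (by norm_num) (by omega)
          _ = (8 * Fintype.card ι : ℝ) ^ (r + 4) := by rw [← mul_pow]; ring
          _ ≤ b := hb
      sixtyFour_le := h64
      norm_nonneg := by positivity
      norm_mul_le := (div_mul_cancel₀ _ (by positivity)).le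
      gramSq_le := gram (cutBound_disc gd) fun _ _ => bitSign_eq_or _
      gramSq_swap_le := gram (cutBound_disc gd).swap fun _ _ => bitSign_eq_or _
      card_eq := card_eq }

end Discrepancy

/-! ### Reductions to the composition -/

section Reductions

variable {ι : Type} {m ℓ k : ℕ} {Λ O : Type} {f : (Fin m → Bool) → Bool} {g : (ι → Bool) → Bool}
  {S : (Fin ℓ → Bool) → O → Prop} {gd : Λ → Λ → Bool}

theorem apply_const_eq (hg : Monotone g) (h₁ : ∃ x, g x = true) (h₀ : ∃ x, g x = false)
    (v : Bool) : g (fun _ => v) = v := by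
  cases v
  · obtain ⟨x, hx⟩ := h₀
    have hle : g (fun _ => false) ≤ g x := hg fun _ => Bool.false_le _
    exact Bool.eq_false_of_le_false (hx ▸ hle)
  · obtain ⟨x, hx⟩ := h₁
    have hle : g x ≤ g (fun _ => true) := hg fun _ => Bool.le_true _
    exact Bool.eq_true_of_true_le (hx ▸ hle)

theorem exists_diamondKW (hf : Monotone f) (hg : Monotone g)
    (X : {X : Fin m → ι → Bool // f (fun i => g (X i)) = true})
    (Y : {Y : Fin m → ι → Bool // f (fun i => g (Y i)) = false}) :
    ∃ e, diamondKW f g X Y e := by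
  obtain ⟨i, hXi, hYi⟩ := exists_mKW hf ⟨_, X.2⟩ ⟨_, Y.2⟩
  obtain ⟨j, hj⟩ := exists_mKW hg ⟨X.1 i, hXi⟩ ⟨Y.1 i, hYi⟩
  exact ⟨(i, j), hj⟩

/-- The rows are the constant strings `a i`. -/
def constRows (hg : ∀ v, g (fun _ => v) = v) {v : Bool} (a : {a : Fin m → Bool // f a = v}) :
    {X : Fin m → ι → Bool // f (fun i => g (X i)) = v} :=
  ⟨fun i _ => a.1 i, by simp only [hg]; exact a.2⟩

theorem LeafSolvable.mKW_of_diamondKW (hg : ∀ v, g (fun _ => v) = v)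
    (h : LeafSolvable (diamondKW f g) Set.univ Set.univ k) :
    LeafSolvable (mKW f) Set.univ Set.univ k :=
  h.reduce (constRows hg) (constRows hg) Prod.fst fun _ _ _ h => h

/-- The rows `i` with `a i = v` are encoded by `R`, the others are constant. -/
def encodeRows (hg : ∀ v, g (fun _ => v) = v) {v : Bool}
    (R : (Fin ℓ → Λ) → {x : ι → Bool // g x = v})
    (p : (Fin m × Fin ℓ → Λ) × {a : Fin m → Bool // f a = v}) :
    {X : Fin m → ι → Bool // f (fun i => g (X i)) = v} :=
  ⟨fun i => if p.2.1 i = v then (R (Function.curry p.1 i)).1 else fun _ => !v, by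
    refine (congrArg f (funext fun i => ?_)).trans p.2.2
    beta_reduce
    split_ifs with h
    · rw [h, (R _).2]
    · rw [hg, Bool.eq_not_of_ne h]⟩

theorem LeafSolvable.entryLift_of_diamondKW (hg : ∀ v, g (fun _ => v) = v)
    (hred : Reduces (liftSP S gd) (mKW g))
    (h : LeafSolvable (diamondKW f g) Set.univ Set.univ k) :
    LeafSolvable (entryLift f S gd) Set.univ Set.univ k := by
  obtain ⟨RA, RB, Rout, hR⟩ := hred
  refine h.reduce (encodeRows hg RA) (encodeRows hg RB) (Prod.map id Rout) ?_
  rintro x y ⟨i, j⟩ ⟨hx, hy⟩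
  simp only [encodeRows] at hx hy
  split_ifs at hx hy with hxi hyi
  · exact ⟨hxi, hyi, hR _ _ j ⟨hx, hy⟩⟩
  · simp at hy
  · simp at hx
  · simp at hx

theorem Lsize_mKW_eq [Finite ι] (hg : Monotone g) (h₁ : ∃ x, g x = true) (h₀ : ∃ x, g x = false) :
    Lsize (mKW g) = minLeaves (mKW g) Set.univ Set.univ :=
  have : Nonempty {a // g a = true} := nonempty_subtype.mpr h₁
  have : Nonempty {b // g b = false} := nonempty_subtype.mpr h₀
  Lsize_eq_minLeaves (exists_mKW hg)

theorem Lsize_diamondKW_eq [Finite ι] (hf : Monotone f) (hf₁ : ∃ x, f x = true)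
    (hf₀ : ∃ x, f x = false) (hg : Monotone g) (hgc : ∀ v, g (fun _ => v) = v) :
    Lsize (diamondKW f g) = minLeaves (diamondKW f g) Set.univ Set.univ :=
  have : Nonempty {X : Fin m → ι → Bool // f (fun i => g (X i)) = true} :=
    (nonempty_subtype.mpr hf₁).map (constRows hgc)
  have : Nonempty {Y : Fin m → ι → Bool // f (fun i => g (Y i)) = false} :=
    (nonempty_subtype.mpr hf₀).map (constRows hgc)
  Lsize_eq_minLeaves (exists_diamondKW hf hg)

theorem minLeaves_mKW_pos [Finite ι] (hg : Monotone g) (h₁ : ∃ x, g x = true)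
    (h₀ : ∃ x, g x = false) : 0 < minLeaves (mKW g) Set.univ Set.univ := by
  obtain ⟨⟨x, hx⟩, ⟨y, hy⟩⟩ := h₁, h₀
  exact (leafSolvable_minLeaves (exists_mKW hg) _ _).pos ⟨(⟨x, hx⟩, ⟨y, hy⟩), trivial, trivial⟩

theorem minLeaves_mKW_le_one [Subsingleton ι] (hg : Monotone g) :
    minLeaves (mKW g) Set.univ Set.univ ≤ 1 := by
  refine LeafSolvable.minLeaves_le (.mono ?_ one_pos)
  rcases (Set.univ ×ˢ Set.univ : Set ({a // g a = true} × {b // g b = false})).eq_empty_or_nonempty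
    with h | ⟨⟨x, y⟩, -⟩
  · exact .inl h
  · obtain ⟨i, -⟩ := exists_mKW hg x y
    refine .inr ⟨i, fun p _ => ?_⟩
    obtain ⟨j, hj⟩ := exists_mKW hg p.1 p.2
    rwa [Subsingleton.elim i j]

theorem LeafSolvable.two_le_of_entryLift (hf₁ : ∃ x, f x = true)
    (hf₀ : ∃ x, f x = false) (hQ : 0 < Qcomplexity S)
    (hgd : ∀ v, ∃ x y, gd x y = v) (h : LeafSolvable (entryLift f S gd) Set.univ Set.univ k) :
    2 ≤ k := by
  by_contra! hk
  obtain ⟨⟨a, ha⟩, ⟨b, hb⟩⟩ := hf₁, hf₀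
  choose x y hxy using hgd
  rcases h.monochromatic (by omega) with hempty | ⟨o, ho⟩
  · rw [Set.univ_prod_univ, Set.univ_eq_empty_iff] at hempty
    exact hempty.false ((fun _ => x true, ⟨a, ha⟩), (fun _ => y true, ⟨b, hb⟩))
  · obtain ⟨z, -, hz⟩ := (isHardAssignment_empty S fun _ => false).exists_not_rel (by simpa) o.2
    have hrel := (ho ((fun p => x (z p.2), ⟨a, ha⟩), (fun p => y (z p.2), ⟨b, hb⟩))
      ⟨trivial, trivial⟩).2.2
    exact hz (by simpa only [liftSP, Function.curry, hxy] using hrel)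

end Reductions

/-! ### Choice of parameters -/

theorem two_rpow_pow (x : ℝ) (k : ℕ) : ((2 : ℝ) ^ x) ^ k = 2 ^ (x * k) :=
  (Real.rpow_mul_natCast zero_le_two x k).symm

/-- The constant `c` of the composition theorem for gadgets on `t` bits, where `2 ^ (t / (r + 3))`
is the density scale used in the simulation. -/
def liftingConstant (r : ℕ) : ℕ := 32 * (r + 3) * (r + 27)

section Parameters

variable {r t : ℕ}

theorem liftingConstant_pos (r : ℕ) : (0 : ℝ) < liftingConstant r := by
  unfold liftingConstant
  positivity

theorem two_pow_eq_scale_pow (r t : ℕ) :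
    (2 : ℝ) ^ t = (((2 : ℝ) ^ ((t : ℝ) / (4 * (r + 3)))) ^ 4) ^ (r + 3) := by
  rw [← pow_mul, two_rpow_pow, ← Real.rpow_natCast 2 t]
  congr 1
  push_cast
  field_simp

theorem mul_scale_pow_le_one {η δ : ℝ} (hr : 16 ≤ η * (r + 3))
    (hδ : δ ≤ 2 ^ (-(η * t))) :
    δ * (((2 : ℝ) ^ ((t : ℝ) / (4 * (r + 3)))) ^ 4) ^ 16 ≤ 1 := by
  have hexp : (t : ℝ) / (4 * (r + 3)) * ((4 * 16 : ℕ) : ℝ) ≤ η * t := by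
    rw [div_mul_eq_mul_div, div_le_iff₀ (by positivity)]
    push_cast
    nlinarith [t.cast_nonneg (α := ℝ)]
  rw [← pow_mul, two_rpow_pow]
  calc δ * (2 : ℝ) ^ ((t : ℝ) / (4 * (r + 3)) * ((4 * 16 : ℕ) : ℝ))
      ≤ 2 ^ (-(η * t)) * 2 ^ (η * t) :=
        mul_le_mul hδ (Real.rpow_le_rpow_of_exponent_le one_le_two hexp) (by positivity)
          (by positivity)
    _ = 1 := by rw [← Real.rpow_add two_pos, neg_add_cancel, Real.rpow_zero]

theorem seventyTwo_mul_pow_le_scale {n : ℝ} (hn : 0 < n) (hc : (liftingConstant r : ℝ) ≤ t)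
    (hcn : liftingConstant r * Real.logb 2 n ≤ t) :
    (72 * n) ^ (r + 27) ≤ (2 : ℝ) ^ ((t : ℝ) / (4 * (r + 3))) := by
  have hle : 72 * n ≤ 2 ^ (7 + Real.logb 2 n) := by
    rw [Real.rpow_add two_pos, Real.rpow_logb two_pos (by norm_num) hn]
    norm_num
    linarith
  refine (pow_le_pow_left₀ (by positivity) hle _).trans ?_
  rw [two_rpow_pow]
  refine Real.rpow_le_rpow_of_exponent_le one_le_two ?_
  rw [le_div_iff₀ (by positivity)]
  simp only [liftingConstant, Nat.cast_mul, Nat.cast_add, Nat.cast_ofNat] at hc hcn ⊢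
  linarith

theorem gain_pow_le_scale_pow (r t Q : ℕ) :
    ((2 : ℝ) ^ (1 / (liftingConstant r : ℝ) * Q * t)) ^ 24 ≤
      (2 ^ ((t : ℝ) / (4 * (r + 3)))) ^ Q := by
  have hc : 24 / (liftingConstant r : ℝ) ≤ 1 / (4 * (r + 3)) := by
    rw [div_le_div_iff₀ (liftingConstant_pos r) (by positivity)]
    simp only [liftingConstant, Nat.cast_mul, Nat.cast_add, Nat.cast_ofNat]
    nlinarith [r.cast_nonneg (α := ℝ)]
  rw [two_rpow_pow, two_rpow_pow]
  refine Real.rpow_le_rpow_of_exponent_le one_le_two ?_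
  calc 1 / (liftingConstant r : ℝ) * Q * t * (24 : ℕ) = 24 / liftingConstant r * (Q * t) := by
        push_cast
        ring
    _ ≤ 1 / (4 * (r + 3)) * (Q * t) := mul_le_mul_of_nonneg_right hc (by positivity)
    _ = t / (4 * (r + 3)) * Q := by ring

end Parameters

section Conclusion

variable {m n ℓ t r k : ℕ} {O : Type} {f : (Fin m → Bool) → Bool} {S : (Fin ℓ → Bool) → O → Prop}
  {gd : (Fin t → Bool) → (Fin t → Bool) → Bool} {η : ℝ}

theorem LeafSolvable.gain_mul_minLeaves_le_of_scale {u E : ℝ} (hm : 0 < m) (hℓ : 0 < ℓ)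
    (hf : Monotone f) (hL : 0 < minLeaves (mKW f) Set.univ Set.univ) (hQ : Qcomplexity S ≠ 0)
    (hcard : (2 : ℝ) ^ t = (u ^ 4) ^ (r + 3)) (hdisc : disc gd * (u ^ 4) ^ 16 ≤ 1)
    (hu : (72 * (m * ℓ : ℝ)) ^ (r + 27) ≤ u) (hE : 0 < E) (hEu : E ^ 24 ≤ u ^ Qcomplexity S)
    (hk : LeafSolvable (entryLift f S gd) Set.univ Set.univ k) :
    E * minLeaves (mKW f) Set.univ Set.univ ≤ k := by
  have : NeZero m := ⟨hm.ne'⟩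
  have : NeZero ℓ := ⟨hℓ.ne'⟩
  have hm' : (1 : ℝ) ≤ m := mod_cast hm
  have hℓ' : (1 : ℝ) ≤ ℓ := mod_cast hℓ
  have hmℓ : (m : ℝ) ≤ m * ℓ := le_mul_of_one_le_right (by positivity) hℓ'
  have pow_le {j : ℕ} (hj : j ≤ r + 27) : (72 * (m * ℓ : ℝ)) ^ j ≤ u :=
    (pow_le_pow_right₀ (by linarith) hj).trans hu
  have hu72 : 72 ≤ u := by linarith [pow_le (show 1 ≤ r + 27 by omega)]
  have hP : LiftingParameters (Fin m × Fin ℓ) (u ^ 4) _ _ r gd :=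
    liftingParameters_of_disc hcard hdisc <| calc
      (8 * Fintype.card (Fin m × Fin ℓ) : ℝ) ^ (r + 4) ≤ (72 * (m * ℓ : ℝ)) ^ (r + 4) := by
        rw [Fintype.card_prod, Fintype.card_fin, Fintype.card_fin, Nat.cast_mul]
        gcongr
        norm_num
      _ ≤ u := pow_le (by omega)
      _ ≤ u ^ 4 := le_self_pow₀ (by linarith) (by norm_num)
  have hbound : (2 * (36 * m * E)) ^ 24 ≤ (u ^ 4 / 8) ^ Qcomplexity S := calc
    (2 * (36 * m * E)) ^ 24 = (72 * m) ^ 24 * E ^ 24 := by ring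
    _ ≤ u ^ Qcomplexity S * u ^ Qcomplexity S := by
        gcongr
        calc (72 * m : ℝ) ^ 24 ≤ (72 * (m * ℓ : ℝ)) ^ 24 := by gcongr
          _ ≤ u := pow_le (by omega)
          _ ≤ u ^ Qcomplexity S := le_self_pow₀ (by linarith) hQ
    _ = (u ^ 2) ^ Qcomplexity S := by ring
    _ ≤ (u ^ 4 / 8) ^ Qcomplexity S := by
        gcongr
        nlinarith [mul_le_mul hu72 hu72 (by norm_num) (by linarith), sq_nonneg u]
  refine le_of_mul_le_mul_left ?_ (show (0 : ℝ) < 36 * m by positivity)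
  linarith [hk.mul_minLeaves_le hm hf hP hL (by positivity) hbound]

theorem LeafSolvable.gain_mul_minLeaves_le_of_le (hr : 16 ≤ η * (r + 3)) (hm : 0 < m) (hℓ : 0 < ℓ)
    (hf : Monotone f) (hL : 0 < minLeaves (mKW f) Set.univ Set.univ) (hQ : Qcomplexity S ≠ 0)
    (hc : (liftingConstant r : ℝ) ≤ t)
    (ht : liftingConstant r * Real.logb 2 ((m : ℝ) * ℓ) ≤ t)
    (hd : disc gd ≤ 2 ^ (-(η * t)))
    (hk : LeafSolvable (entryLift f S gd) Set.univ Set.univ k) :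
    2 ^ (1 / (liftingConstant r : ℝ) * Qcomplexity S * t) * minLeaves (mKW f) Set.univ Set.univ ≤
      (k : ℝ) :=
  hk.gain_mul_minLeaves_le_of_scale hm hℓ hf hL hQ (two_pow_eq_scale_pow r t)
    (mul_scale_pow_le_one hr hd) (seventyTwo_mul_pow_le_scale (by positivity) hc ht)
    (by positivity) (gain_pow_le_scale_pow r t _)

theorem LeafSolvable.gain_mul_minLeaves_le_of_lt (hη : 0 < η) (hm : m = 1) (hℓ : ℓ = 1)
    (ht : t ≠ 0) (hf : Monotone f) (hf₁ : ∃ x, f x = true) (hf₀ : ∃ x, f x = false)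
    (hS : ∀ z, ∃ o, S z o) (hQ : Qcomplexity S ≠ 0) (hc : (t : ℝ) < liftingConstant r)
    (hd : disc gd ≤ 2 ^ (-(η * t)))
    (hk : LeafSolvable (entryLift f S gd) Set.univ Set.univ k) :
    2 ^ (1 / (liftingConstant r : ℝ) * Qcomplexity S * t) * minLeaves (mKW f) Set.univ Set.univ ≤
      (k : ℝ) := by
  subst hm hℓ
  have hdisc : disc gd < 1 :=
    hd.trans_lt (Real.rpow_lt_one_of_one_lt_of_neg one_lt_two (neg_lt_zero.mpr (by positivity)))
  have hQ₁ : (Qcomplexity S : ℝ) ≤ 1 := mod_cast qcomplexity_le_card hS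
  have hL₁ : (minLeaves (mKW f) Set.univ Set.univ : ℝ) ≤ 1 := mod_cast minLeaves_mKW_le_one hf
  calc 2 ^ (1 / (liftingConstant r : ℝ) * Qcomplexity S * t) *
        (minLeaves (mKW f) Set.univ Set.univ : ℝ)
      ≤ 2 ^ (1 / (liftingConstant r : ℝ) * 1 * liftingConstant r) * 1 := by gcongr; norm_num
    _ = (2 : ℕ) := by
        have := (liftingConstant_pos r).ne'
        rw [mul_one (1 / _), one_div_mul_cancel this, Real.rpow_one, mul_one, Nat.cast_ofNat]
    _ ≤ k := mod_cast hk.two_le_of_entryLift hf₁ hf₀ (Nat.pos_of_ne_zero hQ)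
        (exists_eq_of_disc_lt_one hdisc)

theorem eq_one_of_mul_logb_lt {c : ℝ} {n : ℕ} (hn : 0 < n) (hc : 0 ≤ c)
    (h : c * Real.logb 2 n < c) : n = 1 := by
  by_contra hne
  have hlog : 1 ≤ Real.logb 2 n := by
    rw [Real.le_logb_iff_rpow_le one_lt_two (mod_cast hn), Real.rpow_one]
    exact_mod_cast show 2 ≤ n by omega
  nlinarith

theorem gain_mul_minLeaves_mKW_le {g : (Fin n → Bool) → Bool} (hη : 0 < η)
    (hr : 16 ≤ η * (r + 3)) (hf : Monotone f) (hf₁ : ∃ x, f x = true) (hf₀ : ∃ x, f x = false)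
    (hg : Monotone g) (hgc : ∀ v, g (fun _ => v) = v) (hS : ∀ z, ∃ o, S z o)
    (ht : liftingConstant r * Real.logb 2 ((m : ℝ) * ℓ) ≤ t)
    (hd : disc gd ≤ 2 ^ (-(η * t))) (hred : Reduces (liftSP S gd) (mKW g)) :
    2 ^ (1 / (liftingConstant r : ℝ) * Qcomplexity S * t) * minLeaves (mKW f) Set.univ Set.univ ≤
      (minLeaves (diamondKW f g) Set.univ Set.univ : ℝ) := by
  have hk := leafSolvable_minLeaves (exists_diamondKW hf hg) Set.univ Set.univ
  have hk' := hk.entryLift_of_diamondKW hgc hred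
  rcases eq_or_ne (Qcomplexity S) 0 with hQ | hQ
  · simpa [hQ] using (hk.mKW_of_diamondKW hgc).minLeaves_le
  rcases eq_or_ne t 0 with rfl | ht₀
  · simpa using (hk.mKW_of_diamondKW hgc).minLeaves_le
  have hm : 0 < m := by
    obtain ⟨⟨x, hx⟩, ⟨y, hy⟩⟩ := hf₁, hf₀
    exact (exists_mKW hf ⟨x, hx⟩ ⟨y, hy⟩).choose.pos
  have hℓ : 0 < ℓ := (Nat.pos_of_ne_zero hQ).trans_le <| by simpa using qcomplexity_le_card hS
  rcases le_or_gt (liftingConstant r : ℝ) t with hc | hc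
  · exact hk'.gain_mul_minLeaves_le_of_le hr hm hℓ hf (minLeaves_mKW_pos hf hf₁ hf₀) hQ hc ht hd
  · have hmℓ : m * ℓ = 1 := eq_one_of_mul_logb_lt (Nat.mul_pos hm hℓ) (liftingConstant_pos r).le
      (by push_cast; exact ht.trans_lt hc)
    exact hk'.gain_mul_minLeaves_le_of_lt hη (Nat.eq_one_of_mul_eq_one_right hmℓ)
      (Nat.eq_one_of_mul_eq_one_left hmℓ) ht₀ hf hf₁ hf₀ hS hQ hc hd

end Conclusion

end MonotoneComposition

open MonotoneComposition

/-- Monotone composition theorem.  For every `η > 0` there exist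
`c ∈ ℕ` and `κ > 0` such that: for all non-constant monotone `f`, `g`, if there is a
search problem `S` and a gadget `gd` with `t ≥ c·log₂(m·ℓ)` and `disc(gd) ≤ 2^{-η·t}`
such that `S ◇ gd` reduces to `mKW_g`, then
`log₂ L(mKW_f ◇ mKW_g) ≥ log₂ L(mKW_f) + κ·Q(S)·t`. -/
theorem monotone_composition_theorem (η : ℝ) (hη : 0 < η) :
    ∃ (c : ℕ) (κ : ℝ), 0 < κ ∧
      ∀ (m n ℓ t : ℕ) (O : Type)
        (f : (Fin m → Bool) → Bool) (g : (Fin n → Bool) → Bool)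
        (S : (Fin ℓ → Bool) → O → Prop)
        (gd : (Fin t → Bool) → (Fin t → Bool) → Bool),
        Monotone f → (∃ x, f x = true) → (∃ x, f x = false) →
        Monotone g → (∃ x, g x = true) → (∃ x, g x = false) →
        (∀ z, ∃ o, S z o) →
        (c : ℝ) * Real.logb 2 ((m : ℝ) * (ℓ : ℝ)) ≤ (t : ℝ) →
        disc gd ≤ (2 : ℝ) ^ (-(η * (t : ℝ))) →
        Reduces (liftSP S gd) (mKW g) →
        Real.logb 2 ((Lsize (mKW f) : ℝ)) + κ * (Qcomplexity S : ℝ) * (t : ℝ) ≤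
          Real.logb 2 ((Lsize (diamondKW f g) : ℝ)) := by
  obtain ⟨r, hr⟩ := exists_nat_ge (16 / η)
  have hr' : 16 ≤ η * (r + 3) := by
    rw [div_le_iff₀ hη] at hr
    linarith
  refine ⟨liftingConstant r, 1 / liftingConstant r, one_div_pos.mpr (liftingConstant_pos r), ?_⟩
  intro m n ℓ t O f g S gd hf hf₁ hf₀ hg hg₁ hg₀ hS ht hd hred
  have hgc := apply_const_eq hg hg₁ hg₀
  have hL : (0 : ℝ) < minLeaves (mKW f) Set.univ Set.univ :=
    mod_cast minLeaves_mKW_pos hf hf₁ hf₀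
  rw [Lsize_mKW_eq hf hf₁ hf₀, Lsize_diamondKW_eq hf hf₁ hf₀ hg hgc, add_comm,
    ← Real.logb_rpow (x := 1 / (liftingConstant r : ℝ) * Qcomplexity S * t) two_pos (by norm_num),
    ← Real.logb_mul (by positivity) hL.ne']
  exact Real.logb_le_logb_of_le one_lt_two (by positivity)
    (gain_mul_minLeaves_mKW_le hη hr' hf hf₁ hf₀ hg hgc hS ht hd hred)
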